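/- Let (K_{i(e)}, w_e, p_e)_{e∈E} be an irreducible contractive Markov system with average contracting rate a ∈ (0,1) on a metric space in which every set of finite diameter is relatively compact, with K_1,…,K_N nonempty open sets, such that each p_e|_{K_{i(e)}} is Dini-continuous and bounded below by some δ > 0 (E finite, i : E → V surjective). Then, with μ its unique invariant Borel probability measure and M the associated generalized Markov measure: (i) M is the unique equilibrium state for the energy function u; (ii) P(u) = 0; (iii) F(M) = μ; and (iv) h_M(S) = −∑_{e∈E} ∫_{K_{i(e)}} p_e log p_e dμ. -/

import Mathlib

open MeasureTheory Filter Topology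
open scoped ENNReal

/-- A contractive Markov system (CMS) on a metric space `K`, with vertex set `Fin N`
and (finite) edge set `E`. -/
structure CMS (K : Type*) [MetricSpace K] [MeasurableSpace K]
    (N : ℕ) (E : Type*) [Fintype E] where
  ι : E → Fin N
  τ : E → Fin N
  Ks : Fin N → Set K
  Ks_nonempty : ∀ i, (Ks i).Nonempty
  Ks_meas : ∀ i, MeasurableSet (Ks i)
  Ks_disj : ∀ i j, i ≠ j → Disjoint (Ks i) (Ks j)
  Ks_cover : (⋃ i, Ks i) = Set.univ
  w : E → K → K
  w_meas : ∀ e, Measurable (w e)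
  w_maps : ∀ e, Set.MapsTo (w e) (Ks (ι e)) (Ks (τ e))
  p : E → K → ℝ
  p_meas : ∀ e, Measurable (p e)
  p_nonneg : ∀ e x, 0 ≤ p e x
  p_sum_one : ∀ x, ∑ e, p e x = 1
  p_zero : ∀ e x, x ∉ Ks (ι e) → p e x = 0
  a : ℝ
  a_pos : 0 < a
  a_lt_one : a < 1
  contractive : ∀ i, ∀ x ∈ Ks i, ∀ y ∈ Ks i,
    ∑ e, p e x * dist (w e x) (w e y) ≤ a * dist x y

namespace CMS

variable {K : Type*} [MetricSpace K] [MeasurableSpace K]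
  {N : ℕ} {E : Type*} [Fintype E]

/-- The Markov operator `U` acting on functions. -/
noncomputable def Ufun (S : CMS K N E) (f : K → ℝ) : K → ℝ :=
  fun x => ∑ e, S.p e x * f (S.w e x)

/-- The adjoint Markov operator `U*` acting on measures. -/
noncomputable def adjoint (S : CMS K N E) (ν : Measure K) : Measure K :=
  ν.bind fun x => ∑ e, ENNReal.ofReal (S.p e x) • Measure.dirac (S.w e x)

/-- The weight `p_{e₁}(x) p_{e₂}(w_{e₁} x) ⋯` of a cylinder `[e₁, …, e_k]` started at `x`. -/
noncomputable def cylWeight (S : CMS K N E) : K → List E → ℝ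
  | _, [] => 1
  | x, e :: es => S.p e x * S.cylWeight (S.w e x) es

/-- `M` is the generalized Markov measure associated with the CMS and invariant measure `μ`. -/
def IsGMarkovMeasure [MeasurableSpace E] (S : CMS K N E)
    (μ : Measure K) (M : Measure (ℤ → E)) : Prop :=
  IsProbabilityMeasure M ∧
  ∀ (m : ℤ) (es : List E),
    M {σ | ∀ j : Fin es.length, σ (m + (j : ℕ)) = es.get j} =
      ENNReal.ofReal (∫ x, S.cylWeight x es ∂μ)

/-- `comp S σ n = w_{σ 0} ∘ w_{σ (-1)} ∘ ⋯ ∘ w_{σ (-n)}`. -/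
noncomputable def comp (S : CMS K N E) (σ : ℤ → E) : ℕ → K → K
  | 0, x => S.w (σ 0) x
  | n + 1, x => S.comp σ n (S.w (σ (-((n : ℤ) + 1))) x)

/-- `codeSeq S xs σ n = w_{σ 0} ∘ ⋯ ∘ w_{σ (-n)} (x_{i(σ (-n))})`. -/
noncomputable def codeSeq (S : CMS K N E) (xs : Fin N → K) (σ : ℤ → E) (n : ℕ) : K :=
  S.comp σ n (xs (S.ι (σ (-(n : ℤ)))))

end CMS

/-- The left shift `S` on `Σ = E^ℤ`. -/
def shiftL (E : Type*) : (ℤ → E) → ℤ → E := fun σ j => σ (j + 1)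

/-- The `n`-fold left shift `S^n` on `Σ = E^ℤ`, `n ∈ ℤ`. -/
def shiftZ (E : Type*) (n : ℤ) : (ℤ → E) → ℤ → E := fun σ j => σ (j + n)

namespace CMS

variable {K : Type*} [MetricSpace K] [MeasurableSpace K]
  {N : ℕ} {E : Type*} [Fintype E]

/-- The subshift `Σ_G` of (two-sided) paths of the directed multigraph. -/
def SigmaG (S : CMS K N E) : Set (ℤ → E) :=
  {σ | ∀ j : ℤ, S.τ (σ j) = S.ι (σ (j + 1))}

/-- The set `D` of paths where the coding limit exists. -/
def Dset (S : CMS K N E) (xs : Fin N → K) : Set (ℤ → E) :=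
  {σ ∈ S.SigmaG | ∃ L : K, Tendsto (S.codeSeq xs σ) atTop (nhds L)}

/-- `Y = ⋂_{n ∈ ℤ} S^n(D)`. -/
def Yset (S : CMS K N E) (xs : Fin N → K) : Set (ℤ → E) :=
  ⋂ n : ℤ, shiftZ E n '' S.Dset xs

/-- The coding map `F`. -/
noncomputable def F [Nonempty K] (S : CMS K N E) (xs : Fin N → K) (σ : ℤ → E) : K :=
  limUnder atTop (S.codeSeq xs σ)

end CMS

/-- The modulus of uniform continuity of `f` on the set `A`. -/
noncomputable def modulusOn {K : Type*} [MetricSpace K] (f : K → ℝ) (A : Set K) (t : ℝ) : ℝ :=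
  sSup {s | ∃ x ∈ A, ∃ y ∈ A, dist x y ≤ t ∧ s = |f x - f y|}

/-- Dini-continuity of `f` on `A`: `∫_0^c φ(t)/t dt < ∞` for some `c > 0`. -/
def DiniOn {K : Type*} [MetricSpace K] (f : K → ℝ) (A : Set K) : Prop :=
  ∃ c > 0, ∫⁻ t in Set.Ioc (0 : ℝ) c, ENNReal.ofReal (modulusOn f A t / t) < ⊤

/-- Entropy of the partition of `Σ = E^ℤ` into cylinders `[e₀, …, e_{n-1}]₀`. -/
noncomputable def cylEnt {E : Type*} [Fintype E] [MeasurableSpace E]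
    (Λ : Measure (ℤ → E)) (n : ℕ) : ℝ :=
  ∑ es : Fin n → E, Real.negMulLog ((Λ {σ | ∀ j : Fin n, σ ((j : ℕ) : ℤ) = es j}).toReal)

/-- Kolmogorov–Sinai entropy of the left shift with respect to an invariant measure,
via the generating zero-time partition. -/
noncomputable def KSEntropy {E : Type*} [Fintype E] [MeasurableSpace E]
    (Λ : Measure (ℤ → E)) : ℝ :=
  ⨅ n : ℕ, cylEnt Λ (n + 1) / ((n : ℝ) + 1)

def ShiftInvariant {E : Type*} [MeasurableSpace E] (Λ : Measure (ℤ → E)) : Prop :=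
  Measure.map (shiftL E) Λ = Λ

/-- `∫⁻ (-u) dΘ` for an extended-real valued energy function `u ≤ 0`. -/
noncomputable def negPartInt {α : Type*} [MeasurableSpace α]
    (u : α → EReal) (Θ : Measure α) : ℝ≥0∞ :=
  ∫⁻ x, (if u x = ⊥ then (⊤ : ℝ≥0∞) else ENNReal.ofReal (-(u x).toReal)) ∂Θ

/-- The free energy `h_Θ(S) + Θ(u)`, as an extended real number. -/
noncomputable def freeEnergy {E : Type*} [Fintype E] [MeasurableSpace E]
    (u : (ℤ → E) → EReal) (Θ : Measure (ℤ → E)) : EReal :=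
  (KSEntropy Θ : EReal) - ((negPartInt u Θ : ℝ≥0∞) : EReal)

/-- The pressure `P(u) = sup_Θ (h_Θ(S) + Θ(u))` over shift-invariant probability measures. -/
noncomputable def pressure {E : Type*} [Fintype E] [MeasurableSpace E]
    (u : (ℤ → E) → EReal) : EReal :=
  ⨆ (Θ : Measure (ℤ → E)) (_ : IsProbabilityMeasure Θ ∧ ShiftInvariant Θ), freeEnergy u Θ

/-- `Λ` is an equilibrium state for the energy function `u`. -/
def IsEquilibrium {E : Type*} [Fintype E] [MeasurableSpace E]
    (u : (ℤ → E) → EReal) (Λ : Measure (ℤ → E)) : Prop :=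
  IsProbabilityMeasure Λ ∧ ShiftInvariant Λ ∧ freeEnergy u Λ = pressure u

/-- Extended-real logarithm, `elog x = ⊥` for `x ≤ 0`. -/
noncomputable def elog (x : ℝ) : EReal :=
  if x ≤ 0 then (⊥ : EReal) else ((Real.log x : ℝ) : EReal)

/-- The σ-algebra `𝓕` on `E^ℤ` generated by the coordinates `σ_j`, `j ≤ 0`. -/
def pastAlg (E : Type*) [MeasurableSpace E] : MeasurableSpace (ℤ → E) :=
  MeasurableSpace.comap (fun (σ : ℤ → E) (j : {j : ℤ // j ≤ 0}) => σ j.1) inferInstance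

/-- `g_Λ(σ) = g_{Λ σ₁}(σ)` where `g_{Λ e} = E_Λ(1_{{σ₁ = e}} | 𝓕)`. -/
noncomputable def gfun {E : Type*} [Fintype E] [MeasurableSpace E]
    (Λ : Measure (ℤ → E)) (σ : ℤ → E) : ℝ :=
  (Λ[Set.indicator {τ : ℤ → E | τ 1 = σ 1} (fun _ => (1 : ℝ)) | pastAlg E]) σ

open Classical in
/-- The energy function `u(σ) = log p_{σ₁}(F(σ))` on `Y`, `-∞` off `Y`. -/
noncomputable def CMS.energyU {K : Type*} [MetricSpace K] [MeasurableSpace K] [Nonempty K]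
    {N : ℕ} {E : Type*} [Fintype E]
    (S : CMS K N E) (xs : Fin N → K) (σ : ℤ → E) : EReal :=
  if σ ∈ S.Yset xs then elog (S.p (σ 1) (S.F xs σ)) else ⊥

/-- Irreducibility (strong connectedness) of the directed multigraph of the system. -/
def CMS.IrreducibleGraph {K : Type*} [MetricSpace K] [MeasurableSpace K]
    {N : ℕ} {E : Type*} [Fintype E] (S : CMS K N E) : Prop :=
  ∀ i j : Fin N, ∃ (n : ℕ) (f : Fin (n + 1) → E),
    S.ι (f 0) = i ∧ S.τ (f (Fin.last n)) = j ∧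
    ∀ k : Fin n, S.τ (f k.castSucc) = S.ι (f k.succ)

open MeasureTheory Filter Topology
open scoped ENNReal

namespace CMS

variable {K : Type*} [MetricSpace K] [MeasurableSpace K]
  {N : ℕ} {E : Type*} [Fintype E]

lemma p_le_one (S : CMS K N E) (e : E) (x : K) : S.p e x ≤ 1 := by
  rw [← S.p_sum_one x]
  exact Finset.single_le_sum (f := fun e => S.p e x) (fun e _ => S.p_nonneg e x) (Finset.mem_univ e)

lemma exists_vtx (S : CMS K N E) (x : K) : ∃ i, x ∈ S.Ks i := by
  have : x ∈ ⋃ i, S.Ks i := by rw [S.Ks_cover]; trivial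
  simpa using this

/-- the vertex of a point -/
noncomputable def vtx (S : CMS K N E) (x : K) : Fin N := (S.exists_vtx x).choose

lemma mem_vtx (S : CMS K N E) (x : K) : x ∈ S.Ks (S.vtx x) := (S.exists_vtx x).choose_spec

lemma eq_of_mem (S : CMS K N E) {x : K} {i j : Fin N} (hi : x ∈ S.Ks i) (hj : x ∈ S.Ks j) :
    i = j := by
  by_contra h
  exact Set.disjoint_left.1 (S.Ks_disj i j h) hi hj

lemma vtx_eq (S : CMS K N E) {x : K} {i : Fin N} (hi : x ∈ S.Ks i) : S.vtx x = i :=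
  S.eq_of_mem (S.mem_vtx x) hi

lemma mem_of_p_ne (S : CMS K N E) {e : E} {x : K} (h : S.p e x ≠ 0) : x ∈ S.Ks (S.ι e) := by
  by_contra h'
  exact h (S.p_zero e x h')

/-- the Markov operator on nonnegative functions -/
noncomputable def UE (S : CMS K N E) (f : K → ℝ≥0∞) : K → ℝ≥0∞ :=
  fun x => ∑ e, ENNReal.ofReal (S.p e x) * f (S.w e x)

lemma ofReal_sum_p (S : CMS K N E) (x : K) : ∑ e, ENNReal.ofReal (S.p e x) = 1 := by
  rw [← ENNReal.ofReal_sum_of_nonneg (fun e _ => S.p_nonneg e x), S.p_sum_one, ENNReal.ofReal_one]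

lemma measurable_UE (S : CMS K N E) {f : K → ℝ≥0∞} (hf : Measurable f) : Measurable (S.UE f) := by
  unfold UE
  refine Finset.measurable_sum _ (fun e _ => ?_)
  exact ((S.p_meas e).ennreal_ofReal).mul (hf.comp (S.w_meas e))

lemma measurable_kernel (S : CMS K N E) :
    Measurable (fun x => ∑ e, ENNReal.ofReal (S.p e x) • Measure.dirac (S.w e x)) := by
  refine Measure.measurable_of_measurable_coe _ (fun s hs => ?_)
  simp only [Measure.coe_finsetSum, Finset.sum_apply, Measure.smul_apply, smul_eq_mul]
  refine Finset.measurable_sum _ (fun e _ => ?_)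
  refine ((S.p_meas e).ennreal_ofReal).mul ?_
  exact (Measure.measurable_coe hs).comp (Measure.measurable_dirac.comp (S.w_meas e))

lemma lintegral_adjoint (S : CMS K N E) (ν : Measure K) {f : K → ℝ≥0∞} (hf : Measurable f) :
    ∫⁻ x, f x ∂(S.adjoint ν) = ∫⁻ x, S.UE f x ∂ν := by
  unfold adjoint
  rw [Measure.lintegral_bind S.measurable_kernel.aemeasurable hf.aemeasurable]
  refine lintegral_congr (fun x => ?_)
  rw [lintegral_finset_sum_measure]
  simp only [lintegral_smul_measure, lintegral_dirac' _ hf, UE, smul_eq_mul]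

lemma adjoint_apply (S : CMS K N E) (ν : Measure K) {s : Set K} (hs : MeasurableSet s) :
    S.adjoint ν s = ∫⁻ x, S.UE (s.indicator 1) x ∂ν := by
  rw [← lintegral_adjoint _ _ (measurable_one.indicator hs), lintegral_indicator_one hs]

lemma adjoint_eq (S : CMS K N E) (ν : Measure K) :
    S.adjoint ν = ∑ e, (ν.withDensity (fun x => ENNReal.ofReal (S.p e x))).map (S.w e) := by
  ext s hs
  rw [adjoint_apply _ _ hs]
  simp only [UE, Measure.coe_finsetSum, Finset.sum_apply]
  rw [lintegral_finsetSum]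
  · refine Finset.sum_congr rfl (fun e _ => ?_)
    rw [Measure.map_apply (S.w_meas e) hs, withDensity_apply _ (S.w_meas e hs),
      ← lintegral_indicator (S.w_meas e hs)]
    refine lintegral_congr (fun x => ?_)
    by_cases h : S.w e x ∈ s <;> simp [Set.indicator, h]
  · intro e _
    exact ((S.p_meas e).ennreal_ofReal).mul ((measurable_one.indicator hs).comp (S.w_meas e))

lemma adjoint_univ (S : CMS K N E) (ν : Measure K) : S.adjoint ν Set.univ = ν Set.univ := by
  rw [adjoint_apply _ _ MeasurableSet.univ]
  simp [UE, ofReal_sum_p]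

instance adjoint_prob (S : CMS K N E) (ν : Measure K) [IsProbabilityMeasure ν] :
    IsProbabilityMeasure (S.adjoint ν) := ⟨by rw [adjoint_univ]; simp⟩

lemma adjoint_add (S : CMS K N E) (ν ν' : Measure K) :
    S.adjoint (ν + ν') = S.adjoint ν + S.adjoint ν' := by
  ext s hs
  rw [Measure.add_apply, adjoint_apply _ _ hs, adjoint_apply _ _ hs, adjoint_apply _ _ hs,
    lintegral_add_measure]

lemma adjoint_smul (S : CMS K N E) (c : ℝ≥0∞) (ν : Measure K) :
    S.adjoint (c • ν) = c • S.adjoint ν := by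
  ext s hs
  rw [Measure.smul_apply, adjoint_apply _ _ hs, adjoint_apply _ _ hs, lintegral_smul_measure]

lemma adjoint_sum (S : CMS K N E) (s : Finset ℕ) (ν : ℕ → Measure K) :
    S.adjoint (∑ i ∈ s, ν i) = ∑ i ∈ s, S.adjoint (ν i) := by
  induction s using Finset.cons_induction with
  | empty => ext s hs; simp [adjoint_apply _ _ hs]
  | cons i s hi ih => rw [Finset.sum_cons, Finset.sum_cons, adjoint_add, ih]

lemma integral_adjoint (S : CMS K N E) (ν : Measure K) [IsFiniteMeasure ν] {f : K → ℝ}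
    (hf : Measurable f) {C : ℝ} (hC : ∀ x, |f x| ≤ C) :
    ∫ x, f x ∂(S.adjoint ν) = ∫ x, S.Ufun f x ∂ν := by
  have hfin : ∀ e, IsFiniteMeasure (ν.withDensity (fun x => ENNReal.ofReal (S.p e x))) := by
    intro e
    refine isFiniteMeasure_withDensity_ofReal ?_
    refine (Integrable.of_bound (C := 1) (S.p_meas e).aestronglyMeasurable ?_).2
    refine Eventually.of_forall (fun x => ?_)
    rw [Real.norm_eq_abs, abs_of_nonneg (S.p_nonneg e x)]; exact S.p_le_one e x
  rw [adjoint_eq, integral_finsetSum_measure]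
  · unfold Ufun
    rw [integral_finsetSum]
    · refine Finset.sum_congr rfl (fun e _ => ?_)
      rw [integral_map (S.w_meas e).aemeasurable hf.aestronglyMeasurable,
        integral_withDensity_eq_integral_toReal_smul (S.p_meas e).ennreal_ofReal
          (Eventually.of_forall fun x => ENNReal.ofReal_lt_top)]
      refine integral_congr_ae (Eventually.of_forall fun x => ?_)
      simp [ENNReal.toReal_ofReal (S.p_nonneg e x)]
    · intro e _
      refine Integrable.of_bound (C := C) (((S.p_meas e).mul (hf.comp (S.w_meas e))).aestronglyMeasurable) ?_
      refine Eventually.of_forall (fun x => ?_)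
      rw [Real.norm_eq_abs, abs_mul, abs_of_nonneg (S.p_nonneg e x)]
      have h1 := S.p_le_one e x
      have h2 := hC (S.w e x)
      have h3 := abs_nonneg (f (S.w e x))
      nlinarith [S.p_nonneg e x]
  · intro e _
    exact Integrable.of_bound (C := C) hf.aestronglyMeasurable (Eventually.of_forall hC)

/-- Positivity of invariant measures on the vertex sets. -/
lemma pos_of_invariant (S : CMS K N E) (hirr : S.IrreducibleGraph)
    {δ : ℝ} (hδ : 0 < δ) (hp : ∀ e, ∀ x ∈ S.Ks (S.ι e), δ ≤ S.p e x)
    (ν : Measure K) (hν : ν ≠ 0) (hinv : S.adjoint ν = ν) (i : Fin N) : ν (S.Ks i) ≠ 0 := by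
  have step : ∀ e, ν (S.Ks (S.ι e)) ≠ 0 → ν (S.Ks (S.τ e)) ≠ 0 := by
    intro e he h0
    rw [← hinv, adjoint_apply _ _ (S.Ks_meas _)] at h0
    apply he
    have hle : ENNReal.ofReal δ * ν (S.Ks (S.ι e)) ≤ 0 := by
      rw [← h0, ← lintegral_indicator_const (S.Ks_meas _)]
      refine lintegral_mono (fun x => ?_)
      by_cases hx : x ∈ S.Ks (S.ι e)
      · simp only [Set.indicator_of_mem hx, UE]
        refine le_trans ?_ (Finset.single_le_sum
          (f := fun e' => ENNReal.ofReal (S.p e' x) * (S.Ks (S.τ e)).indicator 1 (S.w e' x)) (fun _ _ => zero_le) (Finset.mem_univ e))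
        simp only [Set.indicator_of_mem (S.w_maps e hx), Pi.one_apply, mul_one]
        exact ENNReal.ofReal_le_ofReal (hp e x hx)
      · simp [Set.indicator_of_notMem hx]
    have := le_antisymm hle zero_le
    rcases mul_eq_zero.1 this with h | h
    · simp at h; linarith
    · exact h
  obtain ⟨j, hj⟩ : ∃ j, ν (S.Ks j) ≠ 0 := by
    by_contra hcon
    push Not at hcon
    apply hν
    rw [← Measure.measure_univ_eq_zero, ← S.Ks_cover]
    exact measure_iUnion_null hcon
  obtain ⟨n, f, h0, hl, hpath⟩ := hirr j i
  have : ∀ k : Fin (n+1), ν (S.Ks (S.τ (f k))) ≠ 0 := by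
    intro k
    induction k using Fin.induction with
    | zero => exact step _ (by rw [h0]; exact hj)
    | succ k ih => exact step _ (by rw [← hpath k]; exact ih)
  rw [← hl]; exact this _

lemma isClosed_Ks (S : CMS K N E) (hOpen : ∀ i, IsOpen (S.Ks i)) (i : Fin N) :
    IsClosed (S.Ks i) := by
  rw [← isOpen_compl_iff]
  have : (S.Ks i)ᶜ = ⋃ j : {j // j ≠ i}, S.Ks j.1 := by
    ext x
    simp only [Set.mem_compl_iff, Set.mem_iUnion]
    constructor
    · intro h
      exact ⟨⟨S.vtx x, fun h' => h (h' ▸ S.mem_vtx x)⟩, S.mem_vtx x⟩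
    · rintro ⟨⟨j, hj⟩, hx⟩ h
      exact hj (S.eq_of_mem hx h)
  rw [this]
  exact isOpen_iUnion (fun j => hOpen _)

lemma isClopen_Ks (S : CMS K N E) (hOpen : ∀ i, IsOpen (S.Ks i)) (i : Fin N) :
    IsClopen (S.Ks i) := ⟨S.isClosed_Ks hOpen i, hOpen i⟩

lemma dist_w_le (S : CMS K N E) {δ : ℝ} (hδ : 0 < δ) (hp : ∀ e, ∀ x ∈ S.Ks (S.ι e), δ ≤ S.p e x)
    (e : E) {x y : K} (hx : x ∈ S.Ks (S.ι e)) (hy : y ∈ S.Ks (S.ι e)) :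
    dist (S.w e x) (S.w e y) ≤ S.a / δ * dist x y := by
  have h1 := S.contractive _ x hx y hy
  have h2 : S.p e x * dist (S.w e x) (S.w e y) ≤ ∑ e, S.p e x * dist (S.w e x) (S.w e y) :=
    Finset.single_le_sum (f := fun e => S.p e x * dist (S.w e x) (S.w e y))
      (fun e _ => mul_nonneg (S.p_nonneg e x) dist_nonneg) (Finset.mem_univ e)
  have h3 : δ * dist (S.w e x) (S.w e y) ≤ S.p e x * dist (S.w e x) (S.w e y) :=
    mul_le_mul_of_nonneg_right (hp e x hx) dist_nonneg
  rw [div_mul_eq_mul_div, le_div_iff₀ hδ]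
  linarith

lemma continuousOn_w (S : CMS K N E) {δ : ℝ} (hδ : 0 < δ)
    (hp : ∀ e, ∀ x ∈ S.Ks (S.ι e), δ ≤ S.p e x) (e : E) :
    ContinuousOn (S.w e) (S.Ks (S.ι e)) := by
  have : LipschitzOnWith (Real.toNNReal (S.a / δ)) (S.w e) (S.Ks (S.ι e)) := by
    refine LipschitzOnWith.of_dist_le_mul (fun x hx y hy => ?_)
    rw [Real.coe_toNNReal _ (div_nonneg S.a_pos.le hδ.le)]
    exact S.dist_w_le hδ hp e hx hy
  exact this.continuousOn

lemma contractive_E (S : CMS K N E) {i : Fin N} {x y : K} (hx : x ∈ S.Ks i) (hy : y ∈ S.Ks i) :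
    ∑ e, ENNReal.ofReal (S.p e x) * edist (S.w e x) (S.w e y) ≤ ENNReal.ofReal S.a * edist x y := by
  simp only [edist_dist]
  have h := ENNReal.ofReal_le_ofReal (S.contractive i x hx y hy)
  rw [ENNReal.ofReal_mul S.a_pos.le, ENNReal.ofReal_sum_of_nonneg
    (fun e _ => mul_nonneg (S.p_nonneg e x) dist_nonneg)] at h
  simpa only [ENNReal.ofReal_mul (S.p_nonneg _ x)] using h

end CMS

/-! ### Moduli -/

section modulus
variable {K : Type*} [MetricSpace K]

lemma modulus_bdd {f : K → ℝ} (A : Set K) (h0 : ∀ x, 0 ≤ f x) (h1 : ∀ x, f x ≤ 1) (t : ℝ) :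
    BddAbove {s | ∃ x ∈ A, ∃ y ∈ A, dist x y ≤ t ∧ s = |f x - f y|} := by
  refine ⟨1, ?_⟩
  rintro s ⟨x, _, y, _, _, rfl⟩
  rw [abs_le]; constructor <;> linarith [h0 x, h0 y, h1 x, h1 y]

lemma modulus_nonneg (f : K → ℝ) (A : Set K) (t : ℝ) : 0 ≤ modulusOn f A t := by
  apply Real.sSup_nonneg
  rintro s ⟨x, _, y, _, _, rfl⟩
  exact abs_nonneg _

lemma le_modulus {f : K → ℝ} {A : Set K} (h0 : ∀ x, 0 ≤ f x) (h1 : ∀ x, f x ≤ 1) {t : ℝ}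
    {x y : K} (hx : x ∈ A) (hy : y ∈ A) (h : dist x y ≤ t) : |f x - f y| ≤ modulusOn f A t :=
  le_csSup (modulus_bdd A h0 h1 t) ⟨x, hx, y, hy, h, rfl⟩

lemma modulus_mono {f : K → ℝ} {A : Set K} (hA : A.Nonempty) (h0 : ∀ x, 0 ≤ f x)
    (h1 : ∀ x, f x ≤ 1) {s t : ℝ} (hs : 0 ≤ s) (h : s ≤ t) : modulusOn f A s ≤ modulusOn f A t := by
  obtain ⟨z, hz⟩ := hA
  refine csSup_le_csSup (modulus_bdd A h0 h1 t) ⟨_, z, hz, z, hz, by simpa using hs, rfl⟩ ?_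
  rintro r ⟨x, hx, y, hy, hd, rfl⟩
  exact ⟨x, hx, y, hy, hd.trans h, rfl⟩

lemma modulus_le_one {f : K → ℝ} {A : Set K} (h0 : ∀ x, 0 ≤ f x)
    (h1 : ∀ x, f x ≤ 1) (t : ℝ) : modulusOn f A t ≤ 1 := by
  apply Real.sSup_le _ zero_le_one
  rintro s ⟨x, _, y, _, _, rfl⟩
  rw [abs_le]; constructor <;> linarith [h0 x, h0 y, h1 x, h1 y]

/-- Dini-continuity gives summability of the modulus along geometric sequences. -/
lemma dini_summable {f : K → ℝ} {A : Set K} (hA : A.Nonempty) (h0 : ∀ x, 0 ≤ f x)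
    (h1 : ∀ x, f x ≤ 1) (hD : DiniOn f A) {a : ℝ} (ha : 0 < a) (ha1 : a < 1) {C : ℝ} (hC : 0 < C) :
    Summable (fun k : ℕ => modulusOn f A (C * a ^ k)) := by
  obtain ⟨c, hc, hIntg⟩ := hD
  -- first for `c`
  have hkey : Summable (fun k : ℕ => modulusOn f A (c * a ^ (k+1))) := by
    have hle : ∑' k : ℕ, ENNReal.ofReal (modulusOn f A (c * a ^ (k+1)) * (1 - a)) ≤
        ∫⁻ t in Set.Ioc (0 : ℝ) c, ENNReal.ofReal (modulusOn f A t / t) := by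
      have hdisj : Pairwise (Function.onFun Disjoint (fun k : ℕ => Set.Ioc (c * a ^ (k+1)) (c * a ^ k))) := by
        have hanti : Antitone (fun k : ℕ => c * a ^ k) := by
          intro m n hmn
          exact mul_le_mul_of_nonneg_left (pow_le_pow_of_le_one ha.le ha1.le hmn) hc.le
        have := hanti.pairwise_disjoint_on_Ioc_succ
        simpa [Order.succ_eq_add_one] using this
      have hsub : (⋃ k : ℕ, Set.Ioc (c * a ^ (k+1)) (c * a ^ k)) ⊆ Set.Ioc 0 c := by
        intro t ht
        obtain ⟨k, hk⟩ := Set.mem_iUnion.1 ht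
        refine ⟨lt_trans (by positivity) hk.1, hk.2.trans ?_⟩
        calc c * a ^ k ≤ c * 1 := mul_le_mul_of_nonneg_left (pow_le_one₀ ha.le ha1.le) hc.le
          _ = c := mul_one c
      refine le_trans ?_ (lintegral_mono_set hsub)
      rw [lintegral_iUnion (fun k => measurableSet_Ioc) hdisj]
      refine ENNReal.tsum_le_tsum (fun k => ?_)
      have hpos : 0 < c * a ^ k := by positivity
      have hpos' : 0 < c * a ^ (k+1) := by positivity
      calc ENNReal.ofReal (modulusOn f A (c * a ^ (k+1)) * (1 - a))
          = ∫⁻ t in Set.Ioc (c * a ^ (k+1)) (c * a ^ k), ENNReal.ofReal (modulusOn f A (c * a ^ (k+1)) / (c * a ^ k)) := by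
            rw [setLIntegral_const, Real.volume_Ioc, ← ENNReal.ofReal_mul]
            · congr 1
              field_simp
              ring
            · exact div_nonneg (modulus_nonneg _ _ _) hpos.le
        _ ≤ _ := by
            refine setLIntegral_mono' measurableSet_Ioc (fun t ht => ?_)
            apply ENNReal.ofReal_le_ofReal
            apply div_le_div₀ (modulus_nonneg _ _ _) _ (lt_trans hpos' ht.1) ht.2
            exact modulus_mono hA h0 h1 hpos'.le ht.1.le
    have hfin := ne_top_of_le_ne_top hIntg.ne hle
    have hs := ENNReal.summable_toReal hfin
    have h1a : (1 - a) ≠ 0 := by linarith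
    have hs2 : Summable (fun k : ℕ => modulusOn f A (c * a ^ (k+1)) * (1 - a)) := by
      convert hs using 2 with k
      rw [ENNReal.toReal_ofReal]
      exact mul_nonneg (modulus_nonneg _ _ _) (by linarith)
    exact (summable_mul_right_iff h1a).1 hs2
  have htend : Tendsto (fun m : ℕ => C * a ^ m) atTop (𝓝 (C * 0)) :=
    (tendsto_pow_atTop_nhds_zero_of_lt_one ha.le ha1).const_mul C
  obtain ⟨m, hm⟩ := (htend.eventually (gt_mem_nhds (show C * 0 < c * a by rw [mul_zero]; positivity))).exists
  rw [← summable_nat_add_iff m]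
  refine Summable.of_nonneg_of_le (fun k => modulus_nonneg _ _ _) (fun k => ?_) hkey
  apply modulus_mono hA h0 h1 (by positivity)
  have : a ^ k > 0 := by positivity
  calc C * a ^ (k + m) = (C * a ^ m) * a ^ k := by ring
    _ ≤ (c * a) * a ^ k := mul_le_mul_of_nonneg_right hm.le this.le
    _ = c * a ^ (k+1) := by ring

/-- uniform continuity from Dini continuity -/
lemma dini_unif {f : K → ℝ} {A : Set K} (h0 : ∀ x, 0 ≤ f x)
    (h1 : ∀ x, f x ≤ 1) (hD : DiniOn f A) {ε : ℝ} (hε : 0 < ε) :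
    ∃ η > 0, ∀ x ∈ A, ∀ y ∈ A, dist x y ≤ η → |f x - f y| ≤ ε := by
  rcases A.eq_empty_or_nonempty with rfl | hA
  · exact ⟨1, one_pos, by simp⟩
  have hs := dini_summable hA h0 h1 hD (a := 1/2) (by norm_num) (by norm_num) one_pos
  obtain ⟨k, hk⟩ := (hs.tendsto_atTop_zero.eventually (gt_mem_nhds hε)).exists
  exact ⟨1 * (1/2)^k, by positivity, fun x hx y hy h => (le_modulus h0 h1 hx hy h).trans hk.le⟩

end modulus

namespace CMS

variable {K : Type*} [MetricSpace K] [MeasurableSpace K]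
  {N : ℕ} {E : Type*} [Fintype E]

lemma continuous_of_clopen {X Y : Type*} [TopologicalSpace X] [TopologicalSpace Y] {f : X → Y} {A : Set X}
    (hA : IsClopen A) (h1 : ContinuousOn f A) (h2 : ContinuousOn f Aᶜ) : Continuous f := by
  rw [continuous_iff_continuousAt]
  intro x
  by_cases hx : x ∈ A
  · exact h1.continuousAt (hA.isOpen.mem_nhds hx)
  · exact h2.continuousAt (hA.compl.isOpen.mem_nhds hx)

lemma continuous_p (S : CMS K N E) (hOpen : ∀ i, IsOpen (S.Ks i))
    (hDini : ∀ e, DiniOn (S.p e) (S.Ks (S.ι e))) (e : E) : Continuous (S.p e) := by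
  refine continuous_of_clopen (S.isClopen_Ks hOpen (S.ι e)) ?_ ?_
  · rw [Metric.continuousOn_iff]
    intro x hx ε hε
    obtain ⟨η, hη, h⟩ := dini_unif (S.p_nonneg e) (S.p_le_one e) (hDini e) (half_pos hε)
    refine ⟨η, hη, fun y hy hd => ?_⟩
    rw [Real.dist_eq]
    exact lt_of_le_of_lt (h y hy x hx hd.le) (half_lt_self hε)
  · refine (continuousOn_const (c := (0:ℝ))).congr (fun x hx => S.p_zero e x hx)

lemma continuous_p_mul (S : CMS K N E) (hOpen : ∀ i, IsOpen (S.Ks i))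
    (hDini : ∀ e, DiniOn (S.p e) (S.Ks (S.ι e))) {δ : ℝ} (hδ : 0 < δ)
    (hp : ∀ e, ∀ x ∈ S.Ks (S.ι e), δ ≤ S.p e x) (e : E) {f : K → ℝ} (hf : Continuous f) :
    Continuous (fun x => S.p e x * f (S.w e x)) := by
  refine continuous_of_clopen (S.isClopen_Ks hOpen (S.ι e)) ?_ ?_
  · exact (S.continuous_p hOpen hDini e).continuousOn.mul
      (hf.comp_continuousOn (S.continuousOn_w hδ hp e))
  · refine (continuousOn_const (c := (0:ℝ))).congr (fun x hx => ?_)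
    simp [S.p_zero e x hx]

lemma continuous_Ufun (S : CMS K N E) (hOpen : ∀ i, IsOpen (S.Ks i))
    (hDini : ∀ e, DiniOn (S.p e) (S.Ks (S.ι e))) {δ : ℝ} (hδ : 0 < δ)
    (hp : ∀ e, ∀ x ∈ S.Ks (S.ι e), δ ≤ S.p e x) {f : K → ℝ} (hf : Continuous f) :
    Continuous (S.Ufun f) := by
  unfold Ufun
  exact continuous_finsetSum _ (fun e _ => S.continuous_p_mul hOpen hDini hδ hp e hf)

lemma abs_Ufun_le (S : CMS K N E) {f : K → ℝ} {C : ℝ} (hC : ∀ x, |f x| ≤ C) (x : K) :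
    |S.Ufun f x| ≤ C := by
  unfold Ufun
  calc |∑ e, S.p e x * f (S.w e x)| ≤ ∑ e, |S.p e x * f (S.w e x)| := Finset.abs_sum_le_sum_abs _ _
    _ ≤ ∑ e, S.p e x * C := by
        refine Finset.sum_le_sum (fun e _ => ?_)
        rw [abs_mul, abs_of_nonneg (S.p_nonneg e x)]
        exact mul_le_mul_of_nonneg_left (hC _) (S.p_nonneg e x)
    _ = C := by rw [← Finset.sum_mul, S.p_sum_one, one_mul]

end CMS
open MeasureTheory Filter Topology
open scoped ENNReal

namespace CMS

variable {K : Type*} [MetricSpace K] [MeasurableSpace K]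
  {N : ℕ} {E : Type*} [Fintype E]

/-- Overlap of the path distributions started from `x` and `y`. -/
noncomputable def overlap (S : CMS K N E) : ℕ → K → K → ℝ
  | 0, _, _ => 1
  | n + 1, x, y => ∑ e, min (S.p e x) (S.p e y) * S.overlap n (S.w e x) (S.w e y)

lemma overlap_nonneg (S : CMS K N E) (n : ℕ) : ∀ x y, 0 ≤ S.overlap n x y := by
  induction n with
  | zero => intro x y; simp [overlap]
  | succ n ih =>
    intro x y
    simp only [overlap]
    exact Finset.sum_nonneg (fun e _ => mul_nonneg (le_min (S.p_nonneg e x) (S.p_nonneg e y)) (ih _ _))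

/-- common modulus -/
noncomputable def modAll (S : CMS K N E) (t : ℝ) : ℝ := ∑ e, modulusOn (S.p e) (S.Ks (S.ι e)) t

lemma modAll_nonneg (S : CMS K N E) (t : ℝ) : 0 ≤ S.modAll t :=
  Finset.sum_nonneg (fun e _ => modulus_nonneg _ _ _)

lemma p_diff_le (S : CMS K N E) {e : E} {x y : K} (hx : x ∈ S.Ks (S.ι e)) (hy : y ∈ S.Ks (S.ι e))
    {t : ℝ} (h : dist x y ≤ t) : |S.p e x - S.p e y| ≤ S.modAll t := by
  refine (le_modulus (S.p_nonneg e) (S.p_le_one e) hx hy h).trans ?_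
  exact Finset.single_le_sum (f := fun e => modulusOn (S.p e) (S.Ks (S.ι e)) t)
    (fun e _ => modulus_nonneg _ _ _) (Finset.mem_univ e)

lemma modAll_summable (S : CMS K N E) (hDini : ∀ e, DiniOn (S.p e) (S.Ks (S.ι e))) {C : ℝ}
    (hC : 0 < C) : Summable (fun k : ℕ => S.modAll (C * S.a ^ k)) := by
  unfold modAll
  exact summable_sum (fun e _ => dini_summable (S.Ks_nonempty _) (S.p_nonneg e) (S.p_le_one e)
    (hDini e) S.a_pos S.a_lt_one hC)

lemma min_p_ge (S : CMS K N E) {δ : ℝ} (hδ : 0 < δ) (hp : ∀ e, ∀ x ∈ S.Ks (S.ι e), δ ≤ S.p e x)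
    {i : Fin N} {x y : K} (hx : x ∈ S.Ks i) (hy : y ∈ S.Ks i) {t : ℝ} (h : dist x y ≤ t) (e : E) :
    Real.exp (-(S.modAll t / δ)) * S.p e x ≤ min (S.p e x) (S.p e y) := by
  have hm := S.modAll_nonneg t
  by_cases he : S.ι e = i
  · subst he
    have hd := (abs_le.1 (S.p_diff_le hx hy h)).2
    have hpy := hp e y hy
    refine le_min ?_ ?_
    · refine mul_le_of_le_one_left (S.p_nonneg e x) ?_
      rw [Real.exp_le_one_iff]
      have := div_nonneg hm hδ.le
      linarith
    · rw [Real.exp_neg, inv_mul_le_iff₀ (Real.exp_pos _)]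
      have h1 : S.modAll t / δ + 1 ≤ Real.exp (S.modAll t / δ) := Real.add_one_le_exp _
      have h2 : S.modAll t ≤ S.modAll t / δ * S.p e y := by
        calc S.modAll t = S.modAll t / δ * δ := by field_simp
          _ ≤ _ := mul_le_mul_of_nonneg_left hpy (div_nonneg hm hδ.le)
      have h3 := mul_le_mul_of_nonneg_right h1 (S.p_nonneg e y)
      nlinarith
  · have hx0 : S.p e x = 0 := S.p_zero e x (fun h' => he (S.eq_of_mem h' hx))
    have hy0 : S.p e y = 0 := S.p_zero e y (fun h' => he (S.eq_of_mem h' hy))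
    simp [hx0, hy0]

lemma overlap_ge (S : CMS K N E) {δ : ℝ} (hδ : 0 < δ)
    (hp : ∀ e, ∀ x ∈ S.Ks (S.ι e), δ ≤ S.p e x) (n : ℕ) :
    ∀ (C : ℝ), 0 < C → ∀ i, ∀ x ∈ S.Ks i, ∀ y ∈ S.Ks i,
      Real.exp (-((∑ k ∈ Finset.range n, S.modAll (C * S.a ^ k)) / δ)) * (1 - dist x y / C) ≤
        S.overlap n x y := by
  induction n with
  | zero =>
    intro C hC i x hx y hy
    simp only [overlap, Finset.range_zero, Finset.sum_empty, zero_div, neg_zero, Real.exp_zero, one_mul]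
    have := div_nonneg (dist_nonneg (x := x) (y := y)) hC.le
    linarith
  | succ n ih =>
    intro C hC i x hx y hy
    have ha := S.a_pos
    by_cases hd : dist x y ≤ C
    swap
    · refine le_trans ?_ (S.overlap_nonneg _ _ _)
      refine mul_nonpos_of_nonneg_of_nonpos (Real.exp_pos _).le ?_
      have : 1 ≤ dist x y / C := by rw [le_div_iff₀ hC]; linarith
      linarith
    have hsum : ∑ k ∈ Finset.range (n+1), S.modAll (C * S.a ^ k) =
        S.modAll C + ∑ k ∈ Finset.range n, S.modAll (C * S.a * S.a ^ k) := by
      rw [Finset.sum_range_succ', add_comm]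
      simp [pow_succ, mul_assoc, mul_comm]
    rw [hsum, add_div, neg_add, Real.exp_add]
    set A := Real.exp (-(S.modAll C / δ))
    set B := Real.exp (-((∑ k ∈ Finset.range n, S.modAll (C * S.a * S.a ^ k)) / δ))
    have hA : 0 < A := Real.exp_pos _
    have hB : 0 < B := Real.exp_pos _
    simp only [overlap]
    calc A * B * (1 - dist x y / C)
        ≤ A * B * (1 - (∑ e, S.p e x * dist (S.w e x) (S.w e y)) / (C * S.a)) := by
          refine mul_le_mul_of_nonneg_left ?_ (mul_pos hA hB).le
          have h1 := S.contractive i x hx y hy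
          have : (∑ e, S.p e x * dist (S.w e x) (S.w e y)) / (C * S.a) ≤ dist x y / C := by
            rw [div_le_div_iff₀ (by positivity) hC]
            nlinarith
          linarith
      _ = ∑ e, (A * S.p e x) * (B * (1 - dist (S.w e x) (S.w e y) / (C * S.a))) := by
          have : (1:ℝ) = ∑ e, S.p e x := (S.p_sum_one x).symm
          calc _ = A * B * (∑ e, S.p e x - (∑ e, S.p e x * dist (S.w e x) (S.w e y)) / (C * S.a)) := by
                rw [← this]
            _ = _ := by
                rw [Finset.sum_div, ← Finset.sum_sub_distrib, Finset.mul_sum]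
                refine Finset.sum_congr rfl (fun e _ => by ring)
      _ ≤ ∑ e, min (S.p e x) (S.p e y) * S.overlap n (S.w e x) (S.w e y) := by
          refine Finset.sum_le_sum (fun e _ => ?_)
          by_cases he : S.ι e = i
          · subst he
            have h1 := S.min_p_ge hδ hp hx hy hd e
            have h2 := ih (C * S.a) (by positivity) _ _ (S.w_maps e hx) _ (S.w_maps e hy)
            exact (mul_le_mul_of_nonneg_left h2 (mul_nonneg hA.le (S.p_nonneg e x))).trans
              (mul_le_mul_of_nonneg_right h1 (S.overlap_nonneg _ _ _))
          · have hx0 : S.p e x = 0 := S.p_zero e x (fun h' => he (S.eq_of_mem h' hx))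
            have hy0 : S.p e y = 0 := S.p_zero e y (fun h' => he (S.eq_of_mem h' hy))
            simp [hx0, hy0]

lemma Ufun_iter_bounds (S : CMS K N E) {f : K → ℝ} (h0 : ∀ x, 0 ≤ f x) (h1 : ∀ x, f x ≤ 1) (n : ℕ) :
    (∀ x, 0 ≤ (S.Ufun^[n] f) x) ∧ (∀ x, (S.Ufun^[n] f) x ≤ 1) := by
  induction n with
  | zero => exact ⟨h0, h1⟩
  | succ n ih =>
    rw [Function.iterate_succ_apply']
    refine ⟨fun x => Finset.sum_nonneg (fun e _ => mul_nonneg (S.p_nonneg e x) (ih.1 _)), fun x => ?_⟩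
    rw [← S.p_sum_one x]
    exact Finset.sum_le_sum (fun e _ => mul_le_of_le_one_right (S.p_nonneg e x) (ih.2 _))

lemma Ufun_iter_diff (S : CMS K N E) {f : K → ℝ} (h0 : ∀ x, 0 ≤ f x) (h1 : ∀ x, f x ≤ 1)
    {L : ℝ} (hL0 : 0 ≤ L) (hL : ∀ x y, f x - f y ≤ L * dist x y) (n : ℕ) :
    ∀ i, ∀ x ∈ S.Ks i, ∀ y ∈ S.Ks i, (S.Ufun^[n] f) x - (S.Ufun^[n] f) y ≤
      L * S.a ^ n * dist x y + 1 - S.overlap n x y := by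
  induction n with
  | zero => intro i x _ y _; simpa [overlap] using hL x y
  | succ n ih =>
    intro i x hx y hy
    rw [Function.iterate_succ_apply']
    set g := S.Ufun^[n] f
    have hb := S.Ufun_iter_bounds h0 h1 n
    simp only [Ufun, overlap]
    have ha := S.a_pos
    have key : ∀ e, S.p e x * g (S.w e x) - S.p e y * g (S.w e y) ≤
        L * S.a ^ n * (S.p e x * dist (S.w e x) (S.w e y)) + S.p e x
          - min (S.p e x) (S.p e y) * S.overlap n (S.w e x) (S.w e y) := by
      intro e
      set m := min (S.p e x) (S.p e y) with hm
      have hm0 : 0 ≤ m := le_min (S.p_nonneg e x) (S.p_nonneg e y)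
      have hmx : m ≤ S.p e x := min_le_left _ _
      have hmy : m ≤ S.p e y := min_le_right _ _
      have hgx := hb.2 (S.w e x)
      have hgy := hb.1 (S.w e y)
      by_cases he : S.ι e = i
      · subst he
        have h2 := ih _ _ (S.w_maps e hx) _ (S.w_maps e hy)
        have h3 := mul_le_mul_of_nonneg_left h2 hm0
        have h4 : (S.p e x - m) * g (S.w e x) ≤ (S.p e x - m) :=
          mul_le_of_le_one_right (by linarith) hgx
        have h5 : 0 ≤ (S.p e y - m) * g (S.w e y) := mul_nonneg (by linarith) hgy
        have h6 : m * (L * S.a ^ n * dist (S.w e x) (S.w e y)) ≤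
          S.p e x * (L * S.a ^ n * dist (S.w e x) (S.w e y)) :=
          mul_le_mul_of_nonneg_right hmx (by positivity)
        linarith
      · have hx0 : S.p e x = 0 := S.p_zero e x (fun h' => he (S.eq_of_mem h' hx))
        have hy0 : S.p e y = 0 := S.p_zero e y (fun h' => he (S.eq_of_mem h' hy))
        simp [hm, hx0, hy0]
    have hsum := Finset.sum_le_sum (fun e (_ : e ∈ Finset.univ) => key e)
    rw [Finset.sum_sub_distrib, Finset.sum_sub_distrib, Finset.sum_add_distrib, ← Finset.mul_sum,
      S.p_sum_one] at hsum
    have h1 := mul_le_mul_of_nonneg_left (S.contractive i x hx y hy) (show 0 ≤ L * S.a ^ n by positivity)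
    refine hsum.trans ?_
    have : L * S.a ^ n * (S.a * dist x y) = L * S.a ^ (n+1) * dist x y := by ring
    linarith

lemma measurable_Ufun (S : CMS K N E) {f : K → ℝ} (hf : Measurable f) : Measurable (S.Ufun f) := by
  unfold Ufun
  exact Finset.measurable_sum _ (fun e _ => (S.p_meas e).mul (hf.comp (S.w_meas e)))

lemma integral_Ufun_iter (S : CMS K N E) (ν : Measure K) [IsFiniteMeasure ν] (hinv : S.adjoint ν = ν)
    {f : K → ℝ} (hf : Measurable f) (h0 : ∀ x, 0 ≤ f x) (h1 : ∀ x, f x ≤ 1) (n : ℕ) :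
    Measurable (S.Ufun^[n] f) ∧ ∫ x, (S.Ufun^[n] f) x ∂ν = ∫ x, f x ∂ν := by
  induction n with
  | zero => exact ⟨hf, rfl⟩
  | succ n ih =>
    rw [Function.iterate_succ_apply']
    refine ⟨S.measurable_Ufun ih.1, ?_⟩
    rw [← ih.2]
    have hb := S.Ufun_iter_bounds h0 h1 n
    conv_rhs => rw [← hinv]
    rw [S.integral_adjoint ν ih.1 (C := 1)]
    intro x
    rw [abs_of_nonneg (hb.1 x)]; exact hb.2 x

lemma exists_small {ν : Measure K} [IsFiniteMeasure ν] {g : K → ℝ} (hg : Measurable g)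
    (h0 : ∀ x, 0 ≤ g x) (h1 : ∀ x, g x ≤ 1) {B : Set K} (hB : MeasurableSet B)
    {t : ℝ} (ht : ∫ x, g x ∂ν < t * ν.real B) : ∃ x ∈ B, g x ≤ t := by
  by_contra hcon
  push Not at hcon
  have hIntg : Integrable g ν := Integrable.of_bound (C := 1) hg.aestronglyMeasurable
    (Eventually.of_forall fun x => by rw [Real.norm_eq_abs, abs_of_nonneg (h0 x)]; exact h1 x)
  have : t * ν.real B ≤ ∫ x, g x ∂ν := by
    calc t * ν.real B = ∫ x in B, t ∂ν := by rw [setIntegral_const, smul_eq_mul, mul_comm]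
      _ ≤ ∫ x in B, g x ∂ν := by
          refine setIntegral_mono_on (by simp) hIntg.integrableOn hB (fun x hx => (hcon x hx).le)
      _ ≤ ∫ x, g x ∂ν := setIntegral_le_integral hIntg (Eventually.of_forall h0)
  linarith

/-- mutually singular nonzero invariant measures do not exist -/
lemma no_singular [BorelSpace K] (S : CMS K N E) (hirr : S.IrreducibleGraph)
    (hDini : ∀ e, DiniOn (S.p e) (S.Ks (S.ι e)))
    {δ : ℝ} (hδ : 0 < δ) (hp : ∀ e, ∀ x ∈ S.Ks (S.ι e), δ ≤ S.p e x) (i : Fin N)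
    (ν₁ ν₂ : Measure K) [IsFiniteMeasure ν₁] [IsFiniteMeasure ν₂]
    (h1 : ν₁ ≠ 0) (h2 : ν₂ ≠ 0) (hi1 : S.adjoint ν₁ = ν₁) (hi2 : S.adjoint ν₂ = ν₂)
    (s : Set K) (hs : MeasurableSet s) (hs1 : ν₁ sᶜ = 0) (hs2 : ν₂ s = 0) : False := by
  obtain ⟨z, hz⟩ := S.Ks_nonempty i
  -- choose a ball
  have hpos : ∀ ν : Measure K, ν (S.Ks i) ≠ 0 → ∀ᶠ R : ℕ in atTop,
      0 < ν (S.Ks i ∩ Metric.ball z R) := by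
    intro ν hν
    have hmono : Monotone (fun R : ℕ => S.Ks i ∩ Metric.ball z (R:ℝ)) := by
      intro a b hab
      exact Set.inter_subset_inter_right _ (Metric.ball_subset_ball (by exact_mod_cast hab))
    have ht := tendsto_measure_iUnion_atTop (μ := ν) hmono
    rw [← Set.inter_iUnion, Metric.iUnion_ball_nat, Set.inter_univ] at ht
    exact ht.eventually (lt_mem_nhds (pos_iff_ne_zero.2 hν))
  obtain ⟨R, ⟨hR1, hR2⟩, hR0⟩ := (((hpos ν₁ (S.pos_of_invariant hirr hδ hp ν₁ h1 hi1 i)).and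
    (hpos ν₂ (S.pos_of_invariant hirr hδ hp ν₂ h2 hi2 i))).and (eventually_gt_atTop 0)).exists
  have hR0' : (0:ℝ) < R := by exact_mod_cast hR0
  set B := S.Ks i ∩ Metric.ball z (R:ℝ) with hB
  have hBm : MeasurableSet B := (S.Ks_meas i).inter Metric.isOpen_ball.measurableSet
  have hb1 : 0 < ν₁.real B := ENNReal.toReal_pos hR1.ne' (measure_ne_top _ _)
  have hb2 : 0 < ν₂.real B := ENNReal.toReal_pos hR2.ne' (measure_ne_top _ _)
  -- overlap constant
  set c := Real.exp (-((∑' k : ℕ, S.modAll (4 * R * S.a ^ k)) / δ)) * (1/2) with hc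
  have hc0 : 0 < c := by positivity
  have hover : ∀ n, ∀ x ∈ B, ∀ y ∈ B, c ≤ S.overlap n x y := by
    intro n x hx y hy
    refine le_trans ?_ (S.overlap_ge hδ hp n (4 * R) (by positivity) i x hx.1 y hy.1)
    have hd : dist x y ≤ 2 * R := by
      have := dist_triangle_right x y z
      have h1 := Metric.mem_ball.1 hx.2
      have h2 := Metric.mem_ball.1 hy.2
      linarith
    refine mul_le_mul ?_ ?_ (by norm_num) (Real.exp_pos _).le
    · apply Real.exp_le_exp.2
      apply neg_le_neg
      apply div_le_div_of_nonneg_right _ hδ.le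
      exact (S.modAll_summable hDini (by positivity)).sum_le_tsum _ (fun k _ => S.modAll_nonneg _)
    · have : dist x y / (4 * R) ≤ 1/2 := by
        rw [div_le_iff₀ (by positivity)]; linarith
      linarith
  -- approximation of the indicator
  set q := min (ν₁.real B) (ν₂.real B) with hq
  have hq0 : 0 < q := lt_min hb1 hb2
  set ε := q * c / 4 with hε
  have hε0 : 0 < ε := by positivity
  obtain ⟨Fc, hFs, hFc, hFm⟩ := hs.exists_isClosed_diff_lt (μ := ν₁) (measure_ne_top _ _)
    (ε := ENNReal.ofReal ε) (by simpa using hε0)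
  have hF2 : ν₂ Fc = 0 := measure_mono_null hFs hs2
  obtain ⟨u, -, u_pos, u_lim⟩ := exists_seq_strictAnti_tendsto (0 : ℝ)
  have ht := tendsto_lintegral_thickenedIndicator_of_isClosed ν₂ hFc u_pos u_lim
  rw [hF2] at ht
  obtain ⟨m, hm⟩ := (ht.eventually (gt_mem_nhds (show (0:ℝ≥0∞) < ENNReal.ofReal ε by simpa using hε0))).exists
  set f : K → ℝ := fun x => ((thickenedIndicator (u_pos m) Fc x : NNReal) : ℝ) with hf
  have hlip := lipschitzWith_thickenedIndicator (u_pos m) Fc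
  have hfm : Measurable f := (NNReal.continuous_coe.comp hlip.continuous).measurable
  have hf0 : ∀ x, 0 ≤ f x := fun x => NNReal.coe_nonneg _
  have hf1 : ∀ x, f x ≤ 1 := fun x => by
    have := thickenedIndicator_le_one (u_pos m) Fc x
    exact_mod_cast this
  set L : ℝ := (((u m).toNNReal⁻¹ : NNReal) : ℝ) with hLdef
  have hL0 : 0 ≤ L := NNReal.coe_nonneg _
  have hL : ∀ x y, f x - f y ≤ L * dist x y := by
    intro x y
    have := hlip.dist_le_mul x y
    rw [NNReal.dist_eq] at this
    exact (le_abs_self _).trans this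
  have hfint2 : ∫ x, f x ∂ν₂ < ε := by
    rw [integral_eq_lintegral_of_nonneg_ae (Eventually.of_forall hf0) hfm.aestronglyMeasurable]
    rw [← ENNReal.toReal_ofReal hε0.le]
    refine (ENNReal.toReal_lt_toReal ?_ ENNReal.ofReal_ne_top).2 ?_
    · refine ne_top_of_lt (b := ENNReal.ofReal ε) ?_
      simpa [hf] using hm
    · simpa [hf] using hm
  have hfi : ∀ (ν : Measure K) [IsFiniteMeasure ν], Integrable f ν := fun ν _ =>
    Integrable.of_bound (C := 1) hfm.aestronglyMeasurable
      (Eventually.of_forall fun x => by rw [Real.norm_eq_abs, abs_of_nonneg (hf0 x)]; exact hf1 x)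
  have hfint1 : ∫ x, (1 - f x) ∂ν₁ < ε := by
    have hle : ∫ x, (1 - f x) ∂ν₁ ≤ ∫ x, Fcᶜ.indicator (fun _ => (1:ℝ)) x ∂ν₁ := by
      refine integral_mono ((integrable_const _).sub (hfi ν₁))
        ((integrable_const _).indicator hFc.measurableSet.compl) (fun x => ?_)
      by_cases hx : x ∈ Fc
      · have : f x = 1 := by
          simp only [hf]
          rw [thickenedIndicator_one (u_pos m) Fc hx]; rfl
        simp [hx, this]
      · simp [hx, hf0 x]
    refine lt_of_le_of_lt hle ?_
    rw [integral_indicator_const _ hFc.measurableSet.compl, smul_eq_mul, mul_one]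
    rw [Measure.real, ← ENNReal.toReal_ofReal hε0.le]
    refine (ENNReal.toReal_lt_toReal (measure_ne_top _ _) ENNReal.ofReal_ne_top).2 ?_
    refine lt_of_le_of_lt ?_ hFm
    calc ν₁ Fcᶜ ≤ ν₁ ((s \ Fc) ∪ sᶜ) := measure_mono (fun x hx => by
            by_cases h : x ∈ s
            · exact Or.inl ⟨h, hx⟩
            · exact Or.inr h)
      _ ≤ ν₁ (s \ Fc) + ν₁ sᶜ := measure_union_le _ _
      _ = ν₁ (s \ Fc) := by rw [hs1, add_zero]
  -- choose n
  have htend : Tendsto (fun n : ℕ => L * S.a ^ n * (2 * R)) atTop (𝓝 (L * 0 * (2 * R))) :=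
    ((tendsto_pow_atTop_nhds_zero_of_lt_one S.a_pos.le S.a_lt_one).const_mul L).mul_const _
  obtain ⟨n, hn⟩ := (htend.eventually (gt_mem_nhds (show L * 0 * (2 * R) < c / 2 by
    rw [mul_zero, zero_mul]; positivity))).exists
  have hb := S.Ufun_iter_bounds hf0 hf1 n
  have hI1 := S.integral_Ufun_iter ν₁ hi1 hfm hf0 hf1 n
  have hI2 := S.integral_Ufun_iter ν₂ hi2 hfm hf0 hf1 n
  have hgi : Integrable (S.Ufun^[n] f) ν₁ :=
    Integrable.of_bound (C := 1) hI1.1.aestronglyMeasurable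
      (Eventually.of_forall fun x => by rw [Real.norm_eq_abs, abs_of_nonneg (hb.1 x)]; exact hb.2 x)
  obtain ⟨x, hx, hxg⟩ := exists_small (ν := ν₁) (g := fun x => 1 - (S.Ufun^[n] f) x)
    (measurable_const.sub hI1.1) (fun x => by linarith [hb.2 x]) (fun x => by linarith [hb.1 x]) hBm
    (t := c / 4) (by
      rw [integral_sub (integrable_const _) hgi, hI1.2, ← integral_sub (integrable_const _) (hfi ν₁)]
      refine lt_of_lt_of_le hfint1 ?_
      have : q ≤ ν₁.real B := min_le_left _ _
      rw [hε]; nlinarith)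
  obtain ⟨y, hy, hyg⟩ := exists_small (ν := ν₂) (g := S.Ufun^[n] f) hI2.1 hb.1 hb.2 hBm
    (t := c / 4) (by
      rw [hI2.2]
      refine lt_of_lt_of_le hfint2 ?_
      have : q ≤ ν₂.real B := min_le_right _ _
      rw [hε]; nlinarith)
  have hfinal := S.Ufun_iter_diff hf0 hf1 hL0 hL n i x hx.1 y hy.1
  have hov := hover n x hx y hy
  have hd : dist x y < 2 * R := by
    have := dist_triangle_right x y z
    have h1 := Metric.mem_ball.1 hx.2
    have h2 := Metric.mem_ball.1 hy.2
    linarith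
  have ha := S.a_pos
  have : L * S.a ^ n * dist x y ≤ L * S.a ^ n * (2 * R) :=
    mul_le_mul_of_nonneg_left hd.le (by positivity)
  linarith

lemma adjoint_mono (S : CMS K N E) {ν ν' : Measure K} (h : ν ≤ ν') : S.adjoint ν ≤ S.adjoint ν' := by
  refine Measure.le_iff.2 (fun s hs => ?_)
  rw [adjoint_apply _ _ hs, adjoint_apply _ _ hs]
  exact lintegral_mono' h le_rfl

theorem unique_invariant [BorelSpace K] (S : CMS K N E) (hirr : S.IrreducibleGraph)
    (hDini : ∀ e, DiniOn (S.p e) (S.Ks (S.ι e)))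
    {δ : ℝ} (hδ : 0 < δ) (hp : ∀ e, ∀ x ∈ S.Ks (S.ι e), δ ≤ S.p e x) (i : Fin N)
    (μ₁ μ₂ : Measure K) [IsProbabilityMeasure μ₁] [IsProbabilityMeasure μ₂]
    (hi1 : S.adjoint μ₁ = μ₁) (hi2 : S.adjoint μ₂ = μ₂) : μ₁ = μ₂ := by
  obtain ⟨s, hs, hs1, hs2⟩ := hahn_decomposition μ₁ μ₂
  have hle1 : μ₂.restrict s ≤ μ₁.restrict s := by
    refine Measure.le_iff.2 (fun t ht => ?_)
    rw [Measure.restrict_apply ht, Measure.restrict_apply ht]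
    exact hs1 _ (ht.inter hs) Set.inter_subset_right
  have hle2 : μ₁.restrict sᶜ ≤ μ₂.restrict sᶜ := by
    refine Measure.le_iff.2 (fun t ht => ?_)
    rw [Measure.restrict_apply ht, Measure.restrict_apply ht]
    exact hs2 _ (ht.inter hs.compl) Set.inter_subset_right
  set ν₁ := μ₁.restrict s - μ₂.restrict s with hν1
  set ν₂ := μ₂.restrict sᶜ - μ₁.restrict sᶜ with hν2
  set lam := μ₂.restrict s + μ₁.restrict sᶜ with hlam
  have e1 : ν₁ + lam = μ₁ := by
    rw [hlam, ← add_assoc, Measure.sub_add_cancel_of_le hle1, Measure.restrict_add_restrict_compl hs]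
  have e2 : ν₂ + lam = μ₂ := by
    rw [hlam, add_comm (μ₂.restrict s), ← add_assoc, Measure.sub_add_cancel_of_le hle2, add_comm,
      Measure.restrict_add_restrict_compl hs]
  have hl1 : lam ≤ μ₁ := by rw [← e1]; exact Measure.le_add_left le_rfl
  have hl2 : lam ≤ μ₂ := by rw [← e2]; exact Measure.le_add_left le_rfl
  have hlinv : S.adjoint lam = lam := by
    have hle : S.adjoint lam ≤ lam := by
      refine Measure.le_iff.2 (fun t ht => ?_)
      have h1 := Measure.le_iff.1 ((S.adjoint_mono hl1).trans_eq hi1) (t ∩ sᶜ) (ht.inter hs.compl)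
      have h2 := Measure.le_iff.1 ((S.adjoint_mono hl2).trans_eq hi2) (t ∩ s) (ht.inter hs)
      rw [← measure_inter_add_diff t hs, hlam, Measure.add_apply, Measure.restrict_apply ht,
        Measure.restrict_apply ht, Set.diff_eq]
      exact add_le_add h2 h1
    haveI : IsFiniteMeasure (S.adjoint lam) := ⟨by rw [adjoint_univ]; exact measure_lt_top _ _⟩
    exact Measure.eq_of_le_of_measure_univ_eq hle (S.adjoint_univ lam)
  have cancel : ∀ a b c : Measure K, IsFiniteMeasure c → a + c = b + c → a = b := by
    intro a b c _ h
    ext t ht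
    have := congrArg (fun m => m t) h
    simp only [Measure.add_apply] at this
    exact (ENNReal.add_left_inj (measure_ne_top c t)).1 this
  have hn1 : S.adjoint ν₁ = ν₁ := by
    refine cancel _ _ lam inferInstance ?_
    conv_lhs => rw [← hlinv]
    rw [← S.adjoint_add, e1, hi1]
  have hn2 : S.adjoint ν₂ = ν₂ := by
    refine cancel _ _ lam inferInstance ?_
    conv_lhs => rw [← hlinv]
    rw [← S.adjoint_add, e2, hi2]
  have hmass : ν₁ Set.univ = ν₂ Set.univ := by
    have h1 := congrArg (fun m => m Set.univ) e1
    have h2 := congrArg (fun m => m Set.univ) e2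
    simp only [Measure.add_apply, measure_univ] at h1 h2
    rw [← h2] at h1
    exact (ENNReal.add_left_inj (measure_ne_top lam _)).1 h1
  by_cases h0 : ν₁ = 0
  · have h0' : ν₂ = 0 := by
      rw [← Measure.measure_univ_eq_zero, ← hmass, h0]; simp
    rw [← e1, ← e2, h0, h0']
  exfalso
  have h0' : ν₂ ≠ 0 := by
    intro h; apply h0
    rw [← Measure.measure_univ_eq_zero, hmass, h]; simp
  have hle1' : ν₁ ≤ μ₁.restrict s := Measure.sub_le
  have hle2' : ν₂ ≤ μ₂.restrict sᶜ := Measure.sub_le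
  refine S.no_singular hirr hDini hδ hp i ν₁ ν₂ h0 h0' hn1 hn2 s hs ?_ ?_
  · refine le_antisymm ((hle1' _).trans ?_) zero_le
    rw [Measure.restrict_apply hs.compl]; simp
  · refine le_antisymm ((hle2' _).trans ?_) zero_le
    rw [Measure.restrict_apply hs]; simp

end CMS
open MeasureTheory Filter Topology
open scoped ENNReal

namespace CMS

variable {K : Type*} [MetricSpace K] [MeasurableSpace K]
  {N : ℕ} {E : Type*} [Fintype E]

/-- Lyapunov function: distance to the base point of the own vertex set. -/
noncomputable def VE (S : CMS K N E) (xs : Fin N → K) (x : K) : ℝ≥0∞ := edist x (xs (S.vtx x))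

/-- additive constant in the drift inequality -/
noncomputable def cE (S : CMS K N E) (xs : Fin N → K) : ℝ≥0∞ :=
  ∑ e, edist (S.w e (xs (S.ι e))) (xs (S.τ e))

/-- moment bound -/
noncomputable def BE (S : CMS K N E) (xs : Fin N → K) : ℝ≥0∞ :=
  ∑' k : ℕ, ENNReal.ofReal S.a ^ k * S.cE xs

lemma cE_lt_top (S : CMS K N E) (xs : Fin N → K) : S.cE xs < ⊤ := by
  unfold cE
  exact ENNReal.sum_lt_top.2 (fun e _ => edist_lt_top _ _)

lemma BE_lt_top (S : CMS K N E) (xs : Fin N → K) : S.BE xs < ⊤ := by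
  unfold BE
  rw [ENNReal.tsum_mul_right, ENNReal.tsum_geometric]
  refine ENNReal.mul_lt_top ?_ (S.cE_lt_top xs)
  rw [ENNReal.inv_lt_top]
  refine tsub_pos_of_lt ?_
  rw [← ENNReal.ofReal_one]
  exact (ENNReal.ofReal_lt_ofReal_iff one_pos).2 S.a_lt_one

lemma BE_fix (S : CMS K N E) (xs : Fin N → K) :
    ENNReal.ofReal S.a * S.BE xs + S.cE xs = S.BE xs := by
  conv_rhs => unfold BE
  rw [tsum_eq_zero_add' ENNReal.summable, BE, ← ENNReal.tsum_mul_left, add_comm]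
  simp only [pow_zero, one_mul, pow_succ']
  congr 1
  refine tsum_congr (fun k => ?_)
  ring

lemma measurable_VE [BorelSpace K] (S : CMS K N E) (xs : Fin N → K) : Measurable (S.VE xs) := by
  have : S.VE xs = fun x => ∑ i, (S.Ks i).indicator (fun x => edist x (xs i)) x := by
    ext x
    rw [Finset.sum_eq_single (S.vtx x)]
    · rw [Set.indicator_of_mem (S.mem_vtx x), VE]
    · intro i _ hi
      rw [Set.indicator_of_notMem]
      intro hx
      exact hi (S.vtx_eq hx).symm
    · simp
  rw [this]
  refine Finset.measurable_sum _ (fun i _ => Measurable.indicator ?_ (S.Ks_meas i))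
  exact (continuous_id.edist continuous_const).measurable

lemma UE_VE_le (S : CMS K N E) (xs : Fin N → K) (hxs : ∀ i, xs i ∈ S.Ks i) (x : K) :
    S.UE (S.VE xs) x ≤ ENNReal.ofReal S.a * S.VE xs x + S.cE xs := by
  calc S.UE (S.VE xs) x ≤ ∑ e, (ENNReal.ofReal (S.p e x) * edist (S.w e x) (S.w e (xs (S.vtx x)))
        + edist (S.w e (xs (S.ι e))) (xs (S.τ e))) := by
        unfold UE
        refine Finset.sum_le_sum (fun e _ => ?_)
        by_cases h : S.p e x = 0
        · simp [h]
        have hx := S.mem_of_p_ne h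
        have hv := S.vtx_eq hx
        have hw := S.vtx_eq (S.w_maps e hx)
        rw [VE, hw, hv]
        calc ENNReal.ofReal (S.p e x) * edist (S.w e x) (xs (S.τ e))
            ≤ ENNReal.ofReal (S.p e x) * (edist (S.w e x) (S.w e (xs (S.ι e))) +
              edist (S.w e (xs (S.ι e))) (xs (S.τ e))) := by
              gcongr; exact edist_triangle _ _ _
          _ ≤ _ := by
              rw [mul_add]
              gcongr
              refine mul_le_of_le_one_left' ?_
              rw [← ENNReal.ofReal_one]
              exact ENNReal.ofReal_le_ofReal (S.p_le_one e x)
    _ ≤ _ := by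
        rw [Finset.sum_add_distrib]
        exact add_le_add (S.contractive_E (S.mem_vtx x) (hxs _)) le_rfl

lemma UE_mono (S : CMS K N E) {f g : K → ℝ≥0∞} (h : ∀ x, f x ≤ g x) (x : K) : S.UE f x ≤ S.UE g x := by
  unfold UE
  gcongr
  exact h _

lemma UE_const (S : CMS K N E) (c : ℝ≥0∞) (x : K) : S.UE (fun _ => c) x = c := by
  unfold UE
  rw [← Finset.sum_mul, ofReal_sum_p, one_mul]

lemma UE_affine (S : CMS K N E) (c d : ℝ≥0∞) (f : K → ℝ≥0∞) (x : K) :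
    S.UE (fun y => c * f y + d) x = c * S.UE f x + d := by
  conv_rhs => rw [← S.UE_const d x]
  unfold UE
  rw [Finset.mul_sum, ← Finset.sum_add_distrib]
  refine Finset.sum_congr rfl (fun e _ => ?_)
  ring

theorem moment [BorelSpace K] (S : CMS K N E) (xs : Fin N → K) (hxs : ∀ i, xs i ∈ S.Ks i)
    (μ : Measure K) [IsProbabilityMeasure μ] (hμ : S.adjoint μ = μ) :
    ∫⁻ x, S.VE xs x ∂μ ≤ S.BE xs := by
  have hV := S.measurable_VE xs
  have key : ∀ R : ℝ≥0∞, ∀ n : ℕ, ∫⁻ x, min (S.VE xs x) R ∂μ ≤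
      ∫⁻ x, min (ENNReal.ofReal S.a ^ n * S.VE xs x +
        ∑ k ∈ Finset.range n, ENNReal.ofReal S.a ^ k * S.cE xs) R ∂μ := by
    intro R n
    induction n with
    | zero => simp
    | succ n ih =>
      refine ih.trans ?_
      conv_lhs => rw [← hμ]
      rw [lintegral_adjoint]
      · refine lintegral_mono (fun x => ?_)
        refine le_min ?_ ?_
        · refine (S.UE_mono (fun y => min_le_left _ _) x).trans ?_
          rw [UE_affine]
          calc _ ≤ ENNReal.ofReal S.a ^ n * (ENNReal.ofReal S.a * S.VE xs x + S.cE xs) + _ := by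
                gcongr; exact S.UE_VE_le xs hxs x
            _ = _ := by
              rw [Finset.sum_range_succ]; ring
        · refine (S.UE_mono (fun y => min_le_right _ _) x).trans ?_
          rw [UE_const]
      · fun_prop
  have key2 : ∀ R : ℝ≥0∞, R ≠ ⊤ → ∫⁻ x, min (S.VE xs x) R ∂μ ≤ S.BE xs := by
    intro R hR
    have hl : Tendsto (fun n : ℕ => ∫⁻ x, min (ENNReal.ofReal S.a ^ n * S.VE xs x + S.BE xs) R ∂μ)
        atTop (𝓝 (∫⁻ _, min (S.BE xs) R ∂μ)) := by
      refine tendsto_lintegral_of_dominated_convergence (fun _ => R) ?_ ?_ ?_ ?_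
      · intro n; fun_prop
      · intro n; exact Eventually.of_forall (fun x => min_le_right _ _)
      · simp [hR]
      · refine Eventually.of_forall (fun x => ?_)
        have h0 : Tendsto (fun n : ℕ => ENNReal.ofReal S.a ^ n) atTop (𝓝 0) := by
          refine ENNReal.tendsto_pow_atTop_nhds_zero_of_lt_one ?_
          rw [← ENNReal.ofReal_one]
          exact (ENNReal.ofReal_lt_ofReal_iff one_pos).2 S.a_lt_one
        have h1 : Tendsto (fun n : ℕ => ENNReal.ofReal S.a ^ n * S.VE xs x) atTop (𝓝 (0 * S.VE xs x)) :=
          ENNReal.Tendsto.mul_const h0 (Or.inr (edist_ne_top _ _))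
        have h2 := (h1.add_const (S.BE xs)).min (tendsto_const_nhds (x := R))
        simpa using h2
    refine (ge_of_tendsto hl (Eventually.of_forall (fun n => ?_))).trans ?_
    · refine (key R n).trans (lintegral_mono (fun x => ?_))
      gcongr
      exact ENNReal.sum_le_tsum _
    · simp
  calc ∫⁻ x, S.VE xs x ∂μ = ∫⁻ x, liminf (fun n : ℕ => min (S.VE xs x) n) atTop ∂μ := by
        refine lintegral_congr (fun x => ?_)
        have : Tendsto (fun n : ℕ => min (S.VE xs x) (n : ℝ≥0∞)) atTop (𝓝 (min (S.VE xs x) ⊤)) :=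
          tendsto_const_nhds.min ENNReal.tendsto_nat_nhds_top
        rw [this.liminf_eq]; simp
    _ ≤ liminf (fun n : ℕ => ∫⁻ x, min (S.VE xs x) n ∂μ) atTop :=
        lintegral_liminf_le (fun n => by fun_prop)
    _ ≤ liminf (fun n : ℕ => S.BE xs) atTop :=
        liminf_le_liminf (Eventually.of_forall (fun n => key2 n (by simp)))
    _ = _ := by simp

lemma iter_moment [BorelSpace K] (S : CMS K N E) (xs : Fin N → K) (hxs : ∀ i, xs i ∈ S.Ks i) (i : Fin N)
    (k : ℕ) : ∫⁻ x, S.VE xs x ∂((S.adjoint)^[k] (Measure.dirac (xs i))) ≤ S.BE xs := by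
  induction k with
  | zero =>
    simp [lintegral_dirac' _ (S.measurable_VE xs), VE, S.vtx_eq (hxs i)]
  | succ k ih =>
    rw [Function.iterate_succ_apply', lintegral_adjoint _ _ (S.measurable_VE xs)]
    have hprob : ∀ k, IsProbabilityMeasure ((S.adjoint)^[k] (Measure.dirac (xs i))) := by
      intro k
      induction k with
      | zero => simp only [Function.iterate_zero, id]; infer_instance
      | succ k ih => rw [Function.iterate_succ_apply']; infer_instance
    calc _ ≤ ∫⁻ x, (ENNReal.ofReal S.a * S.VE xs x + S.cE xs) ∂((S.adjoint)^[k] (Measure.dirac (xs i))) :=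
          lintegral_mono (fun x => S.UE_VE_le xs hxs x)
      _ = ENNReal.ofReal S.a * ∫⁻ x, S.VE xs x ∂((S.adjoint)^[k] (Measure.dirac (xs i))) + S.cE xs := by
          rw [lintegral_add_right _ measurable_const, lintegral_const_mul _ (S.measurable_VE xs)]
          simp
      _ ≤ ENNReal.ofReal S.a * S.BE xs + S.cE xs := by gcongr
      _ = _ := S.BE_fix xs

theorem exists_invariant [BorelSpace K] (S : CMS K N E)
    (hProper : ∀ A : Set K, Bornology.IsBounded A → IsCompact (closure A))
    (hOpen : ∀ i, IsOpen (S.Ks i))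
    (hDini : ∀ e, DiniOn (S.p e) (S.Ks (S.ι e)))
    {δ : ℝ} (hδ : 0 < δ) (hp : ∀ e, ∀ x ∈ S.Ks (S.ι e), δ ≤ S.p e x)
    (xs : Fin N → K) (hxs : ∀ i, xs i ∈ S.Ks i) (i0 : Fin N) :
    ∃ μ : Measure K, IsProbabilityMeasure μ ∧ S.adjoint μ = μ := by
  set κ : ℕ → Measure K := fun k => (S.adjoint)^[k] (Measure.dirac (xs i0)) with hκ
  have hprob : ∀ k, IsProbabilityMeasure (κ k) := by
    intro k
    induction k with
    | zero => simp only [hκ, Function.iterate_zero, id]; infer_instance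
    | succ k ih => simp only [hκ] at ih ⊢; rw [Function.iterate_succ_apply']; infer_instance
  have hsucc : ∀ k, S.adjoint (κ k) = κ (k+1) := fun k => by
    simp only [hκ]; rw [Function.iterate_succ_apply']
  set ν : ℕ → Measure K := fun n => ((n : ℝ≥0∞)+1)⁻¹ • ∑ k ∈ Finset.range (n+1), κ k with hν
  have hn0 : ∀ n : ℕ, ((n : ℝ≥0∞)+1) ≠ 0 := fun n => by simp
  have hnt : ∀ n : ℕ, ((n : ℝ≥0∞)+1) ≠ ⊤ := fun n => by simp
  have hνprob : ∀ n, IsProbabilityMeasure (ν n) := by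
    intro n
    refine ⟨?_⟩
    simp only [hν, Measure.smul_apply, Measure.coe_finsetSum, Finset.sum_apply, measure_univ, smul_eq_mul]
    simp only [Finset.sum_const, Finset.card_range, nsmul_eq_mul, mul_one, Nat.cast_add, Nat.cast_one]
    exact ENNReal.inv_mul_cancel (hn0 n) (hnt n)
  have hνV : ∀ n, ∫⁻ x, S.VE xs x ∂(ν n) ≤ S.BE xs := by
    intro n
    simp only [hν, lintegral_smul_measure, lintegral_finset_sum_measure, smul_eq_mul]
    calc _ ≤ ((n : ℝ≥0∞)+1)⁻¹ * ∑ k ∈ Finset.range (n+1), S.BE xs := by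
          gcongr with k hk
          exact S.iter_moment xs hxs i0 k
      _ = _ := by
          simp only [Finset.sum_const, Finset.card_range, nsmul_eq_mul, Nat.cast_add, Nat.cast_one]
          rw [← mul_assoc, ENNReal.inv_mul_cancel (hn0 n) (hnt n), one_mul]
  set P : ℕ → ProbabilityMeasure K := fun n => ⟨ν n, hνprob n⟩ with hP
  have htight : IsTightMeasureSet {((μ : ProbabilityMeasure K) : Measure K) | μ ∈ Set.range P} := by
    rw [isTightMeasureSet_iff_exists_isCompact_measure_compl_le]
    intro ε hε
    obtain ⟨R, hR0, hR⟩ : ∃ R : ℝ, 0 < R ∧ S.BE xs / ENNReal.ofReal R ≤ ε := by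
      by_cases hεt : ε = ⊤
      · exact ⟨1, one_pos, by simp [hεt]⟩
      refine ⟨(S.BE xs / ε).toReal + 1, by positivity, ?_⟩
      have hfin : S.BE xs / ε ≠ ⊤ := ENNReal.div_ne_top (S.BE_lt_top xs).ne hε.ne'
      refine ENNReal.div_le_of_le_mul ?_
      calc S.BE xs = ε * (S.BE xs / ε) := by
            rw [ENNReal.mul_div_cancel hε.ne' hεt]
        _ ≤ _ := by
            gcongr
            rw [ENNReal.le_ofReal_iff_toReal_le hfin (by positivity)]
            linarith
    refine ⟨closure {x | S.VE xs x ≤ ENNReal.ofReal R}, hProper _ ?_, ?_⟩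
    · have : {x | S.VE xs x ≤ ENNReal.ofReal R} ⊆ ⋃ i, Metric.closedBall (xs i) R := by
        intro x hx
        refine Set.mem_iUnion.2 ⟨S.vtx x, ?_⟩
        simp only [Set.mem_setOf_eq, VE, edist_dist] at hx
        exact (ENNReal.ofReal_le_ofReal_iff hR0.le).1 hx
      refine Bornology.IsBounded.subset ?_ this
      exact (Bornology.isBounded_iUnion).2 (fun i => Metric.isBounded_closedBall)
    · rintro m ⟨_, ⟨n, rfl⟩, rfl⟩
      have hsub : (closure {x | S.VE xs x ≤ ENNReal.ofReal R})ᶜ ⊆ {x | ENNReal.ofReal R ≤ S.VE xs x} := by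
        intro x hx
        by_contra h
        have h' : S.VE xs x ≤ ENNReal.ofReal R := (not_le.1 (by simpa using h)).le
        exact hx (subset_closure (by simpa using h'))
      refine (measure_mono hsub).trans (le_trans ?_ hR)
      refine (meas_ge_le_lintegral_div (S.measurable_VE xs).aemeasurable (by simpa using hR0)
        ENNReal.ofReal_ne_top).trans ?_
      gcongr
      exact hνV n
  have hcomp := isCompact_closure_of_isTightMeasureSet htight
  let G : Ultrafilter ℕ := Filter.hyperfilter ℕ
  obtain ⟨μ, -, hμ⟩ := hcomp.ultrafilter_le_nhds (G.map P) (by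
    rw [le_principal_iff]
    exact Filter.mem_of_superset (Filter.range_mem_map) subset_closure)
  have hμ' : Tendsto P G (𝓝 μ) := hμ
  have hG : (G : Filter ℕ) ≤ atTop := by
    rw [← Nat.cofinite_eq_atTop]; exact Filter.hyperfilter_le_cofinite
  refine ⟨μ, inferInstance, ?_⟩
  refine ext_of_forall_integral_eq_of_IsFiniteMeasure (fun f => ?_)
  have hfb : ∀ x, |f x| ≤ ‖f‖ := fun x => f.norm_coe_le_norm x
  have hfm : Measurable f := f.continuous.measurable
  rw [S.integral_adjoint _ hfm hfb]
  let Uf : BoundedContinuousFunction K ℝ := BoundedContinuousFunction.ofNormedAddCommGroup (S.Ufun f)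
    (S.continuous_Ufun hOpen hDini hδ hp f.continuous) ‖f‖ (fun x => S.abs_Ufun_le hfb x)
  rw [ProbabilityMeasure.tendsto_iff_forall_integral_tendsto] at hμ'
  have h1 := hμ' f
  have h2 := hμ' Uf
  have h3 : Tendsto (fun n => ∫ x, Uf x ∂(P n : Measure K) - ∫ x, f x ∂(P n : Measure K)) G (𝓝 0) := by
    refine Tendsto.mono_left ?_ hG
    have hIntg : ∀ k, Integrable f (κ k) := fun k =>
      Integrable.of_bound hfm.aestronglyMeasurable ‖f‖ (Eventually.of_forall hfb)
    have hUint : ∀ k, Integrable Uf (κ k) := fun k =>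
      Integrable.of_bound Uf.continuous.measurable.aestronglyMeasurable ‖f‖
        (Eventually.of_forall (S.abs_Ufun_le hfb))
    have hval : ∀ n, ∫ x, Uf x ∂(P n : Measure K) - ∫ x, f x ∂(P n : Measure K) =
        ((n : ℝ)+1)⁻¹ * (∫ x, f x ∂(κ (n+1)) - ∫ x, f x ∂(κ 0)) := by
      intro n
      simp only [hP, hν, ProbabilityMeasure.coe_mk]
      rw [integral_smul_measure, integral_smul_measure, integral_finset_sum_measure (fun k _ => hIntg k),
        integral_finset_sum_measure (fun k _ => hUint k)]
      have : ∀ k, ∫ x, Uf x ∂(κ k) = ∫ x, f x ∂(κ (k+1)) := by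
        intro k
        rw [← hsucc, S.integral_adjoint _ hfm hfb]
        rfl
      simp only [this]
      rw [← smul_sub, ← Finset.sum_sub_distrib, Finset.sum_range_sub (fun k => ∫ x, f x ∂(κ k))]
      rw [ENNReal.toReal_inv, smul_eq_mul]
      congr 2
    refine squeeze_zero_norm (a := fun n : ℕ => ((n : ℝ)+1)⁻¹ * (2 * ‖f‖)) (fun n => ?_) ?_
    · rw [hval, norm_mul, Real.norm_of_nonneg (by positivity)]
      gcongr
      have hb : ∀ k, |∫ x, f x ∂(κ k)| ≤ ‖f‖ := by
        intro k
        have := norm_integral_le_of_norm_le_const (μ := κ k) (f := f) (C := ‖f‖) (Eventually.of_forall hfb)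
        simpa using this
      have h1 := abs_le.1 (hb (n+1))
      have h0 := abs_le.1 (hb 0)
      rw [Real.norm_eq_abs, abs_le]
      constructor <;> linarith
    · have := (tendsto_one_div_add_atTop_nhds_zero_nat (𝕜 := ℝ)).mul_const (2 * ‖f‖)
      simpa using this
  have h4 := tendsto_nhds_unique (h2.sub h1) h3
  exact sub_eq_zero.1 h4

end CMS
open MeasureTheory Filter Topology
open scoped ENNReal

namespace CMS

variable {K : Type*} [MetricSpace K] [MeasurableSpace K]
  {N : ℕ} {E : Type*} [Fintype E]

lemma integrable_p (S : CMS K N E) (μ : Measure K) [IsFiniteMeasure μ] (e : E) :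
    Integrable (S.p e) μ :=
  Integrable.of_bound (S.p_meas e).aestronglyMeasurable 1
    (Eventually.of_forall (fun x => by
      rw [Real.norm_of_nonneg (S.p_nonneg e x)]; exact S.p_le_one e x))

lemma integral_p_pos (S : CMS K N E) (hirr : S.IrreducibleGraph)
    {δ : ℝ} (hδ : 0 < δ) (hp : ∀ e, ∀ x ∈ S.Ks (S.ι e), δ ≤ S.p e x)
    (μ : Measure K) [IsProbabilityMeasure μ] (hinv : S.adjoint μ = μ) (e : E) :
    0 < ∫ x, S.p e x ∂μ := by
  have h0 := S.pos_of_invariant hirr hδ hp μ (IsProbabilityMeasure.ne_zero μ) hinv (S.ι e)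
  rw [integral_pos_iff_support_of_nonneg (S.p_nonneg e) (S.integrable_p μ e)]
  refine lt_of_lt_of_le (pos_iff_ne_zero.2 h0) (measure_mono (fun x hx => ?_))
  exact (hδ.trans_le (hp e x hx)).ne'

theorem discrete_E [MeasurableSpace E] (S : CMS K N E) (hirr : S.IrreducibleGraph)
    {δ : ℝ} (hδ : 0 < δ) (hp : ∀ e, ∀ x ∈ S.Ks (S.ι e), δ ≤ S.p e x)
    (μ : Measure K) [IsProbabilityMeasure μ] (hinv : S.adjoint μ = μ) (M : Measure (ℤ → E))
    (hM : S.IsGMarkovMeasure μ M) : MeasurableSingletonClass E := by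
  classical
  obtain ⟨hMp, hM⟩ := hM
  have hM1 : ∀ e, M {σ | σ 0 = e} = ENNReal.ofReal (∫ x, S.p e x ∂μ) := by
    intro e
    have := hM 0 [e]
    simpa [cylWeight, Fin.forall_fin_one] using this
  have hsep : ∀ e e' : E, e ≠ e' → ∃ A : Set E, MeasurableSet A ∧ e ∈ A ∧ e' ∉ A := by
    intro e e' hne
    by_contra hcon
    push Not at hcon
    have hsub : {σ : ℤ → E | σ 0 = e'} ⊆ toMeasurable M {σ | σ 0 = e} := by
      intro σ hσ
      have hσ : σ 0 = e' := hσ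
      let g : E → (ℤ → E) := fun c => Function.update σ 0 c
      have hg : Measurable g := by
        rw [measurable_pi_iff]
        intro j
        by_cases hj : j = 0
        · subst hj; simp only [g, Function.update_self]; exact measurable_id
        · simp [g, Function.update_of_ne hj]
      have h1 := hcon (g ⁻¹' (toMeasurable M {σ | σ 0 = e})) (hg (measurableSet_toMeasurable _ _)) (by
        refine subset_toMeasurable _ _ ?_
        simp [g])
      have : g e' = σ := by simp [g, ← hσ]
      rw [Set.mem_preimage, this] at h1
      exact h1
    have hcover : (Set.univ : Set (ℤ → E)) ⊆ ⋃ f ∈ Finset.univ.erase e', toMeasurable M {σ | σ 0 = f} := by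
      intro σ _
      simp only [Set.mem_iUnion]
      by_cases h : σ 0 = e'
      · exact ⟨e, by simp [hne], hsub h⟩
      · exact ⟨σ 0, by simp [h], subset_toMeasurable _ _ rfl⟩
    have h1 := (measure_mono (μ := M) hcover).trans (measure_biUnion_finset_le _ _)
    simp only [measure_univ, measure_toMeasurable, hM1] at h1
    rw [← ENNReal.ofReal_sum_of_nonneg (fun f _ => integral_nonneg (S.p_nonneg f)),
      ENNReal.one_le_ofReal] at h1
    have h2 : ∑ f, ∫ x, S.p f x ∂μ = 1 := by
      rw [← integral_finsetSum _ (fun f _ => S.integrable_p μ f)]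
      simp [S.p_sum_one]
    rw [← Finset.add_sum_erase _ _ (Finset.mem_univ e')] at h2
    have h3 := S.integral_p_pos hirr hδ hp μ hinv e'
    linarith
  choose! A hA using hsep
  refine ⟨fun e => ?_⟩
  have : {e} = ⋂ e' ∈ Finset.univ.erase e, A e e' := by
    ext f
    simp only [Set.mem_singleton_iff, Set.mem_iInter, Finset.mem_erase, Finset.mem_univ, and_true]
    constructor
    · rintro rfl e' he'
      exact (hA _ e' (Ne.symm he')).2.1
    · intro h
      by_contra hf
      exact (hA e f (Ne.symm hf)).2.2 (h f hf)
  rw [this]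
  refine Finset.measurableSet_biInter _ (fun e' he' => ?_)
  exact (hA e e' (by simpa [eq_comm] using he')).1

end CMS
open MeasureTheory Filter Topology
open scoped ENNReal

section Words

variable {E : Type*} [Fintype E]

/-- sum over all words of length `n` -/
def ws {β : Type*} [AddCommMonoid β] (n : ℕ) (g : List E → β) : β :=
  ∑ es : Fin n → E, g (List.ofFn es)

lemma ws_zero {β : Type*} [AddCommMonoid β] (g : List E → β) : ws 0 g = g [] := by
  simp [ws]

lemma ws_cons {β : Type*} [AddCommMonoid β] (n : ℕ) (g : List E → β) :
    ws (n+1) g = ∑ e, ws n (fun w => g (e :: w)) := by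
  unfold ws
  rw [← Equiv.sum_comp (Fin.consEquiv (fun _ : Fin (n+1) => E)), Fintype.sum_prod_type]
  refine Finset.sum_congr rfl (fun e _ => Finset.sum_congr rfl (fun es _ => ?_))
  congr 1
  exact List.ofFn_cons e es

lemma ws_snoc {β : Type*} [AddCommMonoid β] (n : ℕ) (g : List E → β) :
    ws (n+1) g = ws n (fun w => ∑ e, g (w ++ [e])) := by
  induction n generalizing g with
  | zero => rw [ws_cons]; simp [ws_zero]
  | succ n ih =>
    rw [ws_cons, ws_cons]
    refine Finset.sum_congr rfl (fun e _ => ?_)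
    rw [ih]; rfl

lemma ws_congr {β : Type*} [AddCommMonoid β] {n : ℕ} {g g' : List E → β}
    (h : ∀ w : List E, w.length = n → g w = g' w) : ws n g = ws n g' := by
  unfold ws
  exact Finset.sum_congr rfl (fun es _ => h _ (by simp))

lemma ws_mono {n : ℕ} {g g' : List E → ℝ}
    (h : ∀ w : List E, w.length = n → g w ≤ g' w) : ws n g ≤ ws n g' := by
  unfold ws
  exact Finset.sum_le_sum (fun es _ => h _ (by simp))

lemma ws_mono_E {n : ℕ} {g g' : List E → ℝ≥0∞}
    (h : ∀ w : List E, w.length = n → g w ≤ g' w) : ws n g ≤ ws n g' := by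
  unfold ws
  exact Finset.sum_le_sum (fun es _ => h _ (by simp))

lemma ws_add {β : Type*} [AddCommMonoid β] (n : ℕ) (g g' : List E → β) :
    ws n (fun w => g w + g' w) = ws n g + ws n g' := by
  unfold ws; exact Finset.sum_add_distrib

lemma ws_sub (n : ℕ) (g g' : List E → ℝ) :
    ws n (fun w => g w - g' w) = ws n g - ws n g' := by
  unfold ws; exact Finset.sum_sub_distrib _ _

lemma abs_ws_le (n : ℕ) (g : List E → ℝ) : |ws n g| ≤ ws n (fun w => |g w|) := by
  unfold ws; exact Finset.abs_sum_le_sum_abs _ _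

lemma ws_mul_left {β : Type*} [CommSemiring β] (n : ℕ) (c : β) (g : List E → β) :
    ws n (fun w => c * g w) = c * ws n g := by
  unfold ws; rw [Finset.mul_sum]

lemma ws_nonneg {n : ℕ} {g : List E → ℝ} (h : ∀ w, 0 ≤ g w) : 0 ≤ ws n g := by
  unfold ws; exact Finset.sum_nonneg (fun _ _ => h _)

/-- window of a sequence -/
def win (m : ℤ) (n : ℕ) (σ : ℤ → E) : List E := List.ofFn (fun j : Fin n => σ (m + (j : ℕ)))

lemma win_length (m : ℤ) (n : ℕ) (σ : ℤ → E) : (win m n σ).length = n := by simp [win]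

lemma win_cons (m : ℤ) (n : ℕ) (σ : ℤ → E) : win m (n+1) σ = σ m :: win (m+1) n σ := by
  unfold win
  rw [List.ofFn_succ]
  simp only [Fin.val_zero, Nat.cast_zero, add_zero, Fin.val_succ, Nat.cast_add, Nat.cast_one]
  congr 2
  ext j
  congr 1
  ring

lemma win_snoc (m : ℤ) (n : ℕ) (σ : ℤ → E) : win m (n+1) σ = win m n σ ++ [σ (m + n)] := by
  unfold win
  rw [List.ofFn_succ']
  simp

lemma win_shift (m k : ℤ) (n : ℕ) (σ : ℤ → E) : win m n (shiftZ E k σ) = win (m+k) n σ := by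
  unfold win shiftZ
  congr 1
  ext j
  congr 1
  ring

/-- cylinder set -/
def Cyl (m : ℤ) (w : List E) : Set (ℤ → E) := {σ | ∀ j : Fin w.length, σ (m + (j : ℕ)) = w.get j}

lemma mem_Cyl {m : ℤ} {w : List E} {σ : ℤ → E} : σ ∈ Cyl m w ↔ win m w.length σ = w := by
  unfold Cyl win
  rw [Set.mem_setOf]
  constructor
  · intro h
    simp only [h, List.ofFn_get]
  · intro h j
    have h2 : List.ofFn (fun j : Fin w.length => σ (m + (j : ℕ))) = List.ofFn w.get := by
      rw [h, List.ofFn_get]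
    exact congrFun (List.ofFn_injective h2) j

lemma mem_Cyl_nil {m : ℤ} {σ : ℤ → E} : σ ∈ Cyl m ([] : List E) := by
  rw [mem_Cyl]; rfl

lemma mem_Cyl_cons {m : ℤ} {e : E} {w : List E} {σ : ℤ → E} :
    σ ∈ Cyl m (e :: w) ↔ σ m = e ∧ σ ∈ Cyl (m+1) w := by
  rw [mem_Cyl, mem_Cyl, List.length_cons, win_cons, List.cons.injEq]

lemma mem_Cyl_append {m : ℤ} {w v : List E} {σ : ℤ → E} :
    σ ∈ Cyl m (w ++ v) ↔ σ ∈ Cyl m w ∧ σ ∈ Cyl (m + w.length) v := by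
  induction w generalizing m with
  | nil => simp [mem_Cyl_nil]
  | cons e w ih =>
    rw [List.cons_append, mem_Cyl_cons, mem_Cyl_cons, ih, and_assoc, List.length_cons]
    have : m + 1 + (w.length : ℤ) = m + ((w.length + 1 : ℕ) : ℤ) := by push_cast; ring
    rw [this]

lemma mem_Cyl_single {m : ℤ} {e : E} {σ : ℤ → E} : σ ∈ Cyl m [e] ↔ σ m = e := by
  rw [mem_Cyl_cons]; simp [mem_Cyl_nil]

variable [MeasurableSpace E] [MeasurableSingletonClass E]

lemma measurable_coord (k : ℤ) : Measurable (fun σ : ℤ → E => σ k) := measurable_pi_apply k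

lemma measurableSet_Cyl (m : ℤ) (w : List E) : MeasurableSet (Cyl m w) := by
  have : Cyl m w = ⋂ j : Fin w.length, (fun σ : ℤ → E => σ (m + (j : ℕ))) ⁻¹' {w.get j} := by
    ext σ; simp [Cyl]
  rw [this]
  exact MeasurableSet.iInter (fun j => measurable_coord _ (measurableSet_singleton _))

/-- measurability of functions of a window -/
lemma measurable_win {β : Type*} [MeasurableSpace β] (m : ℤ) (n : ℕ) (g : List E → β) :
    Measurable (fun σ : ℤ → E => g (win m n σ)) := by
  have h1 : Measurable (fun σ : ℤ → E => fun j : Fin n => σ (m + (j : ℕ))) :=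
    measurable_pi_iff.2 (fun j => measurable_coord _)
  have h2 : Measurable (fun es : Fin n → E => g (List.ofFn es)) := measurable_of_countable _
  exact h2.comp h1

lemma map_win (Λ : Measure (ℤ → E)) (m : ℤ) (n : ℕ) (es : Fin n → E) :
    Λ.map (fun σ : ℤ → E => fun j : Fin n => σ (m + (j : ℕ))) {es} = Λ (Cyl m (List.ofFn es)) := by
  have h1 : Measurable (fun σ : ℤ → E => fun j : Fin n => σ (m + (j : ℕ))) :=
    measurable_pi_iff.2 (fun j => measurable_coord _)
  rw [Measure.map_apply h1 (measurableSet_singleton _)]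
  congr 1
  ext σ
  rw [mem_Cyl, List.length_ofFn, Set.mem_preimage, Set.mem_singleton_iff]
  exact (List.ofFn_injective (α := E) (n := n)).eq_iff.symm

lemma lintegral_win (Λ : Measure (ℤ → E)) (m : ℤ) (n : ℕ) (g : List E → ℝ≥0∞) :
    ∫⁻ σ, g (win m n σ) ∂Λ = ws n (fun w => Λ (Cyl m w) * g w) := by
  have h1 : Measurable (fun σ : ℤ → E => fun j : Fin n => σ (m + (j : ℕ))) :=
    measurable_pi_iff.2 (fun j => measurable_coord _)
  have h2 : Measurable (fun es : Fin n → E => g (List.ofFn es)) := measurable_of_countable _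
  have := lintegral_map (μ := Λ) h2 h1
  unfold win ws
  rw [← this, lintegral_fintype]
  refine Finset.sum_congr rfl (fun es _ => ?_)
  rw [map_win, mul_comm]

lemma integral_win (Λ : Measure (ℤ → E)) [IsFiniteMeasure Λ] (m : ℤ) (n : ℕ) (g : List E → ℝ) :
    ∫ σ, g (win m n σ) ∂Λ = ws n (fun w => Λ.real (Cyl m w) * g w) := by
  have h1 : Measurable (fun σ : ℤ → E => fun j : Fin n => σ (m + (j : ℕ))) :=
    measurable_pi_iff.2 (fun j => measurable_coord _)
  have h2 : Measurable (fun es : Fin n → E => g (List.ofFn es)) := measurable_of_countable _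
  have := integral_map (μ := Λ) h1.aemeasurable (f := fun es : Fin n → E => g (List.ofFn es))
    h2.aestronglyMeasurable
  unfold win ws
  rw [← this, integral_fintype Integrable.of_finite]
  refine Finset.sum_congr rfl (fun es _ => ?_)
  rw [Measure.real, map_win, smul_eq_mul]; rfl

lemma sum_inter_coord (Λ : Measure (ℤ → E)) [IsFiniteMeasure Λ] (A : Set (ℤ → E))
    (k : ℤ) : ∑ e, Λ.real ({σ | σ k = e} ∩ A) = Λ.real A := by
  have hm : ∀ e, MeasurableSet ((fun σ : ℤ → E => σ k) ⁻¹' {e}) := fun e =>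
    measurable_coord k (measurableSet_singleton e)
  have h := sum_measureReal_preimage_singleton (μ := Λ.restrict A) Finset.univ
    (f := fun σ : ℤ → E => σ k) (fun e _ => hm e)
  simp only [Finset.coe_univ, Set.preimage_univ] at h
  rw [measureReal_restrict_apply MeasurableSet.univ, Set.univ_inter] at h
  rw [← h]
  refine Finset.sum_congr rfl (fun e _ => ?_)
  rw [measureReal_restrict_apply (hm e)]
  rfl

lemma sum_snoc_Cyl (Λ : Measure (ℤ → E)) [IsFiniteMeasure Λ] (m : ℤ) (w : List E) :
    ∑ e, Λ.real (Cyl m (w ++ [e])) = Λ.real (Cyl m w) := by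
  rw [← sum_inter_coord Λ (Cyl m w) (m + w.length)]
  refine Finset.sum_congr rfl (fun e _ => ?_)
  congr 1
  ext σ
  rw [mem_Cyl_append, mem_Cyl_single, and_comm]; rfl

lemma sum_cons_Cyl (Λ : Measure (ℤ → E)) [IsFiniteMeasure Λ] (m : ℤ) (w : List E) :
    ∑ e, Λ.real (Cyl m (e :: w)) = Λ.real (Cyl (m+1) w) := by
  rw [← sum_inter_coord Λ (Cyl (m+1) w) m]
  refine Finset.sum_congr rfl (fun e _ => ?_)
  congr 1
  ext σ
  rw [mem_Cyl_cons]; rfl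

lemma ws_Cyl (Λ : Measure (ℤ → E)) [IsProbabilityMeasure Λ] (m : ℤ) (n : ℕ) :
    ws n (fun w => Λ.real (Cyl m w)) = 1 := by
  have := integral_win Λ m n (fun _ => 1)
  simpa using this.symm

lemma Cyl_preimage (m k : ℤ) (w : List E) : shiftZ E k ⁻¹' (Cyl m w) = Cyl (m+k) w := by
  ext σ
  rw [Set.mem_preimage, mem_Cyl, mem_Cyl, win_shift]

lemma measurable_shiftZ (k : ℤ) : Measurable (shiftZ E k) :=
  measurable_pi_iff.2 (fun j => measurable_coord _)

lemma shiftL_eq : shiftL E = shiftZ E 1 := rfl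

lemma shiftZ_add (j k : ℤ) : shiftZ E j ∘ shiftZ E k = shiftZ E (j + k) := by
  ext σ i
  simp only [Function.comp, shiftZ]
  congr 1
  ring

lemma shiftZ_zero : shiftZ E 0 = id := by
  ext σ i
  simp [shiftZ]

lemma ShiftInvariant.map_shiftZ {Λ : Measure (ℤ → E)} (h : ShiftInvariant Λ) (k : ℤ) :
    Measure.map (shiftZ E k) Λ = Λ := by
  have h1 : Measure.map (shiftZ E 1) Λ = Λ := h
  have h2 : Measure.map (shiftZ E (-1)) Λ = Λ := by
    conv_lhs => rw [← h1]
    rw [Measure.map_map (measurable_shiftZ _) (measurable_shiftZ _), shiftZ_add]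
    simp [shiftZ_zero]
  induction k using Int.induction_on with
  | zero => simp [shiftZ_zero]
  | succ i ih =>
    rw [← shiftZ_add, ← Measure.map_map (measurable_shiftZ _) (measurable_shiftZ _), h1, ih]
  | pred i ih =>
    rw [sub_eq_add_neg, ← shiftZ_add, ← Measure.map_map (measurable_shiftZ _) (measurable_shiftZ _), h2, ih]

lemma ShiftInvariant.Cyl_eq {Λ : Measure (ℤ → E)} (h : ShiftInvariant Λ) (m : ℤ) (w : List E) :
    Λ (Cyl m w) = Λ (Cyl 0 w) := by
  conv_rhs => rw [← h.map_shiftZ m]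
  rw [Measure.map_apply (measurable_shiftZ _) (measurableSet_Cyl _ _), Cyl_preimage, zero_add]

lemma ShiftInvariant.Cyl_real {Λ : Measure (ℤ → E)} (h : ShiftInvariant Λ) (m : ℤ) (w : List E) :
    Λ.real (Cyl m w) = Λ.real (Cyl 0 w) := by
  rw [Measure.real, h.Cyl_eq, Measure.real]

lemma ext_Cyl (Λ Λ' : Measure (ℤ → E)) [IsProbabilityMeasure Λ] [IsProbabilityMeasure Λ']
    (h : ∀ m w, Λ (Cyl m w) = Λ' (Cyl m w)) : Λ = Λ' := by
  have hwin : ∀ (m : ℤ) (n : ℕ), Λ.map (fun σ : ℤ → E => fun j : Fin n => σ (m + (j : ℕ))) =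
      Λ'.map (fun σ : ℤ → E => fun j : Fin n => σ (m + (j : ℕ))) := by
    intro m n
    refine Measure.ext_of_singleton (fun es => ?_)
    rw [map_win, map_win, h]
  refine IsProjectiveLimit.unique (P := fun J => Λ'.map (Finset.restrict J)) ?_ (fun J => rfl)
  intro J
  obtain ⟨m, n, hJ⟩ : ∃ (m : ℤ) (n : ℕ), ∀ j ∈ J, m ≤ j ∧ j < m + n := by
    obtain ⟨b, hb⟩ := J.bddAbove
    obtain ⟨a, ha⟩ := J.bddBelow
    refine ⟨a, (b - a + 1).toNat, fun j hj => ⟨ha hj, ?_⟩⟩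
    have := hb hj
    have := ha hj
    omega
  let r : (Fin n → E) → (J → E) := fun es j => es ⟨((j : ℤ) - m).toNat, by
    have := hJ j j.2; omega⟩
  have hr : (Finset.restrict J : (ℤ → E) → (J → E)) =
      r ∘ (fun σ : ℤ → E => fun j : Fin n => σ (m + (j : ℕ))) := by
    ext σ j
    simp only [Finset.restrict, r, Function.comp]
    congr 1
    have := hJ j j.2
    omega
  have hrm : Measurable r := measurable_of_countable _
  have h1 : Measurable (fun σ : ℤ → E => fun j : Fin n => σ (m + (j : ℕ))) :=
    measurable_pi_iff.2 (fun j => measurable_coord _)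
  change Measure.map (Finset.restrict J) Λ = Measure.map (Finset.restrict J) Λ'
  rw [hr, ← Measure.map_map hrm h1, ← Measure.map_map hrm h1, hwin]

lemma cylEnt_eq (Λ : Measure (ℤ → E)) (n : ℕ) :
    cylEnt Λ n = ws n (fun w => Real.negMulLog (Λ.real (Cyl 0 w))) := by
  unfold cylEnt ws
  refine Finset.sum_congr rfl (fun es _ => ?_)
  congr 2
  congr 1
  ext σ
  rw [mem_Cyl, List.length_ofFn, win]
  simp only [zero_add]
  rw [(List.ofFn_injective (α := E) (n := n)).eq_iff]
  exact funext_iff.symm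

end Words
open MeasureTheory Filter Topology
open scoped ENNReal

section Analytic

lemma gibbs_one {x y : ℝ} (hx : 0 ≤ x) (hy : 0 ≤ y) (h : 0 < x → 0 < y) :
    (√x - √y) ^ 2 + x - y ≤ x * Real.log x - x * Real.log y := by
  rcases hx.eq_or_lt with rfl | hx0
  · simp [Real.sq_sqrt hy]
  have hy0 := h hx0
  have hsx : 0 < √x := Real.sqrt_pos.2 hx0
  have hsy : 0 < √y := Real.sqrt_pos.2 hy0
  have h1 : Real.log (√y / √x) ≤ √y / √x - 1 := Real.log_le_sub_one_of_pos (by positivity)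
  rw [Real.log_div hsy.ne' hsx.ne', Real.log_sqrt hy, Real.log_sqrt hx] at h1
  have h2 := mul_le_mul_of_nonneg_left h1 (by positivity : 0 ≤ 2 * x)
  have h3 : x * (√y / √x) = √x * √y := by
    have : x = √x * √x := (Real.mul_self_sqrt hx).symm
    field_simp
    nlinarith [Real.sq_sqrt hx]
  have e1 := Real.sq_sqrt hx
  have e2 := Real.sq_sqrt hy
  nlinarith

lemma gibbs_sum {ι : Type*} (s : Finset ι) (x y : ι → ℝ) (hx : ∀ i, 0 ≤ x i) (hy : ∀ i, 0 ≤ y i)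
    (h : ∀ i, 0 < x i → 0 < y i) (hx1 : ∑ i ∈ s, x i = 1) (hy1 : ∑ i ∈ s, y i = 1) :
    (∑ i ∈ s, |x i - y i|) ^ 2 ≤ 4 * ∑ i ∈ s, (x i * Real.log (x i) - x i * Real.log (y i)) := by
  have h1 : ∑ i ∈ s, (√(x i) - √(y i)) ^ 2 ≤
      ∑ i ∈ s, (x i * Real.log (x i) - x i * Real.log (y i)) := by
    have := Finset.sum_le_sum (fun i (_ : i ∈ s) => gibbs_one (hx i) (hy i) (h i))
    rw [Finset.sum_sub_distrib, Finset.sum_add_distrib] at this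
    linarith
  have h2 : ∑ i ∈ s, (√(x i) + √(y i)) ^ 2 ≤ 4 := by
    calc ∑ i ∈ s, (√(x i) + √(y i)) ^ 2 ≤ ∑ i ∈ s, (2 * x i + 2 * y i) := by
          refine Finset.sum_le_sum (fun i _ => ?_)
          nlinarith [Real.sq_sqrt (hx i), Real.sq_sqrt (hy i), sq_nonneg (√(x i) - √(y i))]
      _ = 4 := by
          rw [Finset.sum_add_distrib, ← Finset.mul_sum, ← Finset.mul_sum, hx1, hy1]; norm_num
  have h3 : ∀ i, |x i - y i| = |√(x i) - √(y i)| * (√(x i) + √(y i)) := by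
    intro i
    conv_lhs => rw [← Real.sq_sqrt (hx i), ← Real.sq_sqrt (hy i), sq_sub_sq, abs_mul]
    rw [abs_of_nonneg (by positivity : 0 ≤ √(x i) + √(y i)), mul_comm]
  have h4 := Finset.sum_mul_sq_le_sq_mul_sq s (fun i => |√(x i) - √(y i)|) (fun i => √(x i) + √(y i))
  simp only [← h3, sq_abs] at h4
  have h5 : 0 ≤ ∑ i ∈ s, (√(x i) - √(y i)) ^ 2 := Finset.sum_nonneg (fun i _ => sq_nonneg _)
  nlinarith

lemma zero_of_bound {D ε d R : ℕ → ℝ} (hD0 : ∀ n, 0 ≤ D n)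
    (hR : ∀ n : ℕ, 0 < n → (∑ i ∈ Finset.range n, D i) / n ≤ R n) (hR0 : Tendsto R atTop (𝓝 0))
    (hε : ∀ n, (ε n) ^ 2 ≤ 4 * D n) {C : ℝ} (hC : 0 < C) {k : ℕ}
    (hd : ∀ n, |d n| ≤ C * ∑ j ∈ Finset.range k, ε (n + j)) {d0 : ℝ} (hlim : Tendsto d atTop (𝓝 d0)) :
    d0 = 0 := by
  by_contra hne
  have hc : 0 < |d0| / 2 := by positivity
  set c := |d0| / 2 with hcdef
  have h1 : ∀ᶠ n in atTop, c ≤ |d n| := by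
    have := hlim.abs.eventually (lt_mem_nhds (show c < |d0| by linarith))
    filter_upwards [this] with n hn using hn.le
  obtain ⟨n0, hn0⟩ := eventually_atTop.1 h1
  have hk : 0 < k := by
    rcases Nat.eq_zero_or_pos k with rfl | h
    · have := hn0 n0 le_rfl
      have h2 := hd n0
      simp at h2
      rw [h2] at this
      simp at this
      linarith
    · exact h
  have hkR : (0 : ℝ) < k := by exact_mod_cast hk
  set s := c / (2 * C * k) with hs
  have hs0 : 0 < s := by positivity
  have hεs : ∀ n, ε n ≤ s + D n / s := by
    intro n
    have h1 := hε n
    have : s * ε n ≤ s ^ 2 + D n := by nlinarith [sq_nonneg (ε n - 2 * s)]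
    have h3 : s + D n / s = (s ^ 2 + D n) / s := by field_simp
    rw [h3, le_div_iff₀ hs0]; linarith
  -- lower bound on block sums
  set b := s * (c / (2 * C)) with hb
  have hb0 : 0 < b := by positivity
  have hblock : ∀ n, n0 ≤ n → b ≤ ∑ j ∈ Finset.range k, D (n + j) := by
    intro n hn
    have h1 := (hn0 n hn).trans (hd n)
    have h2 : ∑ j ∈ Finset.range k, ε (n + j) ≤ k * s + (∑ j ∈ Finset.range k, D (n + j)) / s := by
      calc _ ≤ ∑ j ∈ Finset.range k, (s + D (n + j) / s) := Finset.sum_le_sum (fun j _ => hεs _)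
        _ = _ := by rw [Finset.sum_add_distrib, Finset.sum_div]; simp
    have h3 : c / C ≤ ∑ j ∈ Finset.range k, ε (n + j) := by
      rw [div_le_iff₀ hC]; linarith
    have h4 : (k : ℝ) * s = c / (2 * C) := by rw [hs]; field_simp
    have h5 : c / C = c / (2 * C) + c / (2 * C) := by field_simp; norm_num
    have h6 : c / (2 * C) ≤ (∑ j ∈ Finset.range k, D (n + j)) / s := by linarith
    rw [le_div_iff₀ hs0] at h6
    rw [hb]; linarith
  have hsum : ∀ m : ℕ, m * b ≤ ∑ i ∈ Finset.range (n0 + m * k), D i := by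
    intro m
    induction m with
    | zero => simpa using Finset.sum_nonneg (fun i _ => hD0 i)
    | succ m ih =>
      have : n0 + (m + 1) * k = (n0 + m * k) + k := by ring
      rw [this, Finset.sum_range_add]
      have := hblock (n0 + m * k) (by omega)
      push_cast; linarith
  set η := b / (2 * k) with hη
  have hη0 : 0 < η := by positivity
  obtain ⟨n1, hn1⟩ := eventually_atTop.1 (hR0.eventually (gt_mem_nhds hη0))
  obtain ⟨m, hm⟩ := exists_nat_gt ((η * n0) / (b / 2) + n1)
  have hm1 : n1 ≤ m := by
    have : 0 ≤ (η * n0) / (b / 2) := by positivity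
    have : (n1 : ℝ) < m := by linarith
    exact_mod_cast this.le
  have hm0 : 0 < m := by
    have : 0 ≤ (η * n0) / (b / 2) + n1 := by positivity
    have : (0 : ℝ) < m := by linarith
    exact_mod_cast this
  have hmk : m ≤ m * k := Nat.le_mul_of_pos_right m hk
  have hpos : 0 < n0 + m * k := by omega
  have h1 := (hR _ hpos).trans (hn1 (n0 + m * k) (by omega)).le
  have hposR : (0 : ℝ) < ((n0 + m * k : ℕ) : ℝ) := by exact_mod_cast hpos
  rw [div_le_iff₀ hposR] at h1
  have h2 := (hsum m).trans h1
  push_cast at h2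
  have h3 : η * (m * k) = m * b / 2 := by rw [hη]; field_simp
  have h4 : (η * n0) / (b / 2) < m := by
    have : (0 : ℝ) ≤ n1 := by positivity
    linarith
  rw [div_lt_iff₀ (by positivity)] at h4
  nlinarith

end Analytic

namespace CMS

variable {K : Type*} [MetricSpace K] [MeasurableSpace K]
  {N : ℕ} {E : Type*} [Fintype E]

/-- composition along a word -/
def wl (S : CMS K N E) : K → List E → K
  | x, [] => x
  | x, e :: t => wl S (S.w e x) t

lemma wl_snoc (S : CMS K N E) (x : K) (v : List E) (e : E) :
    S.wl x (v ++ [e]) = S.w e (S.wl x v) := by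
  induction v generalizing x with
  | nil => rfl
  | cons f v ih => simp only [List.cons_append, wl, ih]

/-- coded point of a word -/
noncomputable def Cw [Nonempty K] (S : CMS K N E) (xs : Fin N → K) : List E → K
  | [] => Classical.arbitrary K
  | e :: t => S.wl (xs (S.ι e)) (e :: t)

lemma Cw_snoc [Nonempty K] (S : CMS K N E) (xs : Fin N → K) {v : List E} (hv : v ≠ []) (e : E) :
    S.Cw xs (v ++ [e]) = S.w e (S.Cw xs v) := by
  cases v with
  | nil => exact absurd rfl hv
  | cons f v =>
    simp only [List.cons_append, Cw]
    rw [← List.cons_append, wl_snoc]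

lemma comp_eq (S : CMS K N E) (σ : ℤ → E) (n : ℕ) (x : K) :
    S.comp σ n x = S.wl x (win (-(n:ℤ)) (n+1) σ) := by
  induction n generalizing x with
  | zero => rw [win_cons]; simp [comp, wl, win]
  | succ n ih =>
    rw [comp, ih, win_cons (-((n+1 : ℕ) : ℤ)), wl]
    push_cast
    congr 2
    ring

lemma codeSeq_eq [Nonempty K] (S : CMS K N E) (xs : Fin N → K) (σ : ℤ → E) (n : ℕ) :
    S.codeSeq xs σ n = S.Cw xs (win (-(n:ℤ)) (n+1) σ) := by
  rw [codeSeq, comp_eq, win_cons, Cw]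

lemma codeSeq_shift [Nonempty K] (S : CMS K N E) (xs : Fin N → K) (σ : ℤ → E) (n : ℕ) :
    S.codeSeq xs (shiftL E σ) (n+1) = S.w (σ 1) (S.codeSeq xs σ n) := by
  change S.codeSeq xs (shiftZ E 1 σ) (n+1) = _
  rw [codeSeq_eq, codeSeq_eq, win_shift, win_snoc, Cw_snoc]
  · have h1 : -((n+1 : ℕ) : ℤ) + 1 = -(n : ℤ) := by push_cast; ring
    rw [h1]
    congr 2
    push_cast; ring
  · rw [win_cons]; simp

lemma comp_mem (S : CMS K N E) {σ : ℤ → E} (hσ : σ ∈ S.SigmaG) (n : ℕ) {x : K}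
    (hx : x ∈ S.Ks (S.ι (σ (-(n:ℤ))))) : S.comp σ n x ∈ S.Ks (S.τ (σ 0)) := by
  induction n generalizing x with
  | zero => simpa [comp] using S.w_maps _ (by simpa using hx)
  | succ n ih =>
    rw [comp]
    refine ih ?_
    have h := S.w_maps _ hx
    have h2 := hσ (-((n+1 : ℕ) : ℤ))
    rw [h2] at h
    have h3 : -((n+1 : ℕ) : ℤ) + 1 = -(n:ℤ) := by push_cast; ring
    rw [h3] at h
    have h4 : -((n+1 : ℕ) : ℤ) = -((n:ℤ) + 1) := by push_cast; ring
    rwa [h4] at h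

lemma codeSeq_mem (S : CMS K N E) {xs : Fin N → K} (hxs : ∀ i, xs i ∈ S.Ks i) {σ : ℤ → E}
    (hσ : σ ∈ S.SigmaG) (n : ℕ) : S.codeSeq xs σ n ∈ S.Ks (S.ι (σ 1)) := by
  have h := hσ 0
  rw [zero_add] at h
  rw [← h]
  exact S.comp_mem hσ n (hxs _)

lemma F_lim [Nonempty K] (S : CMS K N E) {xs : Fin N → K} {σ : ℤ → E} (hσ : σ ∈ S.Dset xs) :
    Tendsto (S.codeSeq xs σ) atTop (𝓝 (S.F xs σ)) := tendsto_nhds_limUnder hσ.2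

lemma F_mem [Nonempty K] (S : CMS K N E) (hOpen : ∀ i, IsOpen (S.Ks i)) {xs : Fin N → K}
    (hxs : ∀ i, xs i ∈ S.Ks i) {σ : ℤ → E}
    (hσ : σ ∈ S.Dset xs) : S.F xs σ ∈ S.Ks (S.ι (σ 1)) :=
  (S.isClosed_Ks hOpen _).mem_of_tendsto (S.F_lim hσ)
    (Eventually.of_forall (fun n => S.codeSeq_mem hxs hσ.1 n))

lemma F_shift [Nonempty K] (S : CMS K N E) (hOpen : ∀ i, IsOpen (S.Ks i))
    {δ : ℝ} (hδ : 0 < δ) (hp : ∀ e, ∀ x ∈ S.Ks (S.ι e), δ ≤ S.p e x) {xs : Fin N → K}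
    (hxs : ∀ i, xs i ∈ S.Ks i) {σ : ℤ → E} (hσ : σ ∈ S.Dset xs) :
    S.F xs (shiftL E σ) = S.w (σ 1) (S.F xs σ) := by
  have h1 : Tendsto (fun n => S.codeSeq xs (shiftL E σ) (n+1)) atTop (𝓝 (S.w (σ 1) (S.F xs σ))) := by
    simp only [codeSeq_shift]
    have hc := (S.continuousOn_w hδ hp (σ 1)).continuousAt
      ((hOpen _).mem_nhds (S.F_mem hOpen hxs hσ))
    exact hc.tendsto.comp (S.F_lim hσ)
  have h2 := (tendsto_add_atTop_iff_nat (f := S.codeSeq xs (shiftL E σ)) 1).1 h1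
  exact h2.limUnder_eq

lemma cylWeight_nonneg (S : CMS K N E) (x : K) (w : List E) : 0 ≤ S.cylWeight x w := by
  induction w generalizing x with
  | nil => simp [cylWeight]
  | cons e w ih => simp only [cylWeight]; exact mul_nonneg (S.p_nonneg e x) (ih _)

lemma cylWeight_le_one (S : CMS K N E) (x : K) (w : List E) : S.cylWeight x w ≤ 1 := by
  induction w generalizing x with
  | nil => simp [cylWeight]
  | cons e w ih =>
    simp only [cylWeight]
    exact mul_le_one₀ (S.p_le_one e x) (S.cylWeight_nonneg _ _) (ih _)

lemma continuous_cylWeight (S : CMS K N E) (hOpen : ∀ i, IsOpen (S.Ks i))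
    (hDini : ∀ e, DiniOn (S.p e) (S.Ks (S.ι e))) {δ : ℝ} (hδ : 0 < δ)
    (hp : ∀ e, ∀ x ∈ S.Ks (S.ι e), δ ≤ S.p e x) (w : List E) :
    Continuous (fun x => S.cylWeight x w) := by
  induction w with
  | nil => simp only [cylWeight]; exact continuous_const
  | cons e w ih => simp only [cylWeight]; exact S.continuous_p_mul hOpen hDini hδ hp e ih

end CMS

section

variable {E : Type*} [Fintype E] [MeasurableSpace E] [MeasurableSingletonClass E]

/-- split off the last letter -/
lemma exists_snoc_fun {β : Type*} [Zero β] (g : List E → E → β) :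
    ∃ G : List E → β, ∀ w e, G (w ++ [e]) = g w e := by
  refine ⟨fun l => match l.getLast? with | none => 0 | some e => g l.dropLast e, fun w e => ?_⟩
  simp

lemma integral_snoc (Λ : Measure (ℤ → E)) [IsFiniteMeasure Λ] (m : ℤ) (n : ℕ) (g : List E → E → ℝ) :
    ∫ σ, g (win m n σ) (σ (m + n)) ∂Λ = ws n (fun w => ∑ e, Λ.real (Cyl m (w ++ [e])) * g w e) := by
  obtain ⟨G, hG⟩ := exists_snoc_fun g
  have : ∀ σ : ℤ → E, g (win m n σ) (σ (m + n)) = G (win m (n+1) σ) := by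
    intro σ; rw [win_snoc, hG]
  simp only [this]
  rw [integral_win, ws_snoc]
  simp only [hG]

lemma lintegral_snoc (Λ : Measure (ℤ → E)) (m : ℤ) (n : ℕ) (g : List E → E → ℝ≥0∞) :
    ∫⁻ σ, g (win m n σ) (σ (m + n)) ∂Λ = ws n (fun w => ∑ e, Λ (Cyl m (w ++ [e])) * g w e) := by
  obtain ⟨G, hG⟩ := exists_snoc_fun g
  have : ∀ σ : ℤ → E, g (win m n σ) (σ (m + n)) = G (win m (n+1) σ) := by
    intro σ; rw [win_snoc, hG]
  simp only [this]
  rw [lintegral_win, ws_snoc]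
  simp only [hG]

lemma measurable_snoc {β : Type*} [MeasurableSpace β] [Zero β] (m : ℤ) (n : ℕ) (g : List E → E → β) :
    Measurable (fun σ : ℤ → E => g (win m n σ) (σ (m + n))) := by
  obtain ⟨G, hG⟩ := exists_snoc_fun g
  have : ∀ σ : ℤ → E, g (win m n σ) (σ (m + n)) = G (win m (n+1) σ) := by
    intro σ; rw [win_snoc, hG]
  simp only [this]
  exact measurable_win m (n+1) G

end
open MeasureTheory Filter Topology
open scoped ENNReal

namespace CMS

variable {K : Type*} [MetricSpace K] [MeasurableSpace K] [BorelSpace K] [Nonempty K]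
  {N : ℕ} {E : Type*} [Fintype E] [MeasurableSpace E] [MeasurableSingletonClass E]

lemma measurable_codeSeq (S : CMS K N E) (xs : Fin N → K) (n : ℕ) :
    Measurable (fun σ => S.codeSeq xs σ n) := by
  simp only [codeSeq_eq]
  exact measurable_win _ _ _

lemma tendsto_int (S : CMS K N E) (hOpen : ∀ i, IsOpen (S.Ks i)) {xs : Fin N → K}
    (hxs : ∀ i, xs i ∈ S.Ks i) (Λ : Measure (ℤ → E)) [IsProbabilityMeasure Λ]
    (hD : ∀ᵐ σ ∂Λ, σ ∈ S.Dset xs) (Φ : E → K → ℝ)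
    (hc : ∀ e, ContinuousOn (Φ e) (S.Ks (S.ι e))) {C : ℝ} (hC : ∀ e, ∀ x ∈ S.Ks (S.ι e), |Φ e x| ≤ C) :
    Tendsto (fun n => ∫ σ, Φ (σ 1) (S.codeSeq xs σ n) ∂Λ) atTop (𝓝 (∫ σ, Φ (σ 1) (S.F xs σ) ∂Λ)) := by
  refine tendsto_integral_of_dominated_convergence (fun _ => C) ?_ (integrable_const _) ?_ ?_
  · intro n
    have := measurable_snoc (-(n:ℤ)) (n+1) (fun (w : List E) e => Φ e (S.Cw xs w))
    have h2 : (fun σ : ℤ → E => Φ (σ 1) (S.codeSeq xs σ n)) =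
        fun σ : ℤ → E => Φ (σ (-(n:ℤ) + (n+1 : ℕ))) (S.Cw xs (win (-(n:ℤ)) (n+1) σ)) := by
      ext σ
      rw [codeSeq_eq]
      congr 2
      push_cast; ring
    rw [h2]
    exact this.aestronglyMeasurable
  · intro n
    filter_upwards [hD] with σ hσ
    exact hC _ _ (S.codeSeq_mem hxs hσ.1 n)
  · filter_upwards [hD] with σ hσ
    have h := (hc (σ 1)).continuousAt ((hOpen _).mem_nhds (S.F_mem hOpen hxs hσ))
    exact h.tendsto.comp (S.F_lim hσ)

lemma integral_code (S : CMS K N E) (xs : Fin N → K) (Λ : Measure (ℤ → E)) [IsProbabilityMeasure Λ]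
    (hinv : ShiftInvariant Λ) (Φ : E → K → ℝ) (n : ℕ) :
    ∫ σ, Φ (σ 1) (S.codeSeq xs σ n) ∂Λ =
      ws (n+1) (fun w => ∑ e, Λ.real (Cyl 0 (w ++ [e])) * Φ e (S.Cw xs w)) := by
  have := integral_snoc Λ (-(n:ℤ)) (n+1) (fun (w : List E) e => Φ e (S.Cw xs w))
  simp only [hinv.Cyl_real] at this
  rw [← this]
  refine integral_congr_ae (Eventually.of_forall (fun σ => ?_))
  simp only
  rw [codeSeq_eq]
  congr 2
  push_cast; ring

lemma integral_code0 (S : CMS K N E) (xs : Fin N → K) (Λ : Measure (ℤ → E)) [IsProbabilityMeasure Λ]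
    (hinv : ShiftInvariant Λ) (Φ : K → ℝ) (n : ℕ) :
    ∫ σ, Φ (S.codeSeq xs σ n) ∂Λ =
      ws (n+1) (fun w => Λ.real (Cyl 0 w) * Φ (S.Cw xs w)) := by
  rw [S.integral_code xs Λ hinv (fun _ => Φ) n]
  refine ws_congr (fun w _ => ?_)
  rw [← Finset.sum_mul, sum_snoc_Cyl]

/-- relative entropy at level `n` -/
noncomputable def Dn (S : CMS K N E) (xs : Fin N → K) (Λ : Measure (ℤ → E)) (n : ℕ) : ℝ :=
  ws (n+1) (fun w => ∑ e, (Λ.real (Cyl 0 (w ++ [e])) * Real.log (Λ.real (Cyl 0 (w ++ [e]))) -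
    Λ.real (Cyl 0 (w ++ [e])) * Real.log (Λ.real (Cyl 0 w) * S.p e (S.Cw xs w))))

/-- total variation at level `n` -/
noncomputable def En (S : CMS K N E) (xs : Fin N → K) (Λ : Measure (ℤ → E)) (n : ℕ) : ℝ :=
  ws (n+1) (fun w => ∑ e, |Λ.real (Cyl 0 (w ++ [e])) - Λ.real (Cyl 0 w) * S.p e (S.Cw xs w)|)

lemma Cw_mem (S : CMS K N E) {xs : Fin N → K}
    (hxs : ∀ i, xs i ∈ S.Ks i) (Λ : Measure (ℤ → E)) [IsProbabilityMeasure Λ]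
    (hinv : ShiftInvariant Λ) (hD : ∀ᵐ σ ∂Λ, σ ∈ S.Dset xs) {n : ℕ} {w : List E} (hw : w.length = n+1) {e : E}
    (h : 0 < Λ.real (Cyl 0 (w ++ [e]))) : S.Cw xs w ∈ S.Ks (S.ι e) := by
  rw [← hinv.Cyl_real (-(n:ℤ))] at h
  have h1 : Λ (Cyl (-(n:ℤ)) (w ++ [e])) ≠ 0 := by
    intro h0; rw [Measure.real, h0] at h; simp at h
  obtain ⟨σ, hσ, hσD⟩ : ∃ σ ∈ Cyl (-(n:ℤ)) (w ++ [e]), σ ∈ S.Dset xs := by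
    by_contra hcon
    push Not at hcon
    exact h1 (measure_mono_null (fun σ hσ => hcon σ hσ) (ae_iff.1 hD))
  rw [mem_Cyl_append, mem_Cyl, mem_Cyl_single, hw] at hσ
  have h2 := S.codeSeq_mem hxs hσD.1 n
  rw [codeSeq_eq, hσ.1] at h2
  have h3 : (-(n:ℤ) + ((n+1 : ℕ) : ℤ)) = 1 := by push_cast; ring
  rw [h3] at hσ
  rwa [hσ.2] at h2

lemma En_sq_le (S : CMS K N E) {δ : ℝ} (hδ : 0 < δ) (hp : ∀ e, ∀ x ∈ S.Ks (S.ι e), δ ≤ S.p e x)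
    {xs : Fin N → K}
    (hxs : ∀ i, xs i ∈ S.Ks i) (Λ : Measure (ℤ → E)) [IsProbabilityMeasure Λ]
    (hinv : ShiftInvariant Λ) (hD : ∀ᵐ σ ∂Λ, σ ∈ S.Dset xs) (n : ℕ) :
    (S.En xs Λ n) ^ 2 ≤ 4 * S.Dn xs Λ n := by
  have h := gibbs_sum (Finset.univ : Finset ((Fin (n+1) → E) × E))
    (fun q => Λ.real (Cyl 0 (List.ofFn q.1 ++ [q.2])))
    (fun q => Λ.real (Cyl 0 (List.ofFn q.1)) * S.p q.2 (S.Cw xs (List.ofFn q.1)))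
    (fun q => measureReal_nonneg) (fun q => mul_nonneg measureReal_nonneg (S.p_nonneg _ _)) ?_ ?_ ?_
  · rw [Fintype.sum_prod_type, Fintype.sum_prod_type] at h
    exact h
  · intro q hq
    have hm := S.Cw_mem hxs Λ hinv hD (n := n) (by simp) hq
    refine mul_pos (lt_of_lt_of_le hq ?_) (hδ.trans_le (hp _ _ hm))
    refine measureReal_mono (fun σ hσ => ?_)
    exact (mem_Cyl_append.1 hσ).1
  · rw [Fintype.sum_prod_type]
    have := ws_Cyl Λ 0 (n+1)
    simp only [sum_snoc_Cyl]
    exact this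
  · rw [Fintype.sum_prod_type]
    have := ws_Cyl Λ 0 (n+1)
    simp only [← Finset.mul_sum, S.p_sum_one, mul_one]
    exact this

lemma Dn_nonneg (S : CMS K N E) {δ : ℝ} (hδ : 0 < δ) (hp : ∀ e, ∀ x ∈ S.Ks (S.ι e), δ ≤ S.p e x)
    {xs : Fin N → K}
    (hxs : ∀ i, xs i ∈ S.Ks i) (Λ : Measure (ℤ → E)) [IsProbabilityMeasure Λ]
    (hinv : ShiftInvariant Λ) (hD : ∀ᵐ σ ∂Λ, σ ∈ S.Dset xs) (n : ℕ) : 0 ≤ S.Dn xs Λ n := by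
  have h := S.En_sq_le hδ hp hxs Λ hinv hD n
  nlinarith [sq_nonneg (S.En xs Λ n)]

lemma Dn_eq (S : CMS K N E) {δ : ℝ} (hδ : 0 < δ) (hp : ∀ e, ∀ x ∈ S.Ks (S.ι e), δ ≤ S.p e x)
    {xs : Fin N → K}
    (hxs : ∀ i, xs i ∈ S.Ks i) (Λ : Measure (ℤ → E)) [IsProbabilityMeasure Λ]
    (hinv : ShiftInvariant Λ) (hD : ∀ᵐ σ ∂Λ, σ ∈ S.Dset xs) (n : ℕ) :
    S.Dn xs Λ n = ∫ σ, -Real.log (S.p (σ 1) (S.codeSeq xs σ n)) ∂Λ -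
      (cylEnt Λ (n+2) - cylEnt Λ (n+1)) := by
  rw [S.integral_code xs Λ hinv (fun e x => -Real.log (S.p e x)), cylEnt_eq, cylEnt_eq,
    show n + 2 = (n+1)+1 from rfl, ws_snoc (n+1), ← ws_sub, ← ws_sub, Dn]
  refine ws_congr (fun w hw => ?_)
  have h1 : Real.negMulLog (Λ.real (Cyl 0 w)) =
      ∑ e, -(Λ.real (Cyl 0 (w ++ [e])) * Real.log (Λ.real (Cyl 0 w))) := by
    rw [Finset.sum_neg_distrib, ← Finset.sum_mul, sum_snoc_Cyl, Real.negMulLog]; ring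
  rw [h1, ← Finset.sum_sub_distrib, ← Finset.sum_sub_distrib]
  refine Finset.sum_congr rfl (fun e _ => ?_)
  rcases (measureReal_nonneg : 0 ≤ Λ.real (Cyl 0 (w ++ [e]))).eq_or_lt with h0 | h0
  · rw [← h0]; simp
  · have hm := S.Cw_mem hxs Λ hinv hD (n := n) hw h0
    have hL : 0 < Λ.real (Cyl 0 w) := by
      refine lt_of_lt_of_le h0 (measureReal_mono (fun σ hσ => ?_))
      exact (mem_Cyl_append.1 hσ).1
    rw [Real.log_mul hL.ne' (hδ.trans_le (hp _ _ hm)).ne', Real.negMulLog]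
    ring

end CMS

section
variable {E : Type*} [Fintype E] [MeasurableSpace E] [MeasurableSingletonClass E]

lemma cylEnt_nonneg (Λ : Measure (ℤ → E)) [IsProbabilityMeasure Λ] (n : ℕ) : 0 ≤ cylEnt Λ n := by
  rw [cylEnt_eq]
  exact ws_nonneg (fun w => Real.negMulLog_nonneg measureReal_nonneg measureReal_le_one)

lemma KS_le (Λ : Measure (ℤ → E)) [IsProbabilityMeasure Λ] (n : ℕ) :
    KSEntropy Λ * ((n : ℝ) + 1) ≤ cylEnt Λ (n + 1) := by
  have h : KSEntropy Λ ≤ cylEnt Λ (n+1) / ((n : ℝ) + 1) := by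
    refine ciInf_le ⟨0, ?_⟩ n
    rintro _ ⟨k, rfl⟩
    exact div_nonneg (cylEnt_nonneg Λ _) (by positivity)
  rwa [le_div_iff₀ (by positivity)] at h

end

namespace CMS

variable {K : Type*} [MetricSpace K] [MeasurableSpace K] [BorelSpace K] [Nonempty K]
  {N : ℕ} {E : Type*} [Fintype E] [MeasurableSpace E] [MeasurableSingletonClass E]

lemma sum_Dn (S : CMS K N E) {δ : ℝ} (hδ : 0 < δ) (hp : ∀ e, ∀ x ∈ S.Ks (S.ι e), δ ≤ S.p e x)
    {xs : Fin N → K}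
    (hxs : ∀ i, xs i ∈ S.Ks i) (Λ : Measure (ℤ → E)) [IsProbabilityMeasure Λ]
    (hinv : ShiftInvariant Λ) (hD : ∀ᵐ σ ∂Λ, σ ∈ S.Dset xs) (n : ℕ) :
    ∑ i ∈ Finset.range n, S.Dn xs Λ i =
      ∑ i ∈ Finset.range n, ∫ σ, -Real.log (S.p (σ 1) (S.codeSeq xs σ i)) ∂Λ -
      (cylEnt Λ (n+1) - cylEnt Λ 1) := by
  simp only [S.Dn_eq hδ hp hxs Λ hinv hD]
  rw [Finset.sum_sub_distrib, Finset.sum_range_sub (fun i => cylEnt Λ (i+1))]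

lemma abs_log_le (S : CMS K N E) {δ : ℝ} (hδ : 0 < δ) (hp : ∀ e, ∀ x ∈ S.Ks (S.ι e), δ ≤ S.p e x)
    (e : E) (x : K) (hx : x ∈ S.Ks (S.ι e)) : |-Real.log (S.p e x)| ≤ -Real.log δ := by
  have h1 := hp e x hx
  have h2 : Real.log (S.p e x) ≤ 0 := Real.log_nonpos (S.p_nonneg e x) (S.p_le_one e x)
  rw [abs_of_nonneg (by linarith)]
  exact neg_le_neg (Real.log_le_log hδ h1)

lemma continuousOn_log (S : CMS K N E) (hOpen : ∀ i, IsOpen (S.Ks i))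
    (hDini : ∀ e, DiniOn (S.p e) (S.Ks (S.ι e))) {δ : ℝ} (hδ : 0 < δ)
    (hp : ∀ e, ∀ x ∈ S.Ks (S.ι e), δ ≤ S.p e x) (e : E) :
    ContinuousOn (fun x => -Real.log (S.p e x)) (S.Ks (S.ι e)) :=
  ((S.continuous_p hOpen hDini e).continuousOn.log (fun x hx => (hδ.trans_le (hp e x hx)).ne')).neg

lemma R_tendsto (S : CMS K N E) (hOpen : ∀ i, IsOpen (S.Ks i))
    (hDini : ∀ e, DiniOn (S.p e) (S.Ks (S.ι e)))
    {δ : ℝ} (hδ : 0 < δ) (hp : ∀ e, ∀ x ∈ S.Ks (S.ι e), δ ≤ S.p e x)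
    {xs : Fin N → K}
    (hxs : ∀ i, xs i ∈ S.Ks i) (Λ : Measure (ℤ → E)) [IsProbabilityMeasure Λ]
    (hinv : ShiftInvariant Λ) (hD : ∀ᵐ σ ∂Λ, σ ∈ S.Dset xs) :
    ∃ R : ℕ → ℝ, (∀ n : ℕ, 0 < n → (∑ i ∈ Finset.range n, S.Dn xs Λ i) / n ≤ R n) ∧
      Tendsto R atTop (𝓝 (∫ σ, -Real.log (S.p (σ 1) (S.F xs σ)) ∂Λ - KSEntropy Λ)) := by
  have hB := (S.tendsto_int hOpen hxs Λ hD (fun e x => -Real.log (S.p e x))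
    (S.continuousOn_log hOpen hDini hδ hp) (S.abs_log_le hδ hp)).cesaro
  refine ⟨fun n => (n : ℝ)⁻¹ * ∑ i ∈ Finset.range n, ∫ σ, -Real.log (S.p (σ 1) (S.codeSeq xs σ i)) ∂Λ
    - KSEntropy Λ + (n : ℝ)⁻¹ * (cylEnt Λ 1 - KSEntropy Λ), fun n hn => ?_, ?_⟩
  · have hn' : (0 : ℝ) < n := by exact_mod_cast hn
    rw [S.sum_Dn hδ hp hxs Λ hinv hD, div_le_iff₀ hn']
    have h := KS_le Λ n
    field_simp
    linarith
  · have h0 : Tendsto (fun n : ℕ => (n : ℝ)⁻¹) atTop (𝓝 0) := tendsto_inv_atTop_nhds_zero_nat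
    have := (hB.sub_const (KSEntropy Λ)).add (h0.mul_const (cylEnt Λ 1 - KSEntropy Λ))
    simpa using this

theorem KS_le_int (S : CMS K N E) (hOpen : ∀ i, IsOpen (S.Ks i))
    (hDini : ∀ e, DiniOn (S.p e) (S.Ks (S.ι e)))
    {δ : ℝ} (hδ : 0 < δ) (hp : ∀ e, ∀ x ∈ S.Ks (S.ι e), δ ≤ S.p e x)
    {xs : Fin N → K}
    (hxs : ∀ i, xs i ∈ S.Ks i) (Λ : Measure (ℤ → E)) [IsProbabilityMeasure Λ]
    (hinv : ShiftInvariant Λ) (hD : ∀ᵐ σ ∂Λ, σ ∈ S.Dset xs) :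
    KSEntropy Λ ≤ ∫ σ, -Real.log (S.p (σ 1) (S.F xs σ)) ∂Λ := by
  obtain ⟨R, hR, hlim⟩ := S.R_tendsto hOpen hDini hδ hp hxs Λ hinv hD
  have : 0 ≤ ∫ σ, -Real.log (S.p (σ 1) (S.F xs σ)) ∂Λ - KSEntropy Λ := by
    refine ge_of_tendsto hlim ?_
    filter_upwards [eventually_gt_atTop 0] with n hn
    refine le_trans ?_ (hR n hn)
    exact div_nonneg (Finset.sum_nonneg (fun i _ => S.Dn_nonneg hδ hp hxs Λ hinv hD i)) (by positivity)
  linarith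

lemma multi_step (S : CMS K N E) (xs : Fin N → K) (Λ : Measure (ℤ → E)) (es : List E) (n : ℕ) :
    ws (n+1) (fun w => |Λ.real (Cyl 0 (w ++ es)) - Λ.real (Cyl 0 w) * S.cylWeight (S.Cw xs w) es|) ≤
      ∑ j ∈ Finset.range es.length, S.En xs Λ (n + j) := by
  induction es generalizing n with
  | nil => simp [cylWeight, ws]
  | cons e t ih =>
    have h1 : ∀ w : List E, w.length = n+1 →
        |Λ.real (Cyl 0 (w ++ e :: t)) - Λ.real (Cyl 0 w) * S.cylWeight (S.Cw xs w) (e :: t)| ≤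
        (∑ e, |Λ.real (Cyl 0 ((w ++ [e]) ++ t)) -
          Λ.real (Cyl 0 (w ++ [e])) * S.cylWeight (S.Cw xs (w ++ [e])) t|) +
        ∑ e, |Λ.real (Cyl 0 (w ++ [e])) - Λ.real (Cyl 0 w) * S.p e (S.Cw xs w)| := by
      intro w hw
      have hne : w ≠ [] := by rintro rfl; simp at hw
      have e1 : w ++ e :: t = (w ++ [e]) ++ t := by simp
      have e2 := S.Cw_snoc xs hne e
      have h2 := Finset.single_le_sum (f := fun e => |Λ.real (Cyl 0 ((w ++ [e]) ++ t)) -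
          Λ.real (Cyl 0 (w ++ [e])) * S.cylWeight (S.Cw xs (w ++ [e])) t|)
          (fun e _ => abs_nonneg _) (Finset.mem_univ e)
      have h3 := Finset.single_le_sum
        (f := fun e => |Λ.real (Cyl 0 (w ++ [e])) - Λ.real (Cyl 0 w) * S.p e (S.Cw xs w)|)
          (fun e _ => abs_nonneg _) (Finset.mem_univ e)
      refine le_trans ?_ (add_le_add h2 h3)
      rw [e1, cylWeight, ← e2]
      set c := S.cylWeight (S.Cw xs (w ++ [e])) t
      have hc0 : 0 ≤ c := S.cylWeight_nonneg _ _
      have hc1 : c ≤ 1 := S.cylWeight_le_one _ _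
      have h4 : Λ.real (Cyl 0 ((w ++ [e]) ++ t)) - Λ.real (Cyl 0 w) * (S.p e (S.Cw xs w) * c) =
          (Λ.real (Cyl 0 ((w ++ [e]) ++ t)) - Λ.real (Cyl 0 (w ++ [e])) * c) +
          (Λ.real (Cyl 0 (w ++ [e])) - Λ.real (Cyl 0 w) * S.p e (S.Cw xs w)) * c := by ring
      rw [h4]
      refine (abs_add_le _ _).trans (add_le_add le_rfl ?_)
      rw [abs_mul, abs_of_nonneg hc0]
      exact mul_le_of_le_one_right (abs_nonneg _) hc1
    refine (ws_mono h1).trans ?_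
    rw [ws_add, ← ws_snoc (n+1) (fun w => |Λ.real (Cyl 0 (w ++ t)) -
          Λ.real (Cyl 0 w) * S.cylWeight (S.Cw xs w) t|), List.length_cons, Finset.sum_range_succ']
    refine add_le_add ?_ le_rfl
    refine (ih (n+1)).trans (le_of_eq (Finset.sum_congr rfl (fun j _ => ?_)))
    congr 1
    ring

lemma ws_front (Λ : Measure (ℤ → E)) [IsProbabilityMeasure Λ] (hinv : ShiftInvariant Λ)
    (es : List E) (n : ℕ) : ws n (fun w => Λ.real (Cyl 0 (w ++ es))) = Λ.real (Cyl 0 es) := by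
  induction n with
  | zero => simp [ws_zero]
  | succ n ih =>
    rw [ws_cons, ← ih]
    unfold ws
    rw [Finset.sum_comm]
    refine Finset.sum_congr rfl (fun w _ => ?_)
    simp only [List.cons_append]
    rw [sum_cons_Cyl, hinv.Cyl_real]

lemma aemeasurable_F (S : CMS K N E) (xs : Fin N → K) (Λ : Measure (ℤ → E))
    (hD : ∀ᵐ σ ∂Λ, σ ∈ S.Dset xs) : AEMeasurable (S.F xs) Λ := by
  refine aemeasurable_of_tendsto_metrizable_ae atTop (fun n => (S.measurable_codeSeq xs n).aemeasurable) ?_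
  filter_upwards [hD] with σ hσ using S.F_lim hσ

theorem equality_case (S : CMS K N E) (hOpen : ∀ i, IsOpen (S.Ks i))
    (hDini : ∀ e, DiniOn (S.p e) (S.Ks (S.ι e)))
    {δ : ℝ} (hδ : 0 < δ) (hp : ∀ e, ∀ x ∈ S.Ks (S.ι e), δ ≤ S.p e x)
    {xs : Fin N → K}
    (hxs : ∀ i, xs i ∈ S.Ks i) (Λ : Measure (ℤ → E)) [IsProbabilityMeasure Λ]
    (hinv : ShiftInvariant Λ) (hD : ∀ᵐ σ ∂Λ, σ ∈ S.Dset xs)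
    (heq : KSEntropy Λ = ∫ σ, -Real.log (S.p (σ 1) (S.F xs σ)) ∂Λ) :
    S.adjoint (Λ.map (S.F xs)) = Λ.map (S.F xs) ∧
    ∀ es : List E, Λ.real (Cyl 0 es) = ∫ x, S.cylWeight x es ∂(Λ.map (S.F xs)) := by
  obtain ⟨R, hR, hlim⟩ := S.R_tendsto hOpen hDini hδ hp hxs Λ hinv hD
  rw [heq, sub_self] at hlim
  have hF := S.aemeasurable_F xs Λ hD
  have hprob : IsProbabilityMeasure (Λ.map (S.F xs)) := Measure.isProbabilityMeasure_map hF
  have hDn := S.Dn_nonneg hδ hp hxs Λ hinv hD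
  have hEn := S.En_sq_le hδ hp hxs Λ hinv hD
  constructor
  · refine ext_of_forall_integral_eq_of_IsFiniteMeasure (fun f => ?_)
    have hfb : ∀ x, |f x| ≤ ‖f‖ := fun x => f.norm_coe_le_norm x
    have hfm : Measurable f := f.continuous.measurable
    have hUc := S.continuous_Ufun hOpen hDini hδ hp f.continuous
    rw [S.integral_adjoint _ hfm hfb, integral_map hF hUc.measurable.aestronglyMeasurable]
    have h1 : ∫ x, f x ∂(Λ.map (S.F xs)) = ∫ σ, f (S.w (σ 1) (S.F xs σ)) ∂Λ := by
      have hms : Measurable (shiftL E) := measurable_shiftZ 1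
      rw [integral_map hF hfm.aestronglyMeasurable]
      have hinv' : Λ.map (shiftL E) = Λ := hinv
      have hF' : AEMeasurable (S.F xs) (Λ.map (shiftL E)) := by rwa [hinv']
      conv_lhs => rw [← hinv']
      rw [integral_map hms.aemeasurable (f := fun σ => f (S.F xs σ)) (hfm.comp_aemeasurable hF').aestronglyMeasurable]
      refine integral_congr_ae ?_
      filter_upwards [hD] with σ hσ
      rw [S.F_shift hOpen hδ hp hxs hσ]
    rw [h1]
    have t1 := S.tendsto_int hOpen hxs Λ hD (fun _ x => S.Ufun f x)
      (fun e => hUc.continuousOn) (fun e x _ => S.abs_Ufun_le hfb x)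
    have t2 := S.tendsto_int hOpen hxs Λ hD (fun e x => f (S.w e x))
      (fun e => f.continuous.comp_continuousOn (S.continuousOn_w hδ hp e)) (fun e x _ => hfb _)
    have := zero_of_bound hDn hR hlim hEn (C := ‖f‖ + 1) (by positivity) (k := 1)
      (d := fun n => ∫ σ, S.Ufun f (S.codeSeq xs σ n) ∂Λ - ∫ σ, f (S.w (σ 1) (S.codeSeq xs σ n)) ∂Λ) ?_
      (t1.sub t2)
    · exact sub_eq_zero.1 this
    · intro n
      rw [S.integral_code0 xs Λ hinv, S.integral_code xs Λ hinv (fun e x => f (S.w e x)), ← ws_sub]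
      simp only [Finset.range_one, Finset.sum_singleton, add_zero]
      refine (abs_ws_le _ _).trans ?_
      rw [En, ← ws_mul_left]
      refine ws_mono (fun w _ => ?_)
      rw [Ufun, Finset.mul_sum, ← Finset.sum_sub_distrib, Finset.mul_sum]
      refine (Finset.abs_sum_le_sum_abs _ _).trans (Finset.sum_le_sum (fun e _ => ?_))
      have : Λ.real (Cyl 0 w) * (S.p e (S.Cw xs w) * f (S.w e (S.Cw xs w))) -
          Λ.real (Cyl 0 (w ++ [e])) * f (S.w e (S.Cw xs w)) =
          -(f (S.w e (S.Cw xs w)) *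
            (Λ.real (Cyl 0 (w ++ [e])) - Λ.real (Cyl 0 w) * S.p e (S.Cw xs w))) := by ring
      rw [this, abs_neg, abs_mul]
      gcongr
      linarith [hfb (S.w e (S.Cw xs w))]
  · intro es
    have hcc := S.continuous_cylWeight hOpen hDini hδ hp es
    rw [integral_map hF hcc.measurable.aestronglyMeasurable]
    have t1 := S.tendsto_int hOpen hxs Λ hD (fun _ x => S.cylWeight x es)
      (fun e => hcc.continuousOn) (C := 1) (fun e x _ => by
        rw [abs_of_nonneg (S.cylWeight_nonneg _ _)]; exact S.cylWeight_le_one _ _)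
    have := zero_of_bound hDn hR hlim hEn (C := 1) one_pos (k := es.length)
      (d := fun n => Λ.real (Cyl 0 es) - ∫ σ, S.cylWeight (S.codeSeq xs σ n) es ∂Λ) ?_
      (t1.const_sub _)
    · exact sub_eq_zero.1 this
    · intro n
      rw [S.integral_code0 xs Λ hinv (fun x => S.cylWeight x es), ← ws_front Λ hinv es (n+1), ← ws_sub, one_mul]
      exact (abs_ws_le _ _).trans (S.multi_step xs Λ es n)

end CMS
open MeasureTheory Filter Topology
open scoped ENNReal

namespace CMS

variable {K : Type*} [MetricSpace K] [MeasurableSpace K]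
  {N : ℕ} {E : Type*} [Fintype E]

lemma measurable_cylWeight (S : CMS K N E) (w : List E) : Measurable (fun x => S.cylWeight x w) := by
  induction w with
  | nil => simp only [cylWeight]; exact measurable_const
  | cons e w ih => simp only [cylWeight]; exact (S.p_meas e).mul (ih.comp (S.w_meas e))

lemma measurable_wl (S : CMS K N E) (w : List E) : Measurable (fun x => S.wl x w) := by
  induction w with
  | nil => simp only [wl]; exact measurable_id
  | cons e w ih => simp only [wl]; exact ih.comp (S.w_meas e)

lemma integrable_cylWeight (S : CMS K N E) (μ : Measure K) [IsProbabilityMeasure μ] (w : List E) :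
    Integrable (fun x => S.cylWeight x w) μ :=
  Integrable.of_bound (S.measurable_cylWeight w).aestronglyMeasurable 1
    (Eventually.of_forall (fun x => by
      rw [Real.norm_of_nonneg (S.cylWeight_nonneg x w)]; exact S.cylWeight_le_one x w))

lemma cylWeight_snoc (S : CMS K N E) (x : K) (w : List E) (e : E) :
    S.cylWeight x (w ++ [e]) = S.cylWeight x w * S.p e (S.wl x w) := by
  induction w generalizing x with
  | nil => simp [cylWeight, wl]
  | cons f w ih => simp only [List.cons_append, cylWeight, wl, ih, mul_assoc]

lemma wl_same (S : CMS K N E) {w : List E} {i : Fin N} {x y : K} (hx : x ∈ S.Ks i) (hy : y ∈ S.Ks i)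
    (h : S.cylWeight x w ≠ 0) : ∃ j, S.wl x w ∈ S.Ks j ∧ S.wl y w ∈ S.Ks j := by
  induction w generalizing x y i with
  | nil => exact ⟨i, hx, hy⟩
  | cons e w ih =>
    simp only [cylWeight] at h
    have h1 := S.mem_of_p_ne (left_ne_zero_of_mul h)
    have h2 := S.eq_of_mem hx h1
    subst h2
    exact ih (S.w_maps e hx) (S.w_maps e hy) (right_ne_zero_of_mul h)

/-- The operator over words. -/
lemma ws_weight_cons (S : CMS K N E) (n : ℕ) (x : K) (g : List E → ℝ≥0∞) :
    ws (n+1) (fun w => ENNReal.ofReal (S.cylWeight x w) * g w) =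
      ∑ e, ENNReal.ofReal (S.p e x) *
        ws n (fun w => ENNReal.ofReal (S.cylWeight (S.w e x) w) * g (e :: w)) := by
  rw [ws_cons]
  refine Finset.sum_congr rfl (fun e _ => ?_)
  rw [← ws_mul_left]
  refine ws_congr (fun w _ => ?_)
  simp only [cylWeight]
  rw [ENNReal.ofReal_mul (S.p_nonneg e x), mul_assoc]

lemma ws_weight_one (S : CMS K N E) (n : ℕ) (x : K) :
    ws n (fun w => ENNReal.ofReal (S.cylWeight x w)) = 1 := by
  induction n generalizing x with
  | zero => simp [ws_zero, cylWeight]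
  | succ n ih =>
    have := S.ws_weight_cons n x (fun _ => 1)
    simp only [mul_one, ih] at this
    rw [this, ofReal_sum_p]

lemma lintegral_iter (S : CMS K N E) (μ : Measure K) (hμ : S.adjoint μ = μ)
    {f : K → ℝ≥0∞} (hf : Measurable f) (n : ℕ) :
    ∫⁻ x, ws n (fun w => ENNReal.ofReal (S.cylWeight x w) * f (S.wl x w)) ∂μ = ∫⁻ x, f x ∂μ := by
  induction n with
  | zero => simp [ws_zero, cylWeight, wl]
  | succ n ih =>
    conv_rhs => rw [← ih]
    conv_rhs => rw [← hμ]
    rw [S.lintegral_adjoint]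
    · refine lintegral_congr (fun x => ?_)
      rw [S.ws_weight_cons n x (fun w => f (S.wl x w))]
      rfl
    · unfold ws
      refine Finset.measurable_sum _ (fun w _ => ?_)
      exact ((S.measurable_cylWeight _).ennreal_ofReal).mul (hf.comp (S.measurable_wl _))

lemma sum_edist_le (S : CMS K N E) (n : ℕ) {i : Fin N} {x y : K} (hx : x ∈ S.Ks i) (hy : y ∈ S.Ks i) :
    ws n (fun w => ENNReal.ofReal (S.cylWeight x w) * edist (S.wl x w) (S.wl y w)) ≤
      ENNReal.ofReal S.a ^ n * edist x y := by
  induction n generalizing x y i with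
  | zero => simp [ws_zero, cylWeight, wl]
  | succ n ih =>
    rw [S.ws_weight_cons n x (fun w => edist (S.wl x w) (S.wl y w))]
    calc _ ≤ ∑ e, ENNReal.ofReal (S.p e x) * (ENNReal.ofReal S.a ^ n * edist (S.w e x) (S.w e y)) := by
          refine Finset.sum_le_sum (fun e _ => ?_)
          by_cases h : S.p e x = 0
          · simp [h]
          · have h1 := S.mem_of_p_ne h
            have h2 := S.eq_of_mem hx h1
            subst h2
            exact mul_le_mul_right (ih (S.w_maps e hx) (S.w_maps e hy)) _
      _ = ENNReal.ofReal S.a ^ n * ∑ e, ENNReal.ofReal (S.p e x) * edist (S.w e x) (S.w e y) := by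
          rw [Finset.mul_sum]
          exact Finset.sum_congr rfl (fun e _ => by ring)
      _ ≤ ENNReal.ofReal S.a ^ n * (ENNReal.ofReal S.a * edist x y) := by
          exact mul_le_mul_right (S.contractive_E hx hy) _
      _ = _ := by ring

variable [Nonempty K]

lemma Cw_eq_wl (S : CMS K N E) (xs : Fin N → K) {x : K} {w : List E} (hw : w ≠ [])
    (h : S.cylWeight x w ≠ 0) : S.Cw xs w = S.wl (xs (S.vtx x)) w := by
  cases w with
  | nil => exact absurd rfl hw
  | cons e t =>
    simp only [cylWeight] at h
    have h1 := S.mem_of_p_ne (left_ne_zero_of_mul h)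
    rw [Cw, S.vtx_eq h1]

lemma sum_code_le (S : CMS K N E) {xs : Fin N → K} (hxs : ∀ i, xs i ∈ S.Ks i) (n : ℕ) (x : K) :
    ws (n+1) (fun w => ENNReal.ofReal (S.cylWeight x w) * edist (S.wl x w) (S.Cw xs w)) ≤
      ENNReal.ofReal S.a ^ (n+1) * S.VE xs x := by
  refine le_trans (ws_mono_E (fun w hw => ?_)) (S.sum_edist_le (n+1) (S.mem_vtx x) (hxs _))
  by_cases h : S.cylWeight x w = 0
  · simp [h]
  · rw [S.Cw_eq_wl xs (by intro h0; simp [h0] at hw) h]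

variable [MeasurableSpace E]

lemma M_Cyl (S : CMS K N E) {μ : Measure K} [IsProbabilityMeasure μ] {M : Measure (ℤ → E)}
    (hM : S.IsGMarkovMeasure μ M) (m : ℤ) (w : List E) :
    M (Cyl m w) = ∫⁻ x, ENNReal.ofReal (S.cylWeight x w) ∂μ := by
  rw [← ofReal_integral_eq_lintegral_ofReal (S.integrable_cylWeight μ w)
    (Eventually.of_forall (fun x => S.cylWeight_nonneg x w))]
  exact hM.2 m w

lemma M_Cyl_real (S : CMS K N E) {μ : Measure K} [IsProbabilityMeasure μ] {M : Measure (ℤ → E)}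
    (hM : S.IsGMarkovMeasure μ M) (m : ℤ) (w : List E) :
    M.real (Cyl m w) = ∫ x, S.cylWeight x w ∂μ := by
  have h : M (Cyl m w) = ENNReal.ofReal (∫ x, S.cylWeight x w ∂μ) := hM.2 m w
  rw [Measure.real, h, ENNReal.toReal_ofReal (integral_nonneg (fun x => S.cylWeight_nonneg x w))]

variable [MeasurableSingletonClass E]

lemma M_shift (S : CMS K N E) {μ : Measure K} {M : Measure (ℤ → E)}
    (hM : S.IsGMarkovMeasure μ M) : ShiftInvariant M := by
  haveI := hM.1
  have hms : Measurable (shiftL E) := measurable_shiftZ 1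
  haveI : IsProbabilityMeasure (M.map (shiftL E)) := Measure.isProbabilityMeasure_map hms.aemeasurable
  refine ext_Cyl _ _ (fun m w => ?_)
  rw [Measure.map_apply hms (measurableSet_Cyl m w), shiftL_eq, Cyl_preimage]
  exact (hM.2 (m+1) w).trans (hM.2 m w).symm

lemma M_SigmaG (S : CMS K N E) {μ : Measure K} [IsProbabilityMeasure μ] {M : Measure (ℤ → E)}
    (hM : S.IsGMarkovMeasure μ M) : ∀ᵐ σ ∂M, σ ∈ S.SigmaG := by
  have h : ∀ (j : ℤ) (e e' : E), S.τ e ≠ S.ι e' → ∀ᵐ σ ∂M, σ ∉ Cyl j [e, e'] := by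
    intro j e e' hne
    have : M (Cyl j [e, e']) = 0 := by
      rw [S.M_Cyl hM]
      have : ∀ x, S.cylWeight x [e, e'] = 0 := by
        intro x
        by_contra h0
        simp only [cylWeight] at h0
        have h1 := S.mem_of_p_ne (left_ne_zero_of_mul h0)
        have h2 := S.mem_of_p_ne (left_ne_zero_of_mul (right_ne_zero_of_mul h0))
        exact hne (S.eq_of_mem (S.w_maps e h1) h2)
      simp [this]
    rw [ae_iff]
    simpa using this
  have h' : ∀ᵐ σ ∂M, ∀ (j : ℤ) (e e' : E), S.τ e ≠ S.ι e' → σ ∉ Cyl j [e, e'] := by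
    rw [ae_all_iff]; intro j
    rw [ae_all_iff]; intro e
    rw [ae_all_iff]; intro e'
    by_cases hne : S.τ e = S.ι e'
    · simp [hne]
    · filter_upwards [h j e e' hne] with σ hσ _ using hσ
  filter_upwards [h'] with σ hσ
  intro j
  by_contra hne
  refine hσ j (σ j) (σ (j+1)) hne ?_
  rw [mem_Cyl_cons, mem_Cyl_single]
  exact ⟨rfl, rfl⟩

lemma lintegral_M (S : CMS K N E) {μ : Measure K} [IsProbabilityMeasure μ] {M : Measure (ℤ → E)}
    (hM : S.IsGMarkovMeasure μ M) (m : ℤ) (n : ℕ) (g : List E → ℝ≥0∞) :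
    ∫⁻ σ, g (win m n σ) ∂M = ∫⁻ x, ws n (fun w => ENNReal.ofReal (S.cylWeight x w) * g w) ∂μ := by
  rw [lintegral_win]
  unfold ws
  rw [lintegral_finsetSum]
  · refine Finset.sum_congr rfl (fun w _ => ?_)
    beta_reduce
    rw [S.M_Cyl hM, lintegral_mul_const _ (S.measurable_cylWeight _).ennreal_ofReal]
  · intro w _
    exact (S.measurable_cylWeight _).ennreal_ofReal.mul_const _

variable [BorelSpace K]

lemma M_code_dist (S : CMS K N E) {xs : Fin N → K} (hxs : ∀ i, xs i ∈ S.Ks i)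
    {μ : Measure K} [IsProbabilityMeasure μ] (hμ : S.adjoint μ = μ) {M : Measure (ℤ → E)}
    (hM : S.IsGMarkovMeasure μ M) (n : ℕ) :
    ∫⁻ σ, edist (S.codeSeq xs σ n) (S.codeSeq xs σ (n+1)) ∂M ≤
      ENNReal.ofReal S.a ^ n * (2 * S.BE xs) := by
  have ha : ENNReal.ofReal S.a ≤ 1 := by
    rw [ENNReal.ofReal_le_one]; exact S.a_lt_one.le
  have h0 : ∀ σ : ℤ → E, edist (S.codeSeq xs σ n) (S.codeSeq xs σ (n+1)) =
      (fun w : List E => edist (S.Cw xs w.tail) (S.Cw xs w)) (win (-((n+1 : ℕ) : ℤ)) (n+1+1) σ) := by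
    intro σ
    have h1 : -((n+1 : ℕ) : ℤ) + 1 = -(n : ℤ) := by push_cast; ring
    simp only [codeSeq_eq]
    rw [win_cons (-((n+1 : ℕ) : ℤ)), List.tail_cons, h1]
  rw [lintegral_congr h0, S.lintegral_M hM (-((n+1 : ℕ) : ℤ)) (n+1+1)
    (fun w : List E => edist (S.Cw xs w.tail) (S.Cw xs w))]
  calc _ ≤ ∫⁻ x, (ENNReal.ofReal S.a ^ (n+1) * S.UE (S.VE xs) x +
        ENNReal.ofReal S.a ^ (n+1+1) * S.VE xs x) ∂μ := by
        refine lintegral_mono (fun x => ?_)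
        calc _ ≤ ws (n+1+1) (fun w => ENNReal.ofReal (S.cylWeight x w) * edist (S.wl x w) (S.Cw xs w.tail) +
              ENNReal.ofReal (S.cylWeight x w) * edist (S.wl x w) (S.Cw xs w)) := by
              refine ws_mono_E (fun w _ => ?_)
              rw [← mul_add]
              exact mul_le_mul_right (edist_triangle_left _ _ _) _
          _ ≤ _ := by
              rw [ws_add]
              refine add_le_add ?_ (S.sum_code_le hxs (n+1) x)
              rw [S.ws_weight_cons (n+1) x (fun w => edist (S.wl x w) (S.Cw xs w.tail))]
              unfold UE
              rw [Finset.mul_sum]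
              refine Finset.sum_le_sum (fun e _ => ?_)
              rw [mul_left_comm]
              exact mul_le_mul_right (S.sum_code_le hxs n (S.w e x)) _
    _ = ENNReal.ofReal S.a ^ (n+1) * ∫⁻ x, S.VE xs x ∂μ + ENNReal.ofReal S.a ^ (n+1+1) * ∫⁻ x, S.VE xs x ∂μ := by
        rw [lintegral_add_right _ ((S.measurable_VE xs).const_mul _),
          lintegral_const_mul _ (S.measurable_UE (S.measurable_VE xs)),
          lintegral_const_mul _ (S.measurable_VE xs), ← S.lintegral_adjoint μ (S.measurable_VE xs), hμ]
    _ ≤ ENNReal.ofReal S.a ^ n * S.BE xs + ENNReal.ofReal S.a ^ n * S.BE xs := by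
        have hm := S.moment xs hxs μ hμ
        refine add_le_add (mul_le_mul' ?_ hm) (mul_le_mul' ?_ hm)
        · exact pow_le_pow_right_of_le_one' ha (by omega)
        · exact pow_le_pow_right_of_le_one' ha (by omega)
    _ = _ := by ring

lemma M_Dset (S : CMS K N E) [CompleteSpace K] [SecondCountableTopology K]
    {xs : Fin N → K} (hxs : ∀ i, xs i ∈ S.Ks i)
    {μ : Measure K} [IsProbabilityMeasure μ] (hμ : S.adjoint μ = μ) {M : Measure (ℤ → E)}
    (hM : S.IsGMarkovMeasure μ M) : ∀ᵐ σ ∂M, σ ∈ S.Dset xs := by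
  have hmeas : ∀ n, Measurable (fun σ => edist (S.codeSeq xs σ n) (S.codeSeq xs σ (n+1))) :=
    fun n => (S.measurable_codeSeq xs n).edist (S.measurable_codeSeq xs (n+1))
  have hfin : ∫⁻ σ, ∑' n, edist (S.codeSeq xs σ n) (S.codeSeq xs σ (n+1)) ∂M ≠ ⊤ := by
    rw [lintegral_tsum (fun n => (hmeas n).aemeasurable)]
    refine ne_top_of_le_ne_top ?_ (ENNReal.tsum_le_tsum (fun n => S.M_code_dist hxs hμ hM n))
    rw [ENNReal.tsum_mul_right, ENNReal.tsum_geometric]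
    refine ENNReal.mul_ne_top ?_ (ENNReal.mul_ne_top (by simp) (S.BE_lt_top xs).ne)
    rw [ENNReal.inv_ne_top]
    have : ENNReal.ofReal S.a < 1 := by
      rw [← ENNReal.ofReal_one]; exact (ENNReal.ofReal_lt_ofReal_iff one_pos).2 S.a_lt_one
    exact (tsub_pos_of_lt this).ne'
  filter_upwards [S.M_SigmaG hM, ae_lt_top (Measurable.tsum hmeas) hfin] with σ h1 h2
  refine ⟨h1, ?_⟩
  exact cauchySeq_tendsto_of_complete
    (cauchySeq_of_edist_le_of_tsum_ne_top _ (fun n => le_rfl) h2.ne)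

end CMS
open MeasureTheory Filter Topology
open scoped ENNReal

lemma negMulLog_le_one' {x : ℝ} (h0 : 0 ≤ x) : Real.negMulLog x ≤ 1 := by
  rcases h0.eq_or_lt with rfl | h
  · simp
  · have h1 := Real.one_sub_inv_le_log_of_pos h
    have h2 : x * (1 - x⁻¹) ≤ x * Real.log x := mul_le_mul_of_nonneg_left h1 h0
    rw [mul_sub, mul_inv_cancel₀ h.ne', mul_one] at h2
    rw [Real.negMulLog]
    linarith

namespace CMS

variable {K : Type*} [MetricSpace K] [MeasurableSpace K]
  {N : ℕ} {E : Type*} [Fintype E]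

/-- pointwise entropy -/
noncomputable def eta (S : CMS K N E) (x : K) : ℝ := ∑ e, Real.negMulLog (S.p e x)

/-- pointwise entropy of words -/
noncomputable def hn (S : CMS K N E) (n : ℕ) (x : K) : ℝ :=
  ws n (fun w => Real.negMulLog (S.cylWeight x w))

lemma nml_p_nonneg (S : CMS K N E) (e : E) (x : K) : 0 ≤ Real.negMulLog (S.p e x) :=
  Real.negMulLog_nonneg (S.p_nonneg e x) (S.p_le_one e x)

lemma nml_w_nonneg (S : CMS K N E) (w : List E) (x : K) : 0 ≤ Real.negMulLog (S.cylWeight x w) :=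
  Real.negMulLog_nonneg (S.cylWeight_nonneg x w) (S.cylWeight_le_one x w)

lemma measurable_nml_w (S : CMS K N E) (w : List E) :
    Measurable (fun x => Real.negMulLog (S.cylWeight x w)) :=
  Real.continuous_negMulLog.measurable.comp (S.measurable_cylWeight w)

lemma measurable_nml_p (S : CMS K N E) (e : E) :
    Measurable (fun x => Real.negMulLog (S.p e x)) :=
  Real.continuous_negMulLog.measurable.comp (S.p_meas e)

lemma integrable_nml_w (S : CMS K N E) (μ : Measure K) [IsProbabilityMeasure μ] (w : List E) :
    Integrable (fun x => Real.negMulLog (S.cylWeight x w)) μ :=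
  Integrable.of_bound (S.measurable_nml_w w).aestronglyMeasurable 1
    (Eventually.of_forall (fun x => by
      rw [Real.norm_of_nonneg (S.nml_w_nonneg w x)]; exact negMulLog_le_one' (S.cylWeight_nonneg x w)))

lemma integrable_nml_p (S : CMS K N E) (μ : Measure K) [IsProbabilityMeasure μ] (e : E) :
    Integrable (fun x => Real.negMulLog (S.p e x)) μ :=
  Integrable.of_bound (S.measurable_nml_p e).aestronglyMeasurable 1
    (Eventually.of_forall (fun x => by
      rw [Real.norm_of_nonneg (S.nml_p_nonneg e x)]; exact negMulLog_le_one' (S.p_nonneg e x)))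

lemma measurable_hn (S : CMS K N E) (n : ℕ) : Measurable (S.hn n) := by
  unfold hn ws
  exact Finset.measurable_sum _ (fun w _ => S.measurable_nml_w _)

lemma abs_hn_le (S : CMS K N E) (n : ℕ) (x : K) : |S.hn n x| ≤ ws n (fun _ : List E => (1:ℝ)) := by
  unfold hn
  rw [abs_of_nonneg (ws_nonneg (fun w => S.nml_w_nonneg w x))]
  exact ws_mono (fun w _ => negMulLog_le_one' (S.cylWeight_nonneg x w))

lemma integrable_hn (S : CMS K N E) (μ : Measure K) [IsProbabilityMeasure μ] (n : ℕ) :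
    Integrable (S.hn n) μ := by
  unfold hn ws
  exact integrable_finsetSum _ (fun w _ => S.integrable_nml_w μ _)

lemma integrable_eta (S : CMS K N E) (μ : Measure K) [IsProbabilityMeasure μ] :
    Integrable S.eta μ := by
  unfold eta
  exact integrable_finsetSum _ (fun w _ => S.integrable_nml_p μ _)

lemma ws_weight_one_real (S : CMS K N E) (n : ℕ) (x : K) :
    ws n (fun w => S.cylWeight x w) = 1 := by
  induction n generalizing x with
  | zero => simp [ws_zero, cylWeight]
  | succ n ih =>
    rw [ws_cons]
    simp only [cylWeight, ws_mul_left, ih, mul_one, S.p_sum_one]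

lemma hn_succ (S : CMS K N E) (n : ℕ) (x : K) : S.hn (n+1) x = S.eta x + S.Ufun (S.hn n) x := by
  unfold hn eta Ufun
  rw [ws_cons, ← Finset.sum_add_distrib]
  refine Finset.sum_congr rfl (fun e _ => ?_)
  simp only [cylWeight, Real.negMulLog_mul]
  rw [ws_add, ws_mul_left]
  congr 1
  have : ∀ w : List E, S.cylWeight (S.w e x) w * Real.negMulLog (S.p e x) =
    Real.negMulLog (S.p e x) * S.cylWeight (S.w e x) w := fun w => mul_comm _ _
  simp only [this]
  rw [ws_mul_left, S.ws_weight_one_real, mul_one]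

lemma integral_hn (S : CMS K N E) (μ : Measure K) [IsProbabilityMeasure μ] (hμ : S.adjoint μ = μ)
    (n : ℕ) : ∫ x, S.hn n x ∂μ = n * ∫ x, S.eta x ∂μ := by
  induction n with
  | zero => simp [hn, ws_zero, cylWeight]
  | succ n ih =>
    have h1 : ∫ x, S.Ufun (S.hn n) x ∂μ = ∫ x, S.hn n x ∂μ := by
      rw [← S.integral_adjoint μ (S.measurable_hn n) (S.abs_hn_le n), hμ]
    have h2 : Integrable (S.Ufun (S.hn n)) μ := by
      have : S.Ufun (S.hn n) = fun x => S.hn (n+1) x - S.eta x := by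
        ext x; rw [S.hn_succ]; ring
      rw [this]
      exact (S.integrable_hn μ (n+1)).sub (S.integrable_eta μ)
    have h3 : ∫ x, S.hn (n+1) x ∂μ = ∫ x, (S.eta x + S.Ufun (S.hn n) x) ∂μ :=
      integral_congr_ae (Eventually.of_forall (fun x => S.hn_succ n x))
    rw [h3, integral_add (S.integrable_eta μ) h2, h1, ih]
    push_cast
    ring

variable [Nonempty K] [MeasurableSpace E] [MeasurableSingletonClass E]

lemma KS_ge (S : CMS K N E) {μ : Measure K} [IsProbabilityMeasure μ] (hμ : S.adjoint μ = μ)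
    {M : Measure (ℤ → E)} (hM : S.IsGMarkovMeasure μ M) : ∫ x, S.eta x ∂μ ≤ KSEntropy M := by
  haveI := hM.1
  have key : ∀ n : ℕ, n * ∫ x, S.eta x ∂μ ≤ cylEnt M n := by
    intro n
    rw [cylEnt_eq, ← S.integral_hn μ hμ n]
    unfold hn ws
    rw [integral_finsetSum _ (fun w _ => S.integrable_nml_w μ _)]
    refine Finset.sum_le_sum (fun w _ => ?_)
    beta_reduce
    rw [S.M_Cyl_real hM]
    exact Real.concaveOn_negMulLog.le_map_integral Real.continuous_negMulLog.continuousOn isClosed_Ici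
      (Eventually.of_forall (fun x => S.cylWeight_nonneg x _)) (S.integrable_cylWeight μ _)
      (S.integrable_nml_w μ _)
  refine le_ciInf (fun n => ?_)
  rw [le_div_iff₀ (by positivity)]
  have := key (n+1)
  push_cast at this
  linarith


lemma log_unif (S : CMS K N E)
    (hDini : ∀ e, DiniOn (S.p e) (S.Ks (S.ι e)))
    {δ : ℝ} (hδ : 0 < δ) (hp : ∀ e, ∀ x ∈ S.Ks (S.ι e), δ ≤ S.p e x) {ε : ℝ} (hε : 0 < ε) :
    ∃ C : ℝ, 0 ≤ C ∧ ∀ e, ∀ x ∈ S.Ks (S.ι e), ∀ y ∈ S.Ks (S.ι e),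
      -Real.log (S.p e y) ≤ -Real.log (S.p e x) + ε + C * dist x y := by
  have h1 : ∀ e, ∃ η > 0, ∀ x ∈ S.Ks (S.ι e), ∀ y ∈ S.Ks (S.ι e), dist x y ≤ η →
      |S.p e x - S.p e y| ≤ δ * ε := fun e =>
    dini_unif (S.p_nonneg e) (S.p_le_one e) (hDini e) (by positivity)
  choose η hη hη' using h1
  have hlogδ : ∀ e, ∀ x ∈ S.Ks (S.ι e), 0 ≤ -Real.log δ := by
    intro e x hx
    have h2 : Real.log δ ≤ 0 := Real.log_nonpos hδ.le ((hp e x hx).trans (S.p_le_one e x))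
    linarith
  refine ⟨∑ e, |(-Real.log δ)| / η e, Finset.sum_nonneg (fun e _ => div_nonneg (abs_nonneg _) (hη e).le), ?_⟩
  intro e x hx y hy
  have hpx := hp e x hx
  have hpy := hp e y hy
  have hCe : |(-Real.log δ)| / η e ≤ ∑ e, |(-Real.log δ)| / η e :=
    Finset.single_le_sum (f := fun e => |(-Real.log δ)| / η e)
      (fun e _ => div_nonneg (abs_nonneg _) (hη e).le) (Finset.mem_univ e)
  have hx0 : 0 < S.p e x := hδ.trans_le hpx
  have hy0 : 0 < S.p e y := hδ.trans_le hpy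
  rcases le_or_gt (dist x y) (η e) with h | h
  · have h2 := hη' e x hx y hy h
    have h3 : Real.log (S.p e x) - Real.log (S.p e y) ≤ ε := by
      rw [← Real.log_div hx0.ne' hy0.ne']
      have h4 := Real.log_le_sub_one_of_pos (div_pos hx0 hy0)
      have h5 : S.p e x / S.p e y - 1 ≤ ε := by
        rw [sub_le_iff_le_add, div_le_iff₀ hy0]
        have := (abs_le.1 h2).2
        nlinarith
      linarith
    have : 0 ≤ (∑ e, |(-Real.log δ)| / η e) * dist x y :=
      mul_nonneg (Finset.sum_nonneg (fun e _ => div_nonneg (abs_nonneg _) (hη e).le)) dist_nonneg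
    linarith
  · have h2 : -Real.log (S.p e y) ≤ |(-Real.log δ)| :=
      (neg_le_neg (Real.log_le_log hδ hpy)).trans (le_abs_self _)
    have h3 : Real.log (S.p e x) ≤ 0 := Real.log_nonpos hx0.le (S.p_le_one e x)
    have h4 : |(-Real.log δ)| ≤ |(-Real.log δ)| / η e * dist x y := by
      rw [div_mul_eq_mul_div, le_div_iff₀ (hη e)]
      exact mul_le_mul_of_nonneg_left h.le (abs_nonneg _)
    have h5 := mul_le_mul_of_nonneg_right hCe (dist_nonneg (x := x) (y := y))
    linarith

variable [BorelSpace K]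

lemma M_code_log (S : CMS K N E)
    {δ : ℝ} (hp : ∀ e, ∀ x ∈ S.Ks (S.ι e), δ ≤ S.p e x)
    {xs : Fin N → K} (hxs : ∀ i, xs i ∈ S.Ks i)
    {μ : Measure K} [IsProbabilityMeasure μ] (hμ : S.adjoint μ = μ)
    {M : Measure (ℤ → E)} (hM : S.IsGMarkovMeasure μ M) {ε C : ℝ} (hε : 0 ≤ ε) (hC0 : 0 ≤ C)
    (hC : ∀ e, ∀ x ∈ S.Ks (S.ι e), ∀ y ∈ S.Ks (S.ι e),
      -Real.log (S.p e y) ≤ -Real.log (S.p e x) + ε + C * dist x y) (n : ℕ) :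
    ∫⁻ σ, ENNReal.ofReal (-Real.log (S.p (σ 1) (S.codeSeq xs σ n))) ∂M ≤
      ENNReal.ofReal (∫ x, S.eta x ∂μ) + ENNReal.ofReal ε +
        ENNReal.ofReal C * (ENNReal.ofReal S.a ^ (n+1) * S.BE xs) := by
  set ψ : E → K → ℝ≥0∞ := fun e x => ENNReal.ofReal (-Real.log (S.p e x)) with hψ
  have hψm : ∀ e, Measurable (ψ e) := fun e => (Real.measurable_log.comp (S.p_meas e)).neg.ennreal_ofReal
  obtain ⟨G, hG⟩ := exists_snoc_fun (fun (w : List E) e => ψ e (S.Cw xs w))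
  have h0 : ∀ σ : ℤ → E, ENNReal.ofReal (-Real.log (S.p (σ 1) (S.codeSeq xs σ n))) =
      G (win (-(n:ℤ)) (n+1+1) σ) := by
    intro σ
    rw [win_snoc, hG, codeSeq_eq]
    have : -(n:ℤ) + ((n+1 : ℕ) : ℤ) = 1 := by push_cast; ring
    rw [this]
  rw [lintegral_congr h0, S.lintegral_M hM (-(n:ℤ)) (n+1+1) G]
  have hηm : Measurable (fun x => ∑ e, ENNReal.ofReal (S.p e x) * ψ e x) :=
    Finset.measurable_sum _ (fun e _ => (S.p_meas e).ennreal_ofReal.mul (hψm e))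
  have hη : ∫⁻ x, ∑ e, ENNReal.ofReal (S.p e x) * ψ e x ∂μ = ENNReal.ofReal (∫ x, S.eta x ∂μ) := by
    rw [ofReal_integral_eq_lintegral_ofReal (S.integrable_eta μ)
      (Eventually.of_forall (fun x => Finset.sum_nonneg (fun e _ => S.nml_p_nonneg e x)))]
    refine lintegral_congr (fun x => ?_)
    unfold eta
    rw [ENNReal.ofReal_sum_of_nonneg (fun e _ => S.nml_p_nonneg e x)]
    refine Finset.sum_congr rfl (fun e _ => ?_)
    rw [hψ, ← ENNReal.ofReal_mul (S.p_nonneg e x), Real.negMulLog]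
    congr 1
    ring
  calc _ ≤ ∫⁻ x, ((ws (n+1) (fun w => ENNReal.ofReal (S.cylWeight x w) *
            (fun y => ∑ e, ENNReal.ofReal (S.p e y) * ψ e y) (S.wl x w)) + ENNReal.ofReal ε) +
            ENNReal.ofReal C * (ENNReal.ofReal S.a ^ (n+1) * S.VE xs x)) ∂μ := by
        refine lintegral_mono (fun x => ?_)
        beta_reduce
        rw [ws_snoc]
        calc _ ≤ ws (n+1) (fun w => (ENNReal.ofReal (S.cylWeight x w) *
              (∑ e, ENNReal.ofReal (S.p e (S.wl x w)) * ψ e (S.wl x w)) +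
              ENNReal.ofReal ε * ENNReal.ofReal (S.cylWeight x w)) +
              ENNReal.ofReal C * (ENNReal.ofReal (S.cylWeight x w) * edist (S.wl x w) (S.Cw xs w))) := by
              refine ws_mono_E (fun w hw => ?_)
              have hw0 : w ≠ [] := by intro h0; simp [h0] at hw
              calc _ ≤ ∑ e, ENNReal.ofReal (S.cylWeight x w) * (ENNReal.ofReal (S.p e (S.wl x w)) *
                    (ψ e (S.wl x w) + ENNReal.ofReal ε + ENNReal.ofReal C * edist (S.wl x w) (S.Cw xs w))) := by
                    refine Finset.sum_le_sum (fun e _ => ?_)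
                    rw [hG, S.cylWeight_snoc, ENNReal.ofReal_mul (S.cylWeight_nonneg x w), mul_assoc]
                    by_cases hc : S.cylWeight x w = 0
                    · simp [hc]
                    by_cases hpe : S.p e (S.wl x w) = 0
                    · simp [hpe]
                    refine mul_le_mul_right (mul_le_mul_right ?_ _) _
                    have m1 := S.mem_of_p_ne hpe
                    obtain ⟨j, hj1, hj2⟩ := S.wl_same (S.mem_vtx x) (hxs (S.vtx x)) hc
                    have hj := S.eq_of_mem hj1 m1
                    rw [hj] at hj2
                    rw [← S.Cw_eq_wl xs hw0 hc] at hj2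
                    have h3 := hC e _ m1 _ hj2
                    have hl : 0 ≤ -Real.log (S.p e (S.wl x w)) :=
                      neg_nonneg.2 (Real.log_nonpos (S.p_nonneg _ _) (S.p_le_one _ _))
                    rw [edist_dist, ← ENNReal.ofReal_mul hC0, hψ, ← ENNReal.ofReal_add hl hε,
                      ← ENNReal.ofReal_add (by positivity) (by positivity)]
                    exact ENNReal.ofReal_le_ofReal h3
                _ = _ := by
                    have h1 := S.ofReal_sum_p (S.wl x w)
                    rw [← Finset.mul_sum]
                    simp only [mul_add, Finset.sum_add_distrib, ← Finset.sum_mul, h1, one_mul]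
                    ring
          _ = (ws (n+1) (fun w => ENNReal.ofReal (S.cylWeight x w) *
              (∑ e, ENNReal.ofReal (S.p e (S.wl x w)) * ψ e (S.wl x w))) + ENNReal.ofReal ε) +
              ENNReal.ofReal C * ws (n+1) (fun w => ENNReal.ofReal (S.cylWeight x w) * edist (S.wl x w) (S.Cw xs w)) := by
              rw [ws_add, ws_add, ws_mul_left, ws_mul_left, S.ws_weight_one, mul_one]
          _ ≤ _ := by
              gcongr
              exact S.sum_code_le hxs n x
    _ = (ENNReal.ofReal (∫ x, S.eta x ∂μ) + ENNReal.ofReal ε) +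
          ENNReal.ofReal C * (ENNReal.ofReal S.a ^ (n+1) * ∫⁻ x, S.VE xs x ∂μ) := by
        rw [lintegral_add_right _ (((S.measurable_VE xs).const_mul _).const_mul _),
          lintegral_add_right _ measurable_const, S.lintegral_iter μ hμ hηm, hη,
          lintegral_const_mul _ ((S.measurable_VE xs).const_mul _),
          lintegral_const_mul _ (S.measurable_VE xs)]
        simp
    _ ≤ _ := by
        gcongr
        exact S.moment xs hxs μ hμ

theorem M_int_le (S : CMS K N E) (hOpen : ∀ i, IsOpen (S.Ks i))
    (hDini : ∀ e, DiniOn (S.p e) (S.Ks (S.ι e)))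
    {δ : ℝ} (hδ : 0 < δ) (hp : ∀ e, ∀ x ∈ S.Ks (S.ι e), δ ≤ S.p e x)
    {xs : Fin N → K} (hxs : ∀ i, xs i ∈ S.Ks i)
    {μ : Measure K} [IsProbabilityMeasure μ] (hμ : S.adjoint μ = μ)
    {M : Measure (ℤ → E)} (hM : S.IsGMarkovMeasure μ M) (hD : ∀ᵐ σ ∂M, σ ∈ S.Dset xs) :
    ∫ σ, -Real.log (S.p (σ 1) (S.F xs σ)) ∂M ≤ ∫ x, S.eta x ∂μ := by
  haveI := hM.1
  have ht := S.tendsto_int hOpen hxs M hD (fun e x => -Real.log (S.p e x))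
    (S.continuousOn_log hOpen hDini hδ hp) (S.abs_log_le hδ hp)
  have hb : 0 ≤ ∫ x, S.eta x ∂μ :=
    integral_nonneg (fun x => Finset.sum_nonneg (fun e _ => S.nml_p_nonneg e x))
  refine le_of_forall_pos_le_add (fun ε hε => ?_)
  obtain ⟨C, hC0, hC⟩ := S.log_unif hDini hδ hp hε
  have hle : ∀ n, ∫ σ, -Real.log (S.p (σ 1) (S.codeSeq xs σ n)) ∂M ≤
      (∫ x, S.eta x ∂μ + ε) + C * (S.a ^ (n+1) * (S.BE xs).toReal) := by
    intro n
    have h1 := S.M_code_log hp hxs hμ hM hε.le hC0 hC n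
    have hBE : ENNReal.ofReal (S.BE xs).toReal = S.BE xs := ENNReal.ofReal_toReal (S.BE_lt_top xs).ne
    have ha := S.a_pos.le
    rw [← hBE, ← ENNReal.ofReal_pow ha, ← ENNReal.ofReal_mul (by positivity),
      ← ENNReal.ofReal_mul hC0, ← ENNReal.ofReal_add hb hε.le,
      ← ENNReal.ofReal_add (by positivity) (by positivity)] at h1
    rw [integral_eq_lintegral_of_nonneg_ae]
    · exact ENNReal.toReal_le_of_le_ofReal (by positivity) h1
    · exact Eventually.of_forall (fun σ =>
        neg_nonneg.2 (Real.log_nonpos (S.p_nonneg _ _) (S.p_le_one _ _)))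
    · obtain ⟨G, hG⟩ := exists_snoc_fun (fun (w : List E) e => -Real.log (S.p e (S.Cw xs w)))
      have h0 : (fun σ : ℤ → E => -Real.log (S.p (σ 1) (S.codeSeq xs σ n))) =
          fun σ => G (win (-(n:ℤ)) (n+1+1) σ) := by
        ext σ
        rw [win_snoc, hG, codeSeq_eq]
        have : -(n:ℤ) + ((n+1 : ℕ) : ℤ) = 1 := by push_cast; ring
        rw [this]
      rw [h0]
      exact (measurable_win _ _ _).aestronglyMeasurable
  have ht2 : Tendsto (fun n : ℕ => (∫ x, S.eta x ∂μ + ε) + C * (S.a ^ (n+1) * (S.BE xs).toReal)) atTop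
      (𝓝 ((∫ x, S.eta x ∂μ + ε) + C * (0 * (S.BE xs).toReal))) := by
    refine Tendsto.const_add _ (Tendsto.const_mul _ (Tendsto.mul_const _ ?_))
    exact (tendsto_pow_atTop_nhds_zero_of_lt_one S.a_pos.le S.a_lt_one).comp (tendsto_add_atTop_nat 1)
  have := le_of_tendsto_of_tendsto' ht ht2 hle
  simpa using this

end CMS
open MeasureTheory Filter Topology
open scoped ENNReal

namespace CMS

variable {K : Type*} [MetricSpace K] [MeasurableSpace K] [BorelSpace K] [Nonempty K]
  {N : ℕ} {E : Type*} [Fintype E] [MeasurableSpace E] [MeasurableSingletonClass E]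

lemma mem_Yset (S : CMS K N E) (xs : Fin N → K) (σ : ℤ → E) :
    σ ∈ S.Yset xs ↔ ∀ n : ℤ, shiftZ E (-n) σ ∈ S.Dset xs := by
  unfold Yset
  rw [Set.mem_iInter]
  refine forall_congr' (fun n => ?_)
  have h1 : ∀ m : ℤ, ∀ ρ : ℤ → E, shiftZ E m (shiftZ E (-m) ρ) = ρ := by
    intro m ρ; ext j; simp [shiftZ]
  have h2 : ∀ m : ℤ, ∀ ρ : ℤ → E, shiftZ E (-m) (shiftZ E m ρ) = ρ := by
    intro m ρ; ext j; simp [shiftZ]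
  constructor
  · rintro ⟨ρ, hρ, rfl⟩
    rw [h2]; exact hρ
  · intro h
    exact ⟨_, h, h1 n σ⟩

lemma Yset_sub (S : CMS K N E) {xs : Fin N → K} {σ : ℤ → E} (h : σ ∈ S.Yset xs) :
    σ ∈ S.Dset xs := by
  have := (S.mem_Yset xs σ).1 h 0
  simpa [shiftZ_zero] using this

lemma ae_Yset (S : CMS K N E) {xs : Fin N → K} {Λ : Measure (ℤ → E)} (hinv : ShiftInvariant Λ)
    (hD : ∀ᵐ σ ∂Λ, σ ∈ S.Dset xs) : ∀ᵐ σ ∂Λ, σ ∈ S.Yset xs := by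
  simp only [mem_Yset]
  rw [ae_all_iff]
  intro n
  refine ae_of_ae_map (measurable_shiftZ (-n)).aemeasurable ?_
  rwa [hinv.map_shiftZ]

lemma measurableSet_Dset (S : CMS K N E) [CompleteSpace K] [SecondCountableTopology K]
    (xs : Fin N → K) : MeasurableSet (S.Dset xs) := by
  have h1 : MeasurableSet S.SigmaG := by
    have : S.SigmaG = ⋂ j : ℤ, {σ : ℤ → E | S.τ (σ j) = S.ι (σ (j+1))} := by
      ext σ; simp [SigmaG]
    rw [this]
    refine MeasurableSet.iInter (fun j => ?_)
    exact measurableSet_eq_fun ((Measurable.of_discrete (f := S.τ)).comp (measurable_coord j))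
      ((Measurable.of_discrete (f := S.ι)).comp (measurable_coord (j+1)))
  have h2 : MeasurableSet {σ : ℤ → E | ∃ L : K, Tendsto (fun n => S.codeSeq xs σ n) atTop (𝓝 L)} :=
    measurableSet_exists_tendsto (fun n => S.measurable_codeSeq xs n)
  exact h1.inter h2

lemma measurableSet_Yset (S : CMS K N E) [CompleteSpace K] [SecondCountableTopology K]
    (xs : Fin N → K) : MeasurableSet (S.Yset xs) := by
  have : S.Yset xs = ⋂ n : ℤ, shiftZ E (-n) ⁻¹' S.Dset xs := by
    ext σ; rw [mem_Yset]; simp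
  rw [this]
  exact MeasurableSet.iInter (fun n => measurable_shiftZ (-n) (S.measurableSet_Dset xs))

lemma ae_Yset_of_fin (S : CMS K N E) [CompleteSpace K] [SecondCountableTopology K]
    (xs : Fin N → K) (Λ : Measure (ℤ → E)) (h : negPartInt (S.energyU xs) Λ ≠ ⊤) :
    ∀ᵐ σ ∂Λ, σ ∈ S.Yset xs := by
  by_contra hne
  have h0 : Λ (S.Yset xs)ᶜ ≠ 0 := fun h0 => hne (by
    rw [ae_iff]; exact h0)
  apply h
  rw [eq_top_iff]
  calc ⊤ = ∫⁻ σ, (S.Yset xs)ᶜ.indicator (fun _ => (⊤ : ℝ≥0∞)) σ ∂Λ := by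
        rw [lintegral_indicator_const (S.measurableSet_Yset xs).compl, ENNReal.top_mul h0]
    _ ≤ _ := by
        refine lintegral_mono (fun σ => ?_)
        by_cases hσ : σ ∈ S.Yset xs
        · simp [hσ]
        · simp [hσ, energyU]

lemma integrable_log_F (S : CMS K N E) (hOpen : ∀ i, IsOpen (S.Ks i))
    {δ : ℝ} (hδ : 0 < δ) (hp : ∀ e, ∀ x ∈ S.Ks (S.ι e), δ ≤ S.p e x)
    {xs : Fin N → K} (hxs : ∀ i, xs i ∈ S.Ks i)
    (Λ : Measure (ℤ → E)) [IsProbabilityMeasure Λ] (hD : ∀ᵐ σ ∂Λ, σ ∈ S.Dset xs) :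
    Integrable (fun σ => -Real.log (S.p (σ 1) (S.F xs σ))) Λ := by
  have hm : Measurable (fun q : E × K => -Real.log (S.p q.1 q.2)) :=
    measurable_from_prod_countable_right (fun e => (Real.measurable_log.comp (S.p_meas e)).neg)
  have hae := hm.comp_aemeasurable ((measurable_coord (E := E) 1).aemeasurable.prodMk (S.aemeasurable_F xs Λ hD))
  refine Integrable.of_bound hae.aestronglyMeasurable (-Real.log δ) ?_
  filter_upwards [hD] with σ hσ
  exact S.abs_log_le hδ hp _ _ (S.F_mem hOpen hxs hσ)

lemma negPart_eq (S : CMS K N E) (hOpen : ∀ i, IsOpen (S.Ks i))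
    {δ : ℝ} (hδ : 0 < δ) (hp : ∀ e, ∀ x ∈ S.Ks (S.ι e), δ ≤ S.p e x)
    {xs : Fin N → K} (hxs : ∀ i, xs i ∈ S.Ks i)
    (Λ : Measure (ℤ → E)) [IsProbabilityMeasure Λ] (hY : ∀ᵐ σ ∂Λ, σ ∈ S.Yset xs) :
    negPartInt (S.energyU xs) Λ = ENNReal.ofReal (∫ σ, -Real.log (S.p (σ 1) (S.F xs σ)) ∂Λ) := by
  have hD : ∀ᵐ σ ∂Λ, σ ∈ S.Dset xs := by
    filter_upwards [hY] with σ hσ using S.Yset_sub hσ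
  rw [ofReal_integral_eq_lintegral_ofReal (S.integrable_log_F hOpen hδ hp hxs Λ hD)
    (Eventually.of_forall (fun σ =>
        neg_nonneg.2 (Real.log_nonpos (S.p_nonneg _ _) (S.p_le_one _ _))))]
  unfold negPartInt
  refine lintegral_congr_ae ?_
  filter_upwards [hY] with σ hσ
  have hpos : 0 < S.p (σ 1) (S.F xs σ) :=
    hδ.trans_le (hp _ _ (S.F_mem hOpen hxs (S.Yset_sub hσ)))
  have hu : S.energyU xs σ = ((Real.log (S.p (σ 1) (S.F xs σ)) : ℝ) : EReal) := by
    unfold energyU elog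
    rw [if_pos hσ, if_neg (not_le.2 hpos)]
  rw [hu, if_neg (EReal.coe_ne_bot _), EReal.toReal_coe]

lemma free_eq (S : CMS K N E) (hOpen : ∀ i, IsOpen (S.Ks i))
    {δ : ℝ} (hδ : 0 < δ) (hp : ∀ e, ∀ x ∈ S.Ks (S.ι e), δ ≤ S.p e x)
    {xs : Fin N → K} (hxs : ∀ i, xs i ∈ S.Ks i)
    (Λ : Measure (ℤ → E)) [IsProbabilityMeasure Λ] (hY : ∀ᵐ σ ∂Λ, σ ∈ S.Yset xs) :
    freeEnergy (S.energyU xs) Λ =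
      ((KSEntropy Λ - ∫ σ, -Real.log (S.p (σ 1) (S.F xs σ)) ∂Λ : ℝ) : EReal) := by
  have h0 : 0 ≤ ∫ σ, -Real.log (S.p (σ 1) (S.F xs σ)) ∂Λ := integral_nonneg (fun σ =>
        neg_nonneg.2 (Real.log_nonpos (S.p_nonneg _ _) (S.p_le_one _ _)))
  unfold freeEnergy
  rw [S.negPart_eq hOpen hδ hp hxs Λ hY, EReal.coe_ennreal_ofReal, max_eq_left h0, ← EReal.coe_sub]

lemma eta_integral (S : CMS K N E) (μ : Measure K) [IsProbabilityMeasure μ] :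
    ∫ x, S.eta x ∂μ = -∑ e, ∫ x in S.Ks (S.ι e), S.p e x * Real.log (S.p e x) ∂μ := by
  unfold eta
  rw [integral_finsetSum _ (fun e _ => S.integrable_nml_p μ e), ← Finset.sum_neg_distrib]
  refine Finset.sum_congr rfl (fun e _ => ?_)
  rw [← integral_neg, ← integral_indicator (S.Ks_meas _)]
  refine integral_congr_ae (Eventually.of_forall (fun x => ?_))
  by_cases hx : x ∈ S.Ks (S.ι e)
  · simp [hx, Real.negMulLog]
  · simp [hx, S.p_zero e x hx]

end CMS
-- stmt 18
theorem cms_irreducible_unique_equilibrium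
    {K : Type*} [MetricSpace K] [MeasurableSpace K] [BorelSpace K] [Nonempty K]
    {N : ℕ} {E : Type*} [Fintype E] [MeasurableSpace E] (S : CMS K N E)
    (hirr : S.IrreducibleGraph)
    (hProper : ∀ A : Set K, Bornology.IsBounded A → IsCompact (closure A))
    (hOpen : ∀ i, IsOpen (S.Ks i))
    (hDini : ∀ e, DiniOn (S.p e) (S.Ks (S.ι e)))
    (δ : ℝ) (hδ : 0 < δ) (hp : ∀ e, ∀ x ∈ S.Ks (S.ι e), δ ≤ S.p e x)
    (hsurj : Function.Surjective S.ι)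
    (xs : Fin N → K) (hxs : ∀ i, xs i ∈ S.Ks i) :
    (∃! μ : Measure K, IsProbabilityMeasure μ ∧ S.adjoint μ = μ) ∧
    ∀ μ : Measure K, IsProbabilityMeasure μ → S.adjoint μ = μ →
      ∀ M : Measure (ℤ → E), S.IsGMarkovMeasure μ M →
        (IsEquilibrium (S.energyU xs) M ∧
          ∀ Λ : Measure (ℤ → E), IsEquilibrium (S.energyU xs) Λ → Λ = M) ∧
        pressure (S.energyU xs) = 0 ∧
        Measure.map (S.F xs) M = μ ∧
        KSEntropy M = -∑ e, ∫ x in S.Ks (S.ι e), S.p e x * Real.log (S.p e x) ∂μ := by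
  obtain ⟨z⟩ := ‹Nonempty K›
  haveI : Nonempty K := ⟨z⟩
  have i0 : Fin N := S.vtx z
  haveI : ProperSpace K := ⟨fun x r => by
    have := hProper _ (Metric.isBounded_closedBall (x := x) (r := r))
    rwa [Metric.isClosed_closedBall.closure_eq] at this⟩
  haveI : SecondCountableTopology K := secondCountable_of_proper
  have huniq : ∀ μ₁ μ₂ : Measure K, IsProbabilityMeasure μ₁ → IsProbabilityMeasure μ₂ →
      S.adjoint μ₁ = μ₁ → S.adjoint μ₂ = μ₂ → μ₁ = μ₂ := by
    intro μ₁ μ₂ h1 h2 hi1 hi2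
    exact S.unique_invariant hirr hDini hδ hp i0 μ₁ μ₂ hi1 hi2
  constructor
  · obtain ⟨μ, h1, h2⟩ := S.exists_invariant hProper hOpen hDini hδ hp xs hxs i0
    exact ⟨μ, ⟨h1, h2⟩, fun ν hν => huniq ν μ hν.1 h1 hν.2 h2⟩
  intro μ hμp hμ M hM
  haveI : MeasurableSingletonClass E := S.discrete_E hirr hδ hp μ hμ M hM
  haveI := hM.1
  have hMinv := S.M_shift hM
  have hMD := S.M_Dset hxs hμ hM
  have hMY := S.ae_Yset hMinv hMD
  have hle1 := S.KS_ge hμ hM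
  have hle2 := S.M_int_le hOpen hDini hδ hp hxs hμ hM hMD
  have hle3 := S.KS_le_int hOpen hDini hδ hp hxs M hMinv hMD
  have hMeq : KSEntropy M = ∫ σ, -Real.log (S.p (σ 1) (S.F xs σ)) ∂M := by linarith
  have hfM : freeEnergy (S.energyU xs) M = 0 := by
    rw [S.free_eq hOpen hδ hp hxs M hMY, hMeq, sub_self]
    rfl
  have hfle : ∀ Λ : Measure (ℤ → E), IsProbabilityMeasure Λ → ShiftInvariant Λ →
      freeEnergy (S.energyU xs) Λ ≤ 0 := by
    intro Λ hΛ hinv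
    by_cases ht : negPartInt (S.energyU xs) Λ = ⊤
    · unfold freeEnergy
      rw [ht, EReal.coe_ennreal_top, EReal.sub_top]
      exact bot_le
    · have hY := S.ae_Yset_of_fin xs Λ ht
      have hD : ∀ᵐ σ ∂Λ, σ ∈ S.Dset xs := by
        filter_upwards [hY] with σ hσ using S.Yset_sub hσ
      rw [S.free_eq hOpen hδ hp hxs Λ hY]
      have := S.KS_le_int hOpen hDini hδ hp hxs Λ hinv hD
      exact_mod_cast sub_nonpos.2 this
  have hP : pressure (S.energyU xs) = 0 := by
    refine le_antisymm (iSup₂_le (fun Λ h => hfle Λ h.1 h.2)) ?_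
    rw [← hfM]
    exact le_iSup₂ (f := fun (Θ : Measure (ℤ → E)) (_ : IsProbabilityMeasure Θ ∧ ShiftInvariant Θ) =>
      freeEnergy (S.energyU xs) Θ) M ⟨hM.1, hMinv⟩
  have hcase : ∀ Λ : Measure (ℤ → E), IsProbabilityMeasure Λ → ShiftInvariant Λ →
      (∀ᵐ σ ∂Λ, σ ∈ S.Dset xs) → KSEntropy Λ = ∫ σ, -Real.log (S.p (σ 1) (S.F xs σ)) ∂Λ →
      Λ.map (S.F xs) = μ ∧ ∀ es, Λ.real (Cyl 0 es) = ∫ x, S.cylWeight x es ∂μ := by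
    intro Λ hΛ hinv hD heq
    obtain ⟨h1, h2⟩ := S.equality_case hOpen hDini hδ hp hxs Λ hinv hD heq
    haveI : IsProbabilityMeasure (Λ.map (S.F xs)) :=
      Measure.isProbabilityMeasure_map (S.aemeasurable_F xs Λ hD)
    have h3 : Λ.map (S.F xs) = μ := huniq _ _ inferInstance hμp h1 hμ
    refine ⟨h3, fun es => ?_⟩
    rw [h2 es, h3]
  refine ⟨⟨⟨hM.1, hMinv, by rw [hfM, hP]⟩, ?_⟩, hP, (hcase M hM.1 hMinv hMD hMeq).1, ?_⟩
  · rintro Λ ⟨hΛ, hinv, hfe⟩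
    rw [hP] at hfe
    have ht : negPartInt (S.energyU xs) Λ ≠ ⊤ := by
      intro ht
      unfold freeEnergy at hfe
      rw [ht, EReal.coe_ennreal_top, EReal.sub_top] at hfe
      exact absurd hfe (by simp)
    have hY := S.ae_Yset_of_fin xs Λ ht
    have hD : ∀ᵐ σ ∂Λ, σ ∈ S.Dset xs := by
      filter_upwards [hY] with σ hσ using S.Yset_sub hσ
    rw [S.free_eq hOpen hδ hp hxs Λ hY] at hfe
    have heq : KSEntropy Λ = ∫ σ, -Real.log (S.p (σ 1) (S.F xs σ)) ∂Λ :=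
      sub_eq_zero.1 (by exact_mod_cast hfe)
    have h2 := (hcase Λ hΛ hinv hD heq).2
    refine ext_Cyl Λ M (fun m w => ?_)
    rw [hinv.Cyl_eq, hMinv.Cyl_eq]
    have h3 : Λ.real (Cyl 0 w) = M.real (Cyl 0 w) := by rw [h2, S.M_Cyl_real hM]
    exact (measureReal_eq_measureReal_iff).1 h3
  · rw [← S.eta_integral μ]
    linarith
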